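/- arXiv:1504.06023 — 2 statements merged into one kernel-verified Lean document; each statement's English description precedes it below -/
import Mathlib

section
/- Let f ∈ ℝ[x,y,z] be homogeneous of degree d, hyperbolic with respect to a point e ∈ ℝ³ with f(e) > 0, and suppose the complex projective curve defined by f is smooth, i.e., f and its gradient have no common zero in ℂ³ ∖ {0}. Let g = e₁·∂f/∂x + e₂·∂f/∂y + e₃·∂f/∂z, and suppose f and g intersect transversally, i.e., at every common zero p ∈ ℂ³ ∖ {0} of f and g the gradients ∇f(p) and ∇g(p) are linearly independent. Let S ⊆ ℂ³ ∖ {0} be a set of common zeros of f and g such that every common zero of f and g in ℂ³ ∖ {0} is a nonzero scalar multiple of exactly one element of S ∪ conj(S) (where conj denotes coordinatewise complex conjugation), and no element of S is a nonzero scalar multiple of the conjugate of an element of S. Let a = (a₁, …, a_d) be a basis of the ℂ-vector space of homogeneous polynomials of degree d−1 in ℂ[x,y,z] vanishing at every point of S, with a₁ = g. Then there exists a unique triple (M₁, M₂, M₃) of Hermitian d×d complex matrices such that, setting M = xM₁ + yM₂ + zM₃, one has a·M = (f, 0, …, 0) and M·ā^T = (f, 0, …, 0)^T as identities of vectors of polynomials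 (where ā denotes applying complex conjugation to all coefficients of the entries of a). Moreover, for this solution there exists c ∈ ℝ with c > 0 such that f = c·det(M) as polynomials, and the matrix e₁M₁ + e₂M₂ + e₃M₃ is positive definite. -/
open scoped ComplexOrder

/-- The complexification of a real polynomial in three variables. -/
noncomputable def complexify (f : MvPolynomial (Fin 3) ℝ) : MvPolynomial (Fin 3) ℂ :=
  MvPolynomial.map (algebraMap ℝ ℂ) f

/-- `f` is hyperbolic with respect to `e ∈ ℝ³`: `f(e) ≠ 0` and for every `p ∈ ℝ³` all
complex roots of `t ↦ f(te + p)` are real. -/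
def IsHyperbolic (f : MvPolynomial (Fin 3) ℝ) (e : Fin 3 → ℝ) : Prop :=
  MvPolynomial.eval e f ≠ 0 ∧
    ∀ p : Fin 3 → ℝ, ∀ t : ℂ,
      MvPolynomial.eval (fun i => t * (e i : ℂ) + (p i : ℂ)) (complexify f) = 0 →
      t.im = 0

/-- The Hermitian pencil `x M₁ + y M₂ + z M₃` as a matrix of polynomials in `ℂ[x,y,z]`. -/
noncomputable def pencil {d : ℕ} (M₁ M₂ M₃ : Matrix (Fin d) (Fin d) ℂ) :
    Matrix (Fin d) (Fin d) (MvPolynomial (Fin 3) ℂ) := fun i j =>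
  MvPolynomial.X 0 * MvPolynomial.C (M₁ i j) +
    MvPolynomial.X 1 * MvPolynomial.C (M₂ i j) +
    MvPolynomial.X 2 * MvPolynomial.C (M₃ i j)

/-- Coordinatewise complex conjugation on `ℂ³`. -/
def conjPt (p : Fin 3 → ℂ) : Fin 3 → ℂ := fun i => (starRingEnd ℂ) (p i)

namespace HDR

open Polynomial in
noncomputable def lineP {R : Type*} [CommRing R] [Algebra ℂ R] (e : Fin 3 → ℝ) (q : Fin 3 → R)
    (f : MvPolynomial (Fin 3) ℂ) : R[X] :=
  MvPolynomial.aeval (fun i => X * C (algebraMap ℂ R (e i)) + C (q i)) f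

section
open Polynomial
variable {R : Type*} [CommRing R] [Algebra ℂ R] (e : Fin 3 → ℝ) (q : Fin 3 → R)

lemma lineP_deg {f : MvPolynomial (Fin 3) ℂ} {n : ℕ} (hf : f.IsHomogeneous n) :
    (lineP e q f).natDegree ≤ n ∧
    (lineP e q f).coeff n = algebraMap ℂ R (MvPolynomial.eval (fun i => (e i : ℂ)) f) := by
  have key : ∀ m : Fin 3 →₀ ℕ, m.degree = n →
      (∏ i, (X * C (algebraMap ℂ R (e i)) + C (q i)) ^ (m i)).natDegree ≤ n ∧
      (∏ i, (X * C (algebraMap ℂ R (e i)) + C (q i)) ^ (m i)).coeff n =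
        algebraMap ℂ R (∏ i, (e i : ℂ) ^ (m i)) := by
    intro m hm
    have h1 : ∀ i : Fin 3, (X * C (algebraMap ℂ R (e i)) + C (q i)).natDegree ≤ 1 := by
      intro i; compute_degree
    have h2 : ∀ i, ((X * C (algebraMap ℂ R (e i)) + C (q i)) ^ (m i)).natDegree ≤ m i := by
      intro i
      exact (natDegree_pow_le_of_le (m i) (h1 i)).trans (by simp)
    have h3 : ∀ i, ((X * C (algebraMap ℂ R (e i)) + C (q i)) ^ (m i)).coeff (m i) =
        (algebraMap ℂ R (e i)) ^ (m i) := by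
      intro i
      have := coeff_pow_of_natDegree_le (h1 i) (m := m i)
      rw [mul_one] at this
      rw [this]; simp [coeff_C]
    have hm' : m 0 + m 1 + m 2 = n := by
      rw [← hm, Finsupp.degree_eq_sum, Fin.sum_univ_three]
    simp only [Fin.prod_univ_three]
    have h4 := natDegree_mul_le_of_le (h2 0) (h2 1)
    constructor
    · rw [← hm']; exact natDegree_mul_le_of_le h4 (h2 2)
    · rw [← hm', coeff_mul_add_eq_of_natDegree_le h4 (h2 2),
        coeff_mul_add_eq_of_natDegree_le (h2 0) (h2 1), h3, h3, h3]
      simp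
  have hd : ∀ m ∈ f.support, m.degree = n := by
    intro m hm
    have := hf (MvPolynomial.mem_support_iff.mp hm)
    rw [← this, Finsupp.degree_eq_weight_one]; rfl
  have e1 : lineP e q f = ∑ m ∈ f.support, C (algebraMap ℂ R (f.coeff m)) *
      ∏ i, (X * C (algebraMap ℂ R (e i)) + C (q i)) ^ (m i) := by
    rw [lineP, MvPolynomial.aeval_def, MvPolynomial.eval₂_eq']
    rfl
  rw [e1]
  constructor
  · apply natDegree_sum_le_of_forall_le
    intro m hm
    exact (natDegree_C_mul_le _ _).trans (key m (hd m hm)).1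
  · rw [finsetSum_coeff, MvPolynomial.eval_eq', map_sum]
    apply Finset.sum_congr rfl
    intro m hm
    rw [coeff_C_mul, (key m (hd m hm)).2, map_mul]

def pt (e : Fin 3 → ℝ) (q : Fin 3 → ℂ) (t : ℂ) : Fin 3 → ℂ := fun i => t * e i + q i

lemma lineP_eval (q : Fin 3 → ℂ) (f : MvPolynomial (Fin 3) ℂ) (t : ℂ) :
    (lineP e q f).eval t = MvPolynomial.eval (pt e q t) f := by
  rw [lineP, MvPolynomial.aeval_def, ← coe_evalRingHom, MvPolynomial.hom_eval₂, ← MvPolynomial.eval₂_id]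
  congr 1
  · ext; simp
  · funext i; simp [pt]; ring

lemma lineP_map {R' : Type*} [CommRing R'] [Algebra ℂ R'] (φ : R →ₐ[ℂ] R')
    (f : MvPolynomial (Fin 3) ℂ) :
    (lineP e q f).map φ.toRingHom = lineP e (fun i => φ (q i)) f := by
  rw [lineP, MvPolynomial.aeval_def, ← coe_mapRingHom, MvPolynomial.hom_eval₂, lineP,
    MvPolynomial.aeval_def]
  congr 1
  · ext; simp [← Polynomial.C_eq_algebraMap, Polynomial.algebraMap_apply]
  · funext i; simp [Polynomial.algebraMap_apply]

end

lemma taylor (P : Fin 3 → ℂ) (f : MvPolynomial (Fin 3) ℂ) :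
    ∃ α : Fin 3 → MvPolynomial (Fin 3) ℂ,
      f = MvPolynomial.C (MvPolynomial.eval P f) +
        ∑ i, α i * (MvPolynomial.X i - MvPolynomial.C (P i)) := by
  induction f using MvPolynomial.induction_on with
  | C a => exact ⟨0, by simp⟩
  | add p q hp hq =>
    obtain ⟨α, hα⟩ := hp
    obtain ⟨β, hβ⟩ := hq
    refine ⟨α + β, ?_⟩
    simp only [map_add, Pi.add_apply, add_mul, Finset.sum_add_distrib]
    linear_combination hα + hβ
  | mul_X p j hp =>
    obtain ⟨α, hα⟩ := hp
    refine ⟨fun i => α i * MvPolynomial.X j +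
      if i = j then MvPolynomial.C (MvPolynomial.eval P p) else 0, ?_⟩
    simp only [map_mul, add_mul, Finset.sum_add_distrib, MvPolynomial.eval_X, ite_mul, zero_mul,
      Finset.sum_ite_eq', Finset.mem_univ, if_true]
    have : ∑ i, α i * MvPolynomial.X j * (MvPolynomial.X i - MvPolynomial.C (P i)) =
        MvPolynomial.X j * ∑ i, α i * (MvPolynomial.X i - MvPolynomial.C (P i)) := by
      rw [Finset.mul_sum]; exact Finset.sum_congr rfl fun i _ => by ring
    rw [this]
    linear_combination MvPolynomial.X j * hα

lemma taylor' (P : Fin 3 → ℂ) (f : MvPolynomial (Fin 3) ℂ) :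
    ∃ α : Fin 3 → MvPolynomial (Fin 3) ℂ,
      f = MvPolynomial.C (MvPolynomial.eval P f) +
        ∑ i, α i * (MvPolynomial.X i - MvPolynomial.C (P i)) ∧
      ∀ i, MvPolynomial.eval P (α i) = MvPolynomial.eval P (MvPolynomial.pderiv i f) := by
  obtain ⟨α, hα⟩ := taylor P f
  refine ⟨α, hα, fun j => ?_⟩
  have h := congrArg (fun r => MvPolynomial.eval P (MvPolynomial.pderiv j r)) hα
  simp only [map_add, map_sum, MvPolynomial.pderiv_C, Derivation.leibniz, map_sub, smul_eq_mul,
    map_mul, MvPolynomial.eval_X, MvPolynomial.eval_C, sub_self, zero_mul, add_zero, zero_add,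
    sub_zero, MvPolynomial.pderiv_X] at h
  rw [h]
  simp [Pi.single_apply, apply_ite]

lemma deriv_line (e : Fin 3 → ℝ) (q : Fin 3 → ℂ) (f : MvPolynomial (Fin 3) ℂ) (t : ℂ) :
    (Polynomial.derivative (lineP e q f)).eval t =
      ∑ i, (e i : ℂ) * MvPolynomial.eval (pt e q t) (MvPolynomial.pderiv i f) := by
  obtain ⟨α, hα, hd⟩ := taylor' (pt e q t) f
  have h1 : lineP e q f = Polynomial.C (MvPolynomial.eval (pt e q t) f) +
      ∑ i, lineP e q (α i) * (Polynomial.C (e i : ℂ) * (Polynomial.X - Polynomial.C t)) := by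
    conv_lhs => rw [hα]
    simp only [lineP, map_add, map_sum, map_mul, map_sub, MvPolynomial.aeval_X]
    congr 1
    · simp [MvPolynomial.algHom_C]
    · refine Finset.sum_congr rfl fun i _ => ?_
      congr 1
      simp only [MvPolynomial.algHom_C, Polynomial.algebraMap_eq, pt]
      simp
      ring
  rw [h1]
  simp only [map_add, Polynomial.derivative_sum, Polynomial.derivative_mul, Polynomial.derivative_C,
    Polynomial.eval_finsetSum, Polynomial.eval_add, Polynomial.eval_mul]
  simp [lineP_eval, hd, mul_comm]

/-- Local Noether-type statement in an affine chart. -/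
lemma chart_mem (e c b : Fin 3 → ℝ) (f g h : MvPolynomial (Fin 3) ℂ)
    (φ : MvPolynomial (Fin 3) ℂ →ₐ[ℂ] MvPolynomial (Fin 2) ℂ)
    (hφ : ∀ i, φ (MvPolynomial.X i) = MvPolynomial.C (e i : ℂ) * MvPolynomial.X 0 +
      MvPolynomial.C (c i : ℂ) * MvPolynomial.X 1 + MvPolynomial.C (b i : ℂ))
    (hjac : ∀ x s : ℂ, MvPolynomial.eval (fun i => x * e i + s * c i + b i) f = 0 →
      MvPolynomial.eval (fun i => x * e i + s * c i + b i) g = 0 →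
      (∑ i, MvPolynomial.eval (fun i => x * e i + s * c i + b i) (MvPolynomial.pderiv i f) * e i) *
      (∑ i, MvPolynomial.eval (fun i => x * e i + s * c i + b i) (MvPolynomial.pderiv i g) * c i) -
      (∑ i, MvPolynomial.eval (fun i => x * e i + s * c i + b i) (MvPolynomial.pderiv i f) * c i) *
      (∑ i, MvPolynomial.eval (fun i => x * e i + s * c i + b i) (MvPolynomial.pderiv i g) * e i)
        ≠ 0)
    (hh : ∀ x s : ℂ, MvPolynomial.eval (fun i => x * e i + s * c i + b i) f = 0 →
      MvPolynomial.eval (fun i => x * e i + s * c i + b i) g = 0 →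
      MvPolynomial.eval (fun i => x * e i + s * c i + b i) h = 0) :
    ∃ α β : MvPolynomial (Fin 2) ℂ, φ h = α * φ f + β * φ g := by
  have hev : ∀ (p : Fin 2 → ℂ) (r : MvPolynomial (Fin 3) ℂ), MvPolynomial.eval p (φ r) =
      MvPolynomial.eval (fun i => p 0 * e i + p 1 * c i + b i) r := by
    intro p r
    have : ((MvPolynomial.aeval p).comp φ : MvPolynomial (Fin 3) ℂ →ₐ[ℂ] ℂ) =
        MvPolynomial.aeval (fun i => p 0 * e i + p 1 * c i + b i : Fin 3 → ℂ) := by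
      ext i; simp [hφ]; ring
    have := DFunLike.congr_fun this r
    simpa [MvPolynomial.aeval_eq_eval] using this
  let I : Ideal (MvPolynomial (Fin 2) ℂ) := Ideal.span {φ f, φ g}
  suffices hI : φ h ∈ I by
    obtain ⟨α, β, h⟩ := Ideal.mem_span_pair.mp hI
    exact ⟨α, β, h.symm⟩
  let J : Ideal (MvPolynomial (Fin 2) ℂ) := I.colon {φ h}
  have hJmem : ∀ r, r ∈ J ↔ r * φ h ∈ I := fun r => by simp [J, Submodule.mem_colon_singleton]
  by_contra hne
  have hJ : J ≠ ⊤ := by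
    intro h; apply hne
    have : (1 : MvPolynomial (Fin 2) ℂ) ∈ J := by rw [h]; trivial
    simpa using (hJmem _).mp this
  obtain ⟨m, hm, hJm⟩ := Ideal.exists_le_maximal J hJ
  obtain ⟨p, rfl⟩ := MvPolynomial.isMaximal_iff_eq_vanishingIdeal_singleton.mp hm
  have hv : ∀ r, r ∈ J → MvPolynomial.eval p r = 0 := by
    intro r hr
    have := (MvPolynomial.mem_vanishingIdeal_singleton_iff p r).mp (hJm hr)
    simpa [MvPolynomial.aeval_eq_eval] using this
  have hfI : φ f ∈ I := Ideal.subset_span (by simp)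
  have hgI : φ g ∈ I := Ideal.subset_span (by simp)
  have hf0 := hv (φ f) ((hJmem _).mpr (I.mul_mem_right _ hfI))
  have hg0 := hv (φ g) ((hJmem _).mpr (I.mul_mem_right _ hgI))
  rw [hev] at hf0 hg0
  have hh0 := hh _ _ hf0 hg0
  have hj := hjac _ _ hf0 hg0
  obtain ⟨α, hα, hαd⟩ := taylor' (fun i => p 0 * e i + p 1 * c i + b i) f
  obtain ⟨β, hβ, hβd⟩ := taylor' (fun i => p 0 * e i + p 1 * c i + b i) g
  obtain ⟨γ, hγ, hγd⟩ := taylor' (fun i => p 0 * e i + p 1 * c i + b i) h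
  have exp : ∀ (r : MvPolynomial (Fin 3) ℂ) (δ : Fin 3 → MvPolynomial (Fin 3) ℂ),
      r = MvPolynomial.C 0 +
        ∑ i, δ i * (MvPolynomial.X i - MvPolynomial.C (p 0 * e i + p 1 * c i + b i : ℂ)) →
      φ r = (∑ i, φ (δ i) * MvPolynomial.C (e i : ℂ)) * (MvPolynomial.X 0 - MvPolynomial.C (p 0)) +
        (∑ i, φ (δ i) * MvPolynomial.C (c i : ℂ)) * (MvPolynomial.X 1 - MvPolynomial.C (p 1)) := by
    intro r δ hr
    rw [hr]
    simp only [map_add, map_sum, map_mul, map_sub, hφ, MvPolynomial.algHom_C,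
      MvPolynomial.algebraMap_eq, Finset.sum_mul, ← Finset.sum_add_distrib, map_zero, zero_add]
    refine Finset.sum_congr rfl fun i _ => by ring
  rw [hf0] at hα; rw [hg0] at hβ; rw [hh0] at hγ
  have E1 := exp f α hα
  have E2 := exp g β hβ
  have E3 := exp h γ hγ
  set u := MvPolynomial.X (R := ℂ) (0 : Fin 2) - MvPolynomial.C (p 0)
  set v := MvPolynomial.X (R := ℂ) (1 : Fin 2) - MvPolynomial.C (p 1)
  set a0 := ∑ i, φ (α i) * MvPolynomial.C (e i : ℂ) with ha0
  set a1 := ∑ i, φ (α i) * MvPolynomial.C (c i : ℂ) with ha1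
  set b0 := ∑ i, φ (β i) * MvPolynomial.C (e i : ℂ) with hb0
  set b1 := ∑ i, φ (β i) * MvPolynomial.C (c i : ℂ) with hb1
  have hr : a0 * b1 - a1 * b0 ∈ J := by
    rw [hJmem, E3]
    refine Ideal.mem_span_pair.mpr ⟨(∑ i, φ (γ i) * MvPolynomial.C (e i : ℂ)) * b1 -
      (∑ i, φ (γ i) * MvPolynomial.C (c i : ℂ)) * b0,
      (∑ i, φ (γ i) * MvPolynomial.C (c i : ℂ)) * a0 -
      (∑ i, φ (γ i) * MvPolynomial.C (e i : ℂ)) * a1, ?_⟩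
    rw [E1, E2]; ring
  have := hv _ hr
  simp only [ha0, ha1, hb0, hb1, map_sub, map_mul, map_sum, hev, MvPolynomial.eval_C, hαd, hβd] at this
  exact hj this

structure Setup (d : ℕ) (e : Fin 3 → ℝ) (f g : MvPolynomial (Fin 3) ℂ) (fe : ℝ) : Prop where
  hd : 0 < d
  fhom : f.IsHomogeneous d
  ghom : g.IsHomogeneous (d - 1)
  lead : MvPolynomial.eval (fun i => (e i : ℂ)) f = fe
  pos : 0 < fe
  gdef : ∀ P : Fin 3 → ℂ, MvPolynomial.eval P g =
    ∑ i, (e i : ℂ) * MvPolynomial.eval P (MvPolynomial.pderiv i f)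
  hreal : ∀ q : Fin 3 → ℝ, ∀ t : ℂ, MvPolynomial.eval (pt e (fun i => (q i : ℂ)) t) f = 0 → t.im = 0
  noreal : ∀ q : Fin 3 → ℝ, q ≠ 0 → MvPolynomial.eval (fun i => (q i : ℂ)) f = 0 →
    MvPolynomial.eval (fun i => (q i : ℂ)) g ≠ 0
  gconj : MvPolynomial.map (starRingEnd ℂ) g = g
  trans : ∀ p : Fin 3 → ℂ, p ≠ 0 → MvPolynomial.eval p f = 0 → MvPolynomial.eval p g = 0 →
      LinearIndependent ℂ
        ![fun i => MvPolynomial.eval p (MvPolynomial.pderiv i f),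
          fun i => MvPolynomial.eval p (MvPolynomial.pderiv i g)]

def Good (e q : Fin 3 → ℝ) : Prop := ∀ t : ℝ, (fun i => t * e i + q i) ≠ 0

/-- real point as complex point -/
def rc (q : Fin 3 → ℝ) : Fin 3 → ℂ := fun i => (q i : ℂ)

noncomputable def Z (e : Fin 3 → ℝ) (f : MvPolynomial (Fin 3) ℂ) (q : Fin 3 → ℝ) : Finset ℂ :=
  (lineP e (rc q) f).roots.toFinset

section
variable {d : ℕ} {e : Fin 3 → ℝ} {f g : MvPolynomial (Fin 3) ℂ} {fe : ℝ}

lemma fe_ne (S : Setup d e f g fe) : (fe : ℂ) ≠ 0 := by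
  exact_mod_cast S.pos.ne'

lemma line_ne (S : Setup d e f g fe) (q : Fin 3 → ℝ) : lineP e (rc q) f ≠ 0 := by
  intro h
  have := (lineP_deg e (rc q) S.fhom).2
  rw [h, S.lead] at this
  exact fe_ne S (by simpa using this.symm)

lemma line_natDegree (S : Setup d e f g fe) (q : Fin 3 → ℝ) :
    (lineP e (rc q) f).natDegree = d := by
  have := lineP_deg e (rc q) S.fhom
  refine Polynomial.natDegree_eq_of_le_of_coeff_ne_zero this.1 ?_
  rw [this.2, S.lead]
  exact fe_ne S

lemma line_lead (S : Setup d e f g fe) (q : Fin 3 → ℝ) :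
    (lineP e (rc q) f).leadingCoeff = fe := by
  rw [Polynomial.leadingCoeff, line_natDegree S, (lineP_deg e (rc q) S.fhom).2, S.lead]
  rfl

lemma mem_Z (S : Setup d e f g fe) (q : Fin 3 → ℝ) (t : ℂ) :
    t ∈ Z e f q ↔ MvPolynomial.eval (pt e (rc q) t) f = 0 := by
  rw [Z, Multiset.mem_toFinset, Polynomial.mem_roots (line_ne S q), Polynomial.IsRoot.def,
    lineP_eval]

lemma Z_real (S : Setup d e f g fe) {q : Fin 3 → ℝ} {t : ℂ} (ht : t ∈ Z e f q) : (t.re : ℂ) = t := by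
  have := S.hreal q t ((mem_Z S q t).mp ht)
  apply Complex.ext <;> simp [this]

lemma pt_real (q : Fin 3 → ℝ) (s : ℝ) : pt e (rc q) s = rc (fun i => s * e i + q i) := by
  funext i; simp [pt, rc]

lemma g_ne (S : Setup d e f g fe) {q : Fin 3 → ℝ} (hq : Good e q) {t : ℂ} (ht : t ∈ Z e f q) :
    MvPolynomial.eval (pt e (rc q) t) g ≠ 0 := by
  have h1 := (mem_Z S q t).mp ht
  rw [← Z_real S ht] at h1 ⊢
  rw [pt_real] at h1 ⊢
  exact S.noreal _ (hq _) h1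

lemma deriv_g (S : Setup d e f g fe) (q : Fin 3 → ℝ) (t : ℂ) :
    (Polynomial.derivative (lineP e (rc q) f)).eval t = MvPolynomial.eval (pt e (rc q) t) g := by
  rw [deriv_line, S.gdef]

lemma roots_nodup (S : Setup d e f g fe) {q : Fin 3 → ℝ} (hq : Good e q) :
    (lineP e (rc q) f).roots.Nodup := by
  apply Multiset.nodup_iff_count_le_one.mpr
  intro t
  rw [Polynomial.count_roots]
  by_contra hlt
  push Not at hlt
  have h := (Polynomial.one_lt_rootMultiplicity_iff_isRoot (line_ne S q)).mp hlt
  have ht : t ∈ Z e f q := by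
    rw [mem_Z S, ← lineP_eval]; exact h.1
  apply g_ne S hq ht
  rw [← deriv_g S]; exact h.2

lemma Z_card (S : Setup d e f g fe) {q : Fin 3 → ℝ} (hq : Good e q) : (Z e f q).card = d := by
  rw [Z, Multiset.toFinset_card_of_nodup (roots_nodup S hq),
    IsAlgClosed.card_roots_eq_natDegree, line_natDegree S]

lemma line_prod (S : Setup d e f g fe) {q : Fin 3 → ℝ} (hq : Good e q) :
    lineP e (rc q) f = Polynomial.C (fe : ℂ) * Lagrange.nodal (Z e f q) id := by
  have := (IsAlgClosed.splits (lineP e (rc q) f)).eq_prod_roots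
  rw [line_lead S] at this
  rw [this]
  congr 1
  rw [Lagrange.nodal_eq, Z, Finset.prod, Multiset.toFinset_val, (roots_nodup S hq).dedup]
  rfl

lemma lag1 (S : Setup d e f g fe) {q : Fin 3 → ℝ} (hq : Good e q) (r : Polynomial ℂ)
    (hr : r.degree < d) :
    ∑ t ∈ Z e f q, r.eval t / MvPolynomial.eval (pt e (rc q) t) g = r.coeff (d - 1) / fe := by
  have h := Lagrange.coeff_eq_sum (s := Z e f q) (v := id) Function.injective_id.injOn
    (P := r) (by rw [Z_card S hq]; exact hr)
  rw [Z_card S hq] at h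
  rw [h, Finset.sum_div]
  refine Finset.sum_congr rfl fun t ht => ?_
  rw [← deriv_g S, line_prod S hq, Polynomial.derivative_C_mul, Polynomial.eval_mul,
    Polynomial.eval_C]
  have := Lagrange.eval_nodal_derivative_eval_node_eq (v := id) ht
  simp only [id] at this ⊢
  rw [this, Lagrange.eval_nodal, div_div, mul_comm]
  rfl

lemma pt_zero (q : Fin 3 → ℂ) : pt e q 0 = q := by funext i; simp [pt]

lemma f_prod (S : Setup d e f g fe) {q : Fin 3 → ℝ} (hq : Good e q) :
    MvPolynomial.eval (rc q) f = fe * ∏ t ∈ Z e f q, (-t) := by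
  have := lineP_eval e (rc q) f 0
  rw [pt_zero] at this
  rw [← this, line_prod S hq, Polynomial.eval_mul, Polynomial.eval_C, Lagrange.eval_nodal]
  simp

lemma lag2 (S : Setup d e f g fe) {q : Fin 3 → ℝ} (hq : Good e q)
    (hfq : MvPolynomial.eval (rc q) f ≠ 0)
    (r : MvPolynomial (Fin 3) ℂ) (hr : r.IsHomogeneous (d - 1)) :
    MvPolynomial.eval (rc q) r = - MvPolynomial.eval (rc q) f *
      ∑ t ∈ Z e f q, MvPolynomial.eval (pt e (rc q) t) r /
        (MvPolynomial.eval (pt e (rc q) t) g * t) := by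
  have hdeg : (lineP e (rc q) r).degree < (Z e f q).card := by
    rw [Z_card S hq]
    refine Polynomial.degree_le_natDegree.trans_lt ?_
    have := (lineP_deg e (rc q) hr).1
    have := S.hd
    exact_mod_cast (by omega : (lineP e (rc q) r).natDegree < d)
  have h := Lagrange.eq_interpolate (s := Z e f q) (v := id) Function.injective_id.injOn hdeg
  have hx : ∀ i ∈ Z e f q, (0 : ℂ) ≠ id i := by
    intro t ht h0
    have h0 : 0 = t := h0
    subst h0
    have := (mem_Z S q 0).mp ht
    rw [pt_zero] at this
    exact hfq this
  have h2 := Lagrange.eval_interpolate_not_at_node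
    (fun i => (lineP e (rc q) r).eval (id i)) hx
  rw [← h, lineP_eval, pt_zero] at h2
  have h3 := lineP_eval e (rc q) f 0
  rw [pt_zero, line_prod S hq, Polynomial.eval_mul, Polynomial.eval_C] at h3
  rw [h2, ← h3]
  rw [neg_mul, mul_comm (fe : ℂ), mul_assoc, ← mul_neg]
  congr 1
  rw [Finset.mul_sum, ← Finset.sum_neg_distrib]
  refine Finset.sum_congr rfl fun t ht => ?_
  rw [Lagrange.nodalWeight_eq_eval_derivative_nodal ht, lineP_eval, ← deriv_g S, line_prod S hq,
    Polynomial.derivative_C_mul, Polynomial.eval_mul, Polynomial.eval_C]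
  have := fe_ne S
  have ht0 : t ≠ 0 := fun h => hx t ht h.symm
  simp only [id]
  by_cases hz : (Polynomial.derivative (Lagrange.nodal (Z e f q) id)).eval t = 0
  · simp [hz]
  · rw [zero_sub]; field_simp

noncomputable def Phi (e : Fin 3 → ℝ) (f g : MvPolynomial (Fin 3) ℂ) (n : ℕ)
    (h : MvPolynomial (Fin 3) ℂ) (q : Fin 3 → ℝ) : ℂ :=
  ∑ t ∈ Z e f q, t ^ n * MvPolynomial.eval (pt e (rc q) t) h /
    (MvPolynomial.eval (pt e (rc q) t) g) ^ 2

structure Frame (e b c A B C : Fin 3 → ℝ) : Prop where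
  dec : ∀ (v : Fin 3 → ℂ) (i : Fin 3), v i = (∑ j, A j * v j) * e i + (∑ j, B j * v j) * b i +
    (∑ j, C j * v j) * c i
  Ae : ∑ j, A j * e j = 1
  Ab : ∑ j, A j * b j = 0
  Ac : ∑ j, A j * c j = 0
  Be : ∑ j, B j * e j = 0
  Bb : ∑ j, B j * b j = 1
  Bc : ∑ j, B j * c j = 0
  Ce : ∑ j, C j * e j = 0
  Cb : ∑ j, C j * b j = 0
  Cc : ∑ j, C j * c j = 1

lemma Frame.swap {e b c A B C : Fin 3 → ℝ} (F : Frame e b c A B C) : Frame e c b A C B where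
  dec v i := by
    have := F.dec v i
    linear_combination this
  Ae := F.Ae
  Ab := F.Ac
  Ac := F.Ab
  Be := F.Ce
  Bb := F.Cc
  Bc := F.Cb
  Ce := F.Be
  Cb := F.Bc
  Cc := F.Bb

lemma jac (S : Setup d e f g fe) {b c A B C : Fin 3 → ℝ} (F : Frame e b c A B C) (x s : ℂ)
    (hf : MvPolynomial.eval (fun i => x * e i + s * c i + b i) f = 0)
    (hg : MvPolynomial.eval (fun i => x * e i + s * c i + b i) g = 0) :
      (∑ i, MvPolynomial.eval (fun i => x * e i + s * c i + b i) (MvPolynomial.pderiv i f) * e i) *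
      (∑ i, MvPolynomial.eval (fun i => x * e i + s * c i + b i) (MvPolynomial.pderiv i g) * c i) -
      (∑ i, MvPolynomial.eval (fun i => x * e i + s * c i + b i) (MvPolynomial.pderiv i f) * c i) *
      (∑ i, MvPolynomial.eval (fun i => x * e i + s * c i + b i) (MvPolynomial.pderiv i g) * e i)
        ≠ 0 := by
  set P : Fin 3 → ℂ := fun i => x * e i + s * c i + b i with hP
  have hP0 : P ≠ 0 := by
    intro h
    have h1 : ∑ j, (B j : ℂ) * P j = 1 := by
      have e1 : (∑ j, (B j : ℂ) * e j) = 0 := by exact_mod_cast F.Be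
      have e2 : (∑ j, (B j : ℂ) * c j) = 0 := by exact_mod_cast F.Bc
      have e3 : (∑ j, (B j : ℂ) * b j) = 1 := by exact_mod_cast F.Bb
      simp only [hP, Fin.sum_univ_three] at *
      linear_combination x * e1 + s * e2 + e3
    rw [h] at h1; simp at h1
  have hLI := S.trans P hP0 hf hg
  set u : Fin 3 → ℂ := fun i => MvPolynomial.eval P (MvPolynomial.pderiv i f) with hu
  set v : Fin 3 → ℂ := fun i => MvPolynomial.eval P (MvPolynomial.pderiv i g) with hv
  have euler : ∀ (r : MvPolynomial (Fin 3) ℂ) (n : ℕ), r.IsHomogeneous n →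
      MvPolynomial.eval P r = 0 →
      ∑ i, MvPolynomial.eval P (MvPolynomial.pderiv i r) * P i = 0 := by
    intro r n hr h0
    have := congrArg (MvPolynomial.eval P) hr.sum_X_mul_pderiv
    simp only [map_sum, map_mul, MvPolynomial.eval_X, map_nsmul, h0, smul_zero] at this
    rw [← this]; exact Finset.sum_congr rfl fun i _ => mul_comm _ _
  have hup : ∑ i, u i * P i = 0 := euler f d S.fhom hf
  have hvp : ∑ i, v i * P i = 0 := euler g _ S.ghom hg
  have hue : ∑ i, u i * e i = 0 := by
    have := S.gdef P
    rw [hg] at this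
    rw [this]; exact Finset.sum_congr rfl fun i _ => mul_comm _ _
  have kill : ∀ w : Fin 3 → ℂ, ∑ i, w i * e i = 0 → ∑ i, w i * c i = 0 → ∑ i, w i * P i = 0 →
      w = 0 := by
    intro w h1 h2 h3
    have h4 : ∑ i, w i * b i = 0 := by
      simp only [hP, Fin.sum_univ_three] at *
      linear_combination h3 - x * h1 - s * h2
    have h5 : ∀ y : Fin 3 → ℂ, ∑ i, w i * y i = 0 := by
      intro y
      have : ∑ i, w i * y i = (∑ j, A j * y j) * (∑ i, w i * e i) +
          (∑ j, B j * y j) * (∑ i, w i * b i) + (∑ j, C j * y j) * (∑ i, w i * c i) := by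
        rw [Finset.mul_sum, Finset.mul_sum, Finset.mul_sum, ← Finset.sum_add_distrib,
          ← Finset.sum_add_distrib]
        refine Finset.sum_congr rfl fun i _ => ?_
        linear_combination w i * F.dec y i
      rw [this, h1, h2, h4]; ring
    funext i
    have := h5 (Pi.single i 1)
    simpa [Pi.single_apply] using this
  rw [LinearIndependent.pair_iff] at hLI
  intro hD
  change (∑ i, u i * e i) * (∑ i, v i * c i) - (∑ i, u i * c i) * (∑ i, v i * e i) = 0 at hD
  have huc : ∑ i, u i * c i ≠ 0 := by
    intro h
    have := kill u hue h hup
    have := hLI 1 0 (by rw [this]; simp)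
    simp at this
  rw [hue, zero_mul, zero_sub, neg_eq_zero, mul_eq_zero] at hD
  have hve := hD.resolve_left huc
  have hw := kill ((∑ i, v i * c i) • u + (-(∑ i, u i * c i)) • v)
    (by
      simp only [Pi.add_apply, Pi.smul_apply, smul_eq_mul, Fin.sum_univ_three] at *
      linear_combination (v 0 * c 0 + v 1 * c 1 + v 2 * c 2) * hue -
        (u 0 * c 0 + u 1 * c 1 + u 2 * c 2) * hve)
    (by
      simp only [Pi.add_apply, Pi.smul_apply, smul_eq_mul, Fin.sum_univ_three]
      ring)
    (by
      simp only [Pi.add_apply, Pi.smul_apply, smul_eq_mul, Fin.sum_univ_three] at *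
      linear_combination (v 0 * c 0 + v 1 * c 1 + v 2 * c 2) * hup -
        (u 0 * c 0 + u 1 * c 1 + u 2 * c 2) * hvp)
  have := (hLI _ _ hw).2
  exact huc (neg_eq_zero.mp this)

lemma good_of_B {b c A B C : Fin 3 → ℝ} (F : Frame e b c A B C) (q : Fin 3 → ℝ)
    (h : ∑ j, B j * q j ≠ 0) : Good e q := by
  intro t h0
  apply h
  have h1 : ∑ j, B j * (t * e j + q j) = 0 := by
    have : ∀ j, t * e j + q j = 0 := fun j => congrFun h0 j
    simp [this]
  have := F.Be
  simp only [Fin.sum_univ_three] at *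
  linear_combination h1 - t * this

open Polynomial in
lemma chart_poly (S : Setup d e f g fe) {b c A B C' : Fin 3 → ℝ} (F : Frame e b c A B C')
    (h : MvPolynomial (Fin 3) ℂ)
    (hh : ∀ P : Fin 3 → ℂ, MvPolynomial.eval P f = 0 → MvPolynomial.eval P g = 0 →
      MvPolynomial.eval P h = 0) (n : ℕ) :
    ∃ p : ℂ[X], ∀ s : ℝ, Phi e f g n h (fun i => s * c i + b i) = p.eval (s : ℂ) := by
  let φ : MvPolynomial (Fin 3) ℂ →ₐ[ℂ] MvPolynomial (Fin 2) ℂ :=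
    MvPolynomial.aeval (fun i => MvPolynomial.C (e i : ℂ) * MvPolynomial.X 0 +
      MvPolynomial.C (c i : ℂ) * MvPolynomial.X 1 + MvPolynomial.C (b i : ℂ))
  have hφ : ∀ i, φ (MvPolynomial.X i) = MvPolynomial.C (e i : ℂ) * MvPolynomial.X 0 +
      MvPolynomial.C (c i : ℂ) * MvPolynomial.X 1 + MvPolynomial.C (b i : ℂ) := fun i => by
    simp [φ]
  obtain ⟨α, β, hαβ⟩ := chart_mem e c b f g h φ hφ (jac S F) (fun x s => hh _)
  have hev : ∀ (t s : ℂ) (r : MvPolynomial (Fin 3) ℂ), MvPolynomial.eval ![t, s] (φ r) =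
      MvPolynomial.eval (fun i => t * e i + s * c i + b i) r := by
    intro t s r
    have : ((MvPolynomial.aeval ![t, s]).comp φ : MvPolynomial (Fin 3) ℂ →ₐ[ℂ] ℂ) =
        MvPolynomial.aeval (fun i => t * e i + s * c i + b i : Fin 3 → ℂ) := by
      ext i; simp [hφ]; ring
    have := DFunLike.congr_fun this r
    simpa [MvPolynomial.aeval_eq_eval] using this
  let ψ : MvPolynomial (Fin 2) ℂ →ₐ[ℂ] ℂ[X][X] := MvPolynomial.aeval ![X, C X]
  have hψ : ∀ (t s : ℂ) (r : MvPolynomial (Fin 2) ℂ),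
      ((ψ r).map (aeval s : ℂ[X] →ₐ[ℂ] ℂ).toRingHom).eval t = MvPolynomial.eval ![t, s] r := by
    intro t s r
    have : (((evalRingHom t).comp (mapRingHom (aeval s : ℂ[X] →ₐ[ℂ] ℂ).toRingHom)).comp
        ψ.toRingHom) = MvPolynomial.eval ![t, s] := by
      apply MvPolynomial.ringHom_ext
      · intro a; simp [ψ, Polynomial.algebraMap_apply, MvPolynomial.algHom_C]
      · intro i; fin_cases i <;> simp [ψ]
    exact DFunLike.congr_fun this r
  let L : ℂ[X][X] := lineP e (fun i => X * C (c i : ℂ) + C (b i : ℂ)) f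
  let Lm : ℂ[X][X] := C (C (fe : ℂ)⁻¹) * L
  have hfe := fe_ne S
  have hL := lineP_deg e (fun i => X * C (c i : ℂ) + C (b i : ℂ)) S.fhom
  have hcoef : Lm.coeff d = 1 := by
    simp only [Lm, L]
    rw [coeff_C_mul, hL.2, S.lead, ← Polynomial.C_eq_algebraMap, ← C_mul, inv_mul_cancel₀ hfe, C_1]
  have hdegLm : Lm.natDegree ≤ d := (natDegree_C_mul_le _ _).trans hL.1
  have hmon : Lm.Monic := monic_of_natDegree_le_of_coeff_eq_one d hdegLm hcoef
  let r := ψ (MvPolynomial.X 0 ^ n * β) %ₘ Lm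
  have hr : r.degree < d := by
    refine (degree_modByMonic_lt _ hmon).trans_le ?_
    exact degree_le_of_natDegree_le hdegLm
  refine ⟨C (fe : ℂ)⁻¹ * r.coeff (d - 1), fun s => ?_⟩
  have hgood : Good e (fun i => s * c i + b i) := by
    apply good_of_B F
    have h1 := F.Bb
    have h2 := F.Bc
    have : ∑ j, B j * (s * c j + b j) = 1 := by
      simp only [Fin.sum_univ_three] at *
      linear_combination h1 + s * h2
    rw [this]; exact one_ne_zero
  have hpt : ∀ t : ℂ, pt e (rc (fun i => s * c i + b i)) t =
      fun i => t * e i + (s : ℂ) * c i + b i := by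
    intro t; funext i; simp [pt, rc]; ring
  have hl := lag1 S hgood (r.map (aeval (s : ℂ) : ℂ[X] →ₐ[ℂ] ℂ).toRingHom)
    (degree_map_le.trans_lt hr)
  rw [coeff_map] at hl
  rw [eval_mul, eval_C]
  have hco : (aeval (s : ℂ) : ℂ[X] →ₐ[ℂ] ℂ).toRingHom (r.coeff (d - 1)) =
      (r.coeff (d - 1)).eval (s : ℂ) := by
    simp [Polynomial.coe_aeval_eq_eval]
  rw [hco, div_eq_inv_mul] at hl
  rw [← hl, Phi]
  refine Finset.sum_congr rfl fun t ht => ?_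
  have hg0 := g_ne S hgood ht
  have hf0 := (mem_Z S _ t).mp ht
  have key := congrArg (MvPolynomial.eval ![t, (s : ℂ)]) hαβ
  simp only [map_add, map_mul, hev] at key
  rw [hpt] at hg0 hf0 ⊢
  rw [hf0, mul_zero, zero_add] at key
  have hrt : (r.map (aeval (s : ℂ) : ℂ[X] →ₐ[ℂ] ℂ).toRingHom).eval t =
      t ^ n * MvPolynomial.eval ![t, (s : ℂ)] β := by
    have h1 : r = ψ (MvPolynomial.X 0 ^ n * β) - Lm * (ψ (MvPolynomial.X 0 ^ n * β) /ₘ Lm) := by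
      rw [eq_sub_iff_add_eq]; exact modByMonic_add_div _ _
    have h2 : (Lm.map (aeval (s : ℂ) : ℂ[X] →ₐ[ℂ] ℂ).toRingHom).eval t = 0 := by
      simp only [Lm, L]
      rw [Polynomial.map_mul, lineP_map, eval_mul, lineP_eval]
      have : (pt e (fun i => (aeval (s : ℂ)) (X * C (c i : ℂ) + C (b i : ℂ))) t) =
        fun i => t * e i + (s : ℂ) * c i + b i := by
        funext i; simp [pt]; ring
      rw [this, hf0, mul_zero]
    rw [h1, Polynomial.map_sub, Polynomial.map_mul, eval_sub, eval_mul, h2, zero_mul, sub_zero, hψ]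
    simp
  rw [hrt, key]
  field_simp

end

lemma exists_frame (e : Fin 3 → ℝ) (he : e ≠ 0) : ∃ b c A B C, Frame e b c A B C := by
  obtain ⟨i, hi⟩ := Function.ne_iff.mp he
  simp only [Pi.zero_apply] at hi
  have hic : (e i : ℂ) ≠ 0 := by exact_mod_cast hi
  fin_cases i
  · simp only [Fin.zero_eta] at hi hic
    refine ⟨![0,1,0], ![0,0,1], ![(e 0)⁻¹,0,0], ![-(e 1)/(e 0),1,0], ![-(e 2)/(e 0),0,1], ?_⟩
    constructor
    · intro v i
      fin_cases i <;> simp [Fin.sum_univ_three] <;> field_simp <;> ring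
    all_goals simp [Fin.sum_univ_three, hi]
  · simp only [Fin.mk_one] at hi hic
    refine ⟨![1,0,0], ![0,0,1], ![0,(e 1)⁻¹,0], ![1,-(e 0)/(e 1),0], ![0,-(e 2)/(e 1),1], ?_⟩
    constructor
    · intro v i
      fin_cases i <;> simp [Fin.sum_univ_three] <;> field_simp <;> ring
    all_goals simp [Fin.sum_univ_three, hi]
  · simp only [Fin.reduceFinMk] at hi hic
    refine ⟨![1,0,0], ![0,1,0], ![0,0,(e 2)⁻¹], ![1,0,-(e 0)/(e 2)], ![0,1,-(e 1)/(e 2)], ?_⟩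
    constructor
    · intro v i
      fin_cases i <;> simp [Fin.sum_univ_three] <;> field_simp <;> ring
    all_goals simp [Fin.sum_univ_three, hi]

section
variable {d : ℕ} {e : Fin 3 → ℝ} {f g : MvPolynomial (Fin 3) ℂ} {fe : ℝ}

lemma hom_smul {n : ℕ} {r : MvPolynomial (Fin 3) ℂ} (hr : r.IsHomogeneous n) (l : ℂ)
    (P : Fin 3 → ℂ) : MvPolynomial.eval (fun i => l * P i) r = l ^ n * MvPolynomial.eval P r := by
  rw [MvPolynomial.eval_eq', MvPolynomial.eval_eq', Finset.mul_sum]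
  refine Finset.sum_congr rfl fun m hm => ?_
  have h := hr (MvPolynomial.mem_support_iff.mp hm)
  have h' : ∑ i, m i = n := by
    rw [← h, ← Finsupp.degree_eq_sum, Finsupp.degree_eq_weight_one]; rfl
  simp only [mul_pow, Finset.prod_mul_distrib, Finset.prod_pow_eq_pow_sum, h']
  ring

lemma Phi_smul (S : Setup d e f g fe) {h : MvPolynomial (Fin 3) ℂ}
    (hh : h.IsHomogeneous ((d - 1) + (d - 1))) (n : ℕ) (l : ℝ) (hl : l ≠ 0) (q : Fin 3 → ℝ) :
    Phi e f g n h (fun i => l * q i) = l ^ n * Phi e f g n h q := by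
  have hlc : (l : ℂ) ≠ 0 := by exact_mod_cast hl
  have hpt : ∀ t : ℂ, pt e (rc fun i => l * q i) (l * t) = fun i => (l : ℂ) * pt e (rc q) t i := by
    intro t; funext i; simp [pt, rc]; ring
  have hmem : ∀ t, (l : ℂ) * t ∈ Z e f (fun i => l * q i) ↔ t ∈ Z e f q := by
    intro t
    rw [mem_Z S, mem_Z S, hpt, hom_smul S.fhom, mul_eq_zero, or_iff_right (pow_ne_zero _ hlc)]
  rw [Phi, Phi, Finset.mul_sum]
  symm
  refine Finset.sum_nbij' (fun t => l * t) (fun t => (l : ℂ)⁻¹ * t) ?_ ?_ ?_ ?_ ?_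
  · intro t ht; exact (hmem t).mpr ht
  · intro t ht
    rw [← hmem, mul_inv_cancel_left₀ hlc]; exact ht
  · intro t _; exact inv_mul_cancel_left₀ hlc t
  · intro t _; exact mul_inv_cancel_left₀ hlc t
  · intro t _
    rw [hpt, hom_smul hh, hom_smul S.ghom, mul_pow, mul_pow, ← pow_mul, mul_two]
    have : (l : ℂ) ^ (d - 1 + (d - 1)) ≠ 0 := pow_ne_zero _ hlc
    rw [← mul_div_mul_left _ _ this]
    ring

lemma Phi_shift (S : Setup d e f g fe) (h : MvPolynomial (Fin 3) ℂ) (α : ℝ) (q : Fin 3 → ℝ) :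
    Phi e f g 0 h (fun i => α * e i + q i) = Phi e f g 0 h q ∧
    Phi e f g 1 h (fun i => α * e i + q i) = Phi e f g 1 h q - α * Phi e f g 0 h q := by
  have hpt : ∀ t : ℂ, pt e (rc fun i => α * e i + q i) (t - α) = pt e (rc q) t := by
    intro t; funext i; simp [pt, rc]; ring
  have hmem : ∀ t, t - (α : ℂ) ∈ Z e f (fun i => α * e i + q i) ↔ t ∈ Z e f q := by
    intro t
    rw [mem_Z S, mem_Z S, hpt]
  have key : ∀ n, Phi e f g n h (fun i => α * e i + q i) =
      ∑ t ∈ Z e f q, (t - α) ^ n * MvPolynomial.eval (pt e (rc q) t) h /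
    (MvPolynomial.eval (pt e (rc q) t) g) ^ 2 := by
    intro n
    rw [Phi]
    symm
    refine Finset.sum_nbij' (fun t => t - α) (fun t => t + α) ?_ ?_ ?_ ?_ ?_
    · intro t ht; exact (hmem t).mpr ht
    · intro t ht
      rw [← hmem, add_sub_cancel_right]; exact ht
    · intro t _; simp
    · intro t _; simp
    · intro t _
      rw [hpt]
  rw [key, key]
  constructor
  · simp [Phi]
  · rw [Phi, Phi, Finset.mul_sum, ← Finset.sum_sub_distrib]
    refine Finset.sum_congr rfl fun t _ => by ring

open Polynomial in
lemma poly_recip {p p' : ℂ[X]} {n : ℕ}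
    (h : ∀ s : ℝ, s ≠ 0 → p.eval (s : ℂ) = (s : ℂ) ^ n * p'.eval (s : ℂ)⁻¹) : p.natDegree ≤ n := by
  have h1 : X ^ p'.natDegree * p = X ^ n * p'.reverse := by
    apply eq_of_infinite_eval_eq
    have hinf : (Complex.ofReal '' (Set.Ioi (0 : ℝ))).Infinite :=
      (Set.Ioi_infinite 0).image Complex.ofReal_injective.injOn
    refine hinf.mono ?_
    rintro _ ⟨s, hs, rfl⟩
    have hs0 : s ≠ 0 := ne_of_gt hs
    have hsc : (s : ℂ) ≠ 0 := by exact_mod_cast hs0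
    simp only [Set.mem_setOf_eq, eval_mul, eval_pow, eval_X]
    rw [h s hs0]
    letI : Invertible ((s : ℂ)⁻¹) := invertibleOfNonzero (inv_ne_zero hsc)
    have := eval₂_reverse_mul_pow (RingHom.id ℂ) ((s : ℂ)⁻¹) p'
    rw [invOf_eq_inv, inv_inv] at this
    change eval (s : ℂ) _ * _ = eval _ _ at this
    rw [← this, inv_pow]
    field_simp
  by_cases hp : p = 0
  · simp [hp]
  have h2 : (X ^ p'.natDegree * p).natDegree = p'.natDegree + p.natDegree := by
    rw [natDegree_mul (pow_ne_zero _ X_ne_zero) hp, natDegree_X_pow]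
  have h3 : (X ^ n * p'.reverse).natDegree ≤ n + p'.natDegree :=
    natDegree_mul_le_of_le (natDegree_X_pow_le _) (reverse_natDegree_le p')
  rw [← h1, h2] at h3
  omega

lemma e_ne (S : Setup d e f g fe) : e ≠ 0 := by
  rintro rfl
  have h := hom_smul S.fhom 0 (fun i => ((0 : Fin 3 → ℝ) i : ℂ))
  rw [zero_pow S.hd.ne', zero_mul] at h
  have := S.lead
  simp only [Pi.zero_apply, Complex.ofReal_zero, mul_zero] at h this
  rw [h] at this
  exact fe_ne S this.symm

lemma linear_form (S : Setup d e f g fe) {h : MvPolynomial (Fin 3) ℂ}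
    (hh : h.IsHomogeneous ((d - 1) + (d - 1)))
    (hv : ∀ P : Fin 3 → ℂ, MvPolynomial.eval P f = 0 → MvPolynomial.eval P g = 0 →
      MvPolynomial.eval P h = 0) :
    ∃ m : Fin 3 → ℂ, ∀ q, Good e q → Phi e f g 0 h q = ∑ i, m i * e i ∧
      Phi e f g 1 h q = - ∑ i, m i * q i := by
  obtain ⟨b, c, A, B, C, F⟩ := exists_frame e (e_ne S)
  have hp := chart_poly S F h hv
  have hp' := chart_poly S F.swap h hv
  choose p hp using hp
  choose p' hp' using hp'
  have rel : ∀ n, ∀ s : ℝ, s ≠ 0 → (p n).eval (s : ℂ) = (s : ℂ) ^ n * (p' n).eval (s : ℂ)⁻¹ := by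
    intro n s hs
    have := hp' n s⁻¹
    rw [Complex.ofReal_inv] at this
    rw [← hp, ← this, ← Phi_smul S hh n s hs]
    congr 1; funext i; field_simp; ring
  have rel' : ∀ n, ∀ s : ℝ, s ≠ 0 → (p' n).eval (s : ℂ) = (s : ℂ) ^ n * (p n).eval (s : ℂ)⁻¹ := by
    intro n s hs
    have := hp n s⁻¹
    rw [Complex.ofReal_inv] at this
    rw [← hp', ← this, ← Phi_smul S hh n s hs]
    congr 1; funext i; field_simp; ring
  obtain ⟨k, hk⟩ := Polynomial.natDegree_eq_zero.mp (Nat.le_zero.mp (poly_recip (rel 0)))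
  obtain ⟨k', hk'⟩ := Polynomial.natDegree_eq_zero.mp (Nat.le_zero.mp (poly_recip (rel' 0)))
  have hkk : k = k' := by
    have := rel 0 1 one_ne_zero
    rw [← hk, ← hk'] at this
    simpa using this
  obtain ⟨a1, a0, ha⟩ := Polynomial.exists_eq_X_add_C_of_natDegree_le_one (poly_recip (rel 1))
  obtain ⟨b1, b0, hb⟩ := Polynomial.exists_eq_X_add_C_of_natDegree_le_one (poly_recip (rel' 1))
  have r1 := rel 1 1 one_ne_zero
  have r2 := rel 1 (-1) (by norm_num)
  rw [ha, hb] at r1 r2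
  simp at r1 r2
  have h01 : a0 = b1 := by linear_combination (r1 + r2) / 2
  have h10 : a1 = b0 := by linear_combination (r1 - r2) / 2
  refine ⟨fun i => k * A i - a0 * B i - a1 * C i, fun q hq => ?_⟩
  set α := ∑ j, A j * q j with hα
  set y := ∑ j, B j * q j with hy
  set z := ∑ j, C j * q j with hz
  have hqd : ∀ i, q i = α * e i + y * b i + z * c i := by
    intro i
    have := F.dec (fun i => (q i : ℂ)) i
    exact_mod_cast this
  have Ae : ∑ j, (A j : ℂ) * e j = 1 := by exact_mod_cast F.Ae
  have Be : ∑ j, (B j : ℂ) * e j = 0 := by exact_mod_cast F.Be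
  have Ce : ∑ j, (C j : ℂ) * e j = 0 := by exact_mod_cast F.Ce
  have hme : ∑ i, (k * A i - a0 * B i - a1 * C i) * (e i : ℂ) = k := by
    simp only [Fin.sum_univ_three] at *
    linear_combination k * Ae - a0 * Be - a1 * Ce
  have hmq : ∑ i, (k * A i - a0 * B i - a1 * C i) * (q i : ℂ) = k * α - a0 * y - a1 * z := by
    rw [hα, hy, hz]
    push_cast
    simp only [Fin.sum_univ_three] at *
    ring
  rw [hme, hmq]
  by_cases hy0 : y = 0
  · by_cases hz0 : z = 0
    · exfalso
      apply hq (-α)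
      funext i
      rw [hqd i, hy0, hz0]; simp
    · have hzc : (z : ℂ) ≠ 0 := by exact_mod_cast hz0
      have e1 : q = fun i => α * e i + (z * ((y / z) * b i + c i)) := by
        funext i; rw [hqd i]; field_simp; ring
      rw [e1]
      have sh := Phi_shift S h α (fun i => z * ((y / z) * b i + c i))
      rw [sh.1, sh.2, Phi_smul S hh 0 z hz0, Phi_smul S hh 1 z hz0, hp', hp', ← hk', hb, ← hkk,
        h01, h10]
      constructor
      · simp
      · simp; field_simp; ring
  · have hyc : (y : ℂ) ≠ 0 := by exact_mod_cast hy0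
    have e1 : q = fun i => α * e i + (y * ((z / y) * c i + b i)) := by
      funext i; rw [hqd i]; field_simp; ring
    rw [e1]
    have sh := Phi_shift S h α (fun i => y * ((z / y) * c i + b i))
    rw [sh.1, sh.2, Phi_smul S hh 0 y hy0, Phi_smul S hh 1 y hy0, hp, hp, ← hk, ha]
    constructor
    · simp
    · simp; field_simp; ring

lemma poly_zero (S : Setup d e f g fe) (P : MvPolynomial (Fin 3) ℂ)
    (h : ∀ q, Good e q → MvPolynomial.eval (rc q) f ≠ 0 → MvPolynomial.eval (rc q) P = 0) :
    P = 0 := by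
  obtain ⟨b, c, A, B, C, F⟩ := exists_frame e (e_ne S)
  let l : MvPolynomial (Fin 3) ℂ := ∑ j, MvPolynomial.C (B j : ℂ) * MvPolynomial.X j
  have hl : ∀ q, MvPolynomial.eval (rc q) l = ((∑ j, B j * q j : ℝ) : ℂ) := by
    intro q; simp [l, rc]
  have hl0 : l ≠ 0 := by
    intro h0
    have := hl b
    rw [h0, F.Bb] at this
    simp at this
  have hf0 : f ≠ 0 := by
    intro h0
    have := S.lead
    rw [h0] at this
    exact fe_ne S (by simpa using this.symm)
  have : P * f * l = 0 := by
    refine MvPolynomial.funext_set (fun _ => Set.range Complex.ofReal)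
      (fun _ => Set.infinite_range_of_injective Complex.ofReal_injective) ?_
    intro x hx
    have : ∃ q : Fin 3 → ℝ, x = rc q := by
      choose q hq using fun i => hx i trivial
      exact ⟨q, funext fun i => (hq i).symm⟩
    obtain ⟨q, rfl⟩ := this
    simp only [map_mul, map_zero]
    by_cases h1 : ∑ j, B j * q j = 0
    · rw [hl, h1]; simp
    · by_cases h2 : MvPolynomial.eval (rc q) f = 0
      · rw [h2]; simp
      · rw [h q (good_of_B F q h1) h2]; simp
  simpa [hl0, hf0] using this

lemma exists_good (S : Setup d e f g fe) : ∃ q, Good e q ∧ MvPolynomial.eval (rc q) f ≠ 0 := by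
  by_contra hne
  push Not at hne
  have := poly_zero S 1 (fun q h1 h2 => absurd (hne q h1) h2)
  exact one_ne_zero this

end

noncomputable def lin {d : ℕ} (m : Fin 3 → Matrix (Fin d) (Fin d) ℂ) (P : Fin 3 → ℂ) :
    Matrix (Fin d) (Fin d) ℂ := ∑ k, P k • m k

lemma lin_apply {d : ℕ} (m : Fin 3 → Matrix (Fin d) (Fin d) ℂ) (P : Fin 3 → ℂ) (i j : Fin d) :
    lin m P i j = ∑ k, m k i j * P k := by
  simp [lin, Matrix.sum_apply, mul_comm]

lemma lin_pt {d : ℕ} (m : Fin 3 → Matrix (Fin d) (Fin d) ℂ) (e : Fin 3 → ℝ) (q : Fin 3 → ℂ) (t : ℂ) :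
    lin m (pt e q t) = t • lin m (rc e) + lin m q := by
  ext i j
  simp only [Matrix.add_apply, Matrix.smul_apply, lin_apply, pt, rc, Fin.sum_univ_three, smul_eq_mul]
  ring

lemma lin_herm {d : ℕ} {m : Fin 3 → Matrix (Fin d) (Fin d) ℂ} (hm : ∀ k, (m k).IsHermitian)
    (q : Fin 3 → ℝ) : (lin m (rc q)).IsHermitian := by
  ext i j
  simp only [Matrix.conjTranspose_apply, lin_apply, rc, star_sum, star_mul']
  refine Finset.sum_congr rfl fun k _ => ?_
  rw [← (hm k).apply i j]
  simp

/-- matrix data over a good point -/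
structure Data {d : ℕ} (e : Fin 3 → ℝ) (f : MvPolynomial (Fin 3) ℂ) (fe : ℝ)
    (a : Fin d → MvPolynomial (Fin 3) ℂ) (i0 : Fin d)
    (m : Fin 3 → Matrix (Fin d) (Fin d) ℂ) (q : Fin 3 → ℝ)
    (τ : Fin d → ℝ) (W : Matrix (Fin d) (Fin d) ℂ) (γ : Fin d → ℂ) : Prop where
  inj : Function.Injective τ
  one : ∀ k, W k i0 = 1
  hH : lin m (rc e) = W.conjTranspose * W
  hq : lin m (rc q) = - (W.conjTranspose * Matrix.diagonal (fun k => (τ k : ℂ)) * W)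
  fprod : MvPolynomial.eval (rc q) f = fe * ∏ k, (-(τ k : ℂ))
  γne : ∀ k, γ k ≠ 0
  aW : ∀ k j, MvPolynomial.eval (pt e (rc q) (τ k)) (a j) = γ k * W k j
  fz : ∀ k, MvPolynomial.eval (pt e (rc q) (τ k)) f = 0
  lag : MvPolynomial.eval (rc q) f ≠ 0 → ∀ j, MvPolynomial.eval (rc q) (a j) =
    - MvPolynomial.eval (rc q) f * ∑ k, (τ k : ℂ)⁻¹ * W k j

section
variable {d : ℕ} {e : Fin 3 → ℝ} {f g : MvPolynomial (Fin 3) ℂ} {fe : ℝ}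
  {a : Fin d → MvPolynomial (Fin 3) ℂ} {i0 : Fin d}

lemma eval_conj (q : Fin 3 → ℝ) (r : MvPolynomial (Fin 3) ℂ) :
    MvPolynomial.eval (rc q) (MvPolynomial.map (starRingEnd ℂ) r) =
      star (MvPolynomial.eval (rc q) r) := by
  rw [MvPolynomial.eval_map, ← MvPolynomial.eval₂_id, ← starRingEnd_apply,
    MvPolynomial.hom_eval₂]
  congr 1
  funext i; simp [rc]

lemma lin_zero (S : Setup d e f g fe) (x : Fin 3 → ℂ)
    (h : ∀ q, Good e q → MvPolynomial.eval (rc q) f ≠ 0 → ∑ k, x k * (q k : ℂ) = 0) : x = 0 := by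
  have := poly_zero S (∑ k, MvPolynomial.C (x k) * MvPolynomial.X k) (by
    intro q h1 h2
    rw [← h q h1 h2]
    simp [rc])
  funext k
  have := congrArg (MvPolynomial.eval (Pi.single k 1)) this
  simpa [Pi.single_apply] using this

lemma core (S : Setup d e f g fe) (hahom : ∀ i, (a i).IsHomogeneous (d - 1)) (ha0 : a i0 = g)
    (hv : ∀ i j, ∀ P : Fin 3 → ℂ, MvPolynomial.eval P f = 0 → MvPolynomial.eval P g = 0 →
      MvPolynomial.eval P (MvPolynomial.map (starRingEnd ℂ) (a i) * a j) = 0) :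
    ∃ m : Fin 3 → Matrix (Fin d) (Fin d) ℂ, (∀ k, (m k).IsHermitian) ∧
      ∀ q, Good e q → ∃ τ W γ, Data e f fe a i0 m q τ W γ := by
  have hhom : ∀ i j, (MvPolynomial.map (starRingEnd ℂ) (a i) * a j).IsHomogeneous
      ((d - 1) + (d - 1)) := fun i j => ((hahom i).map _).mul (hahom j)
  choose m hm using fun i j => linear_form S (hhom i j) (hv i j)
  let M : Fin 3 → Matrix (Fin d) (Fin d) ℂ := fun k => Matrix.of fun i j => m i j k
  have data : ∀ q, Good e q → ∃ τ W γ, Data e f fe a i0 M q τ W γ := by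
    intro q hq
    let E : Fin d ≃ Z e f q := (Fintype.equivFinOfCardEq (by simp [Z_card S hq])).symm
    let τ : Fin d → ℝ := fun k => (E k : ℂ).re
    have hτ : ∀ k, (τ k : ℂ) = E k := fun k => Z_real S (E k).2
    let γ : Fin d → ℂ := fun k => MvPolynomial.eval (pt e (rc q) (τ k)) g
    have hγ : ∀ k, γ k ≠ 0 := fun k => by
      have := g_ne S hq (E k).2
      rw [← hτ] at this; exact this
    let W : Matrix (Fin d) (Fin d) ℂ := Matrix.of fun k j =>
      MvPolynomial.eval (pt e (rc q) (τ k)) (a j) / γ k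
    have hsum : ∀ φ : ℂ → ℂ, ∑ t ∈ Z e f q, φ t = ∑ k, φ (τ k) := by
      intro φ
      rw [← Finset.sum_coe_sort, ← Equiv.sum_comp E]
      exact Finset.sum_congr rfl fun k _ => by rw [hτ]
    have hγr : ∀ k, star (γ k) = γ k := by
      intro k
      have h1 : MvPolynomial.map (starRingEnd ℂ) g = g := S.gconj
      simp only [γ]
      rw [pt_real, ← eval_conj, h1]
    have hPhi : ∀ n i j, Phi e f g n (MvPolynomial.map (starRingEnd ℂ) (a i) * a j) q =
        ∑ k, star (W k i) * (τ k : ℂ) ^ n * W k j := by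
      intro n i j
      rw [Phi, hsum]
      refine Finset.sum_congr rfl fun k _ => ?_
      rw [map_mul]
      simp only [W, Matrix.of_apply]
      rw [star_div₀, hγr, pt_real, eval_conj]
      have : MvPolynomial.eval (rc fun i => τ k * e i + q i) g = γ k := by
        simp only [γ]; rw [pt_real]
      rw [this]
      have := hγ k
      field_simp
    refine ⟨τ, W, γ, ?_, ?_, ?_, ?_, ?_, hγ, ?_, ?_, ?_⟩
    · intro k k' h
      apply E.injective
      apply Subtype.ext
      rw [← hτ, ← hτ, h]
    · intro k
      simp only [W, Matrix.of_apply, ha0]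
      exact div_self (hγ k)
    · ext i j
      have := ((hm i j) q hq).1
      rw [hPhi] at this
      rw [lin_apply]
      simp only [M, Matrix.of_apply, rc]
      rw [← this]
      simp [Matrix.mul_apply]
    · ext i j
      have := ((hm i j) q hq).2
      rw [hPhi] at this
      rw [lin_apply]
      simp only [M, Matrix.of_apply, rc]
      have h2 : ∑ k, m i j k * (q k : ℂ) = - ∑ k, star (W k i) * (τ k : ℂ) ^ 1 * W k j := by
        rw [this, neg_neg]
      rw [h2, Matrix.neg_apply, Matrix.mul_apply]
      simp [Matrix.mul_diagonal]
    · rw [f_prod S hq, ← Finset.prod_coe_sort, ← Equiv.prod_comp E]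
      congr 1
      exact Finset.prod_congr rfl fun k _ => by rw [hτ]
    · intro k j
      simp only [W, Matrix.of_apply]
      rw [mul_div_cancel₀ _ (hγ k)]
    · intro k
      rw [hτ]
      exact (mem_Z S q _).mp (E k).2
    · intro hf j
      rw [lag2 S hq hf _ (hahom j), hsum]
      congr 1
      refine Finset.sum_congr rfl fun k _ => ?_
      simp only [W, Matrix.of_apply, γ]
      rw [← div_eq_inv_mul, div_div]
  refine ⟨M, ?_, data⟩
  have : ∀ i j, (fun k => star (m j i k) - m i j k) = 0 := by
    intro i j
    apply lin_zero S
    intro q hq _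
    obtain ⟨τ, W, γ, D⟩ := data q hq
    have h1 : (lin M (rc q)).IsHermitian := by
      rw [D.hq]
      apply Matrix.IsHermitian.neg
      apply Matrix.isHermitian_conjTranspose_mul_mul
      rw [Matrix.isHermitian_diagonal_iff]
      intro k
      simp [isSelfAdjoint_iff]
    have h2 := h1.apply i j
    rw [lin_apply, lin_apply, star_sum] at h2
    simp only [sub_mul, Finset.sum_sub_distrib]
    rw [sub_eq_zero]
    have e1 : ∑ k, star (m j i k) * (q k : ℂ) = ∑ k, star (M k j i * rc q k) :=
      Finset.sum_congr rfl fun k _ => by simp [M, rc]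
    rw [e1, h2]
    rfl
  intro k
  ext i j
  have := congrFun (this i j) k
  simpa [M, sub_eq_zero] using this

end

open Matrix in
lemma uniq_mat {d : ℕ} {W A B : Matrix (Fin d) (Fin d) ℂ} {τ : Fin d → ℝ}
    (hinj : Function.Injective τ) (hW : W.det ≠ 0) (hA : A.IsHermitian) (hB : B.IsHermitian)
    (h1 : ∀ k j, ∑ i, W k i * ((τ k : ℂ) * A i j + B i j) = 0)
    (h2 : ∀ k, (τ k : ℂ) ≠ 0)
    (h3 : ∀ j, ∑ i, (∑ k, (τ k : ℂ)⁻¹ * W k i) * B i j = 0) : A = 0 := by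
  set X : Matrix (Fin d) (Fin d) ℂ := Matrix.diagonal fun k => (τ k : ℂ) with hX
  have e1 : X * (W * A) = - (W * B) := by
    ext k j
    rw [hX, Matrix.diagonal_mul, Matrix.neg_apply, eq_neg_iff_add_eq_zero, Matrix.mul_apply,
      Matrix.mul_apply, ← h1 k j, Finset.mul_sum, ← Finset.sum_add_distrib]
    exact Finset.sum_congr rfl fun i _ => by ring
  have e2 : ∀ j, ∑ k, (W * A) k j = 0 := by
    intro j
    have : ∀ k, (W * A) k j = - ((τ k : ℂ)⁻¹ * (W * B) k j) := by
      intro k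
      have := congrFun (congrFun e1 k) j
      rw [hX, Matrix.diagonal_mul, Matrix.neg_apply] at this
      have h := h2 k
      field_simp
      linear_combination this
    rw [Finset.sum_congr rfl fun k _ => this k, Finset.sum_neg_distrib, neg_eq_zero, ← h3 j]
    simp only [Matrix.mul_apply, Finset.sum_mul, Finset.mul_sum]
    rw [Finset.sum_comm]
    simp only [mul_assoc]
  set E := W * A * Wᴴ with hE
  have hEh : E.IsHermitian := Matrix.isHermitian_mul_mul_conjTranspose W hA
  have hXE : X * E = - (W * B * Wᴴ) := by
    rw [hE, ← Matrix.mul_assoc, e1, Matrix.neg_mul]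
  have hXEh : (X * E).IsHermitian := by
    rw [hXE]
    exact (Matrix.isHermitian_mul_mul_conjTranspose W hB).neg
  have off : ∀ k l, k ≠ l → E k l = 0 := by
    intro k l hkl
    have a1 := hXEh.apply k l
    have a2 := hEh.apply k l
    rw [hX, Matrix.diagonal_mul, Matrix.diagonal_mul, star_mul', a2] at a1
    have a3 : star (τ l : ℂ) = τ l := by simp
    rw [a3] at a1
    have a4 : ((τ l : ℂ) - τ k) * E k l = 0 := by linear_combination a1
    rcases mul_eq_zero.mp a4 with h | h
    · exfalso
      apply hkl
      apply hinj
      rw [sub_eq_zero] at h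
      exact_mod_cast h.symm
    · exact h
  have hcol : ∀ l, ∑ k, E k l = 0 := by
    intro l
    simp only [hE]
    simp only [Matrix.mul_apply (M := W * A)]
    rw [Finset.sum_comm]
    simp only [← Finset.sum_mul, e2, zero_mul, Finset.sum_const_zero]
  have hE0 : E = 0 := by
    ext k l
    by_cases h : k = l
    · subst h
      have := hcol k
      rw [Finset.sum_eq_single k (fun b _ hb => off b k hb) (by simp)] at this
      exact this
    · exact off k l h
  have u1 : IsUnit W.det := isUnit_iff_ne_zero.mpr hW
  have u2 : IsUnit Wᴴ.det := by
    rw [Matrix.det_conjTranspose]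
    exact isUnit_iff_ne_zero.mpr (star_ne_zero.mpr hW)
  calc A = W⁻¹ * (W * A * Wᴴ) * Wᴴ⁻¹ := by
        rw [Matrix.mul_assoc W A, Matrix.nonsing_inv_mul_cancel_left _ _ u1,
          Matrix.mul_nonsing_inv_cancel_right _ _ u2]
    _ = 0 := by rw [← hE, hE0]; simp

section
variable {d : ℕ} {e : Fin 3 → ℝ} {f g : MvPolynomial (Fin 3) ℂ} {fe : ℝ}
  {a : Fin d → MvPolynomial (Fin 3) ℂ} {i0 : Fin d} {m : Fin 3 → Matrix (Fin d) (Fin d) ℂ}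

lemma H_det (S : Setup d e f g fe) (hi : LinearIndependent ℂ a)
    (hdat : ∀ q, Good e q → ∃ τ W γ, Data e f fe a i0 m q τ W γ) : (lin m (rc e)).det ≠ 0 := by
  intro h0
  obtain ⟨v, hv0, hv⟩ := Matrix.exists_mulVec_eq_zero_iff.mpr h0
  apply hv0
  have u : ∑ j, v j • a j = 0 := by
    apply poly_zero S
    intro q hq hf
    obtain ⟨τ, W, γ, D⟩ := hdat q hq
    rw [D.hH, Matrix.conjTranspose_mul_self_mulVec_eq_zero] at hv
    rw [map_sum]
    simp only [MvPolynomial.smul_eval, D.lag hf]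
    have : ∀ k, ∑ j, W k j * v j = 0 := fun k => congrFun hv k
    calc ∑ j, v j * (- MvPolynomial.eval (rc q) f * ∑ k, (τ k : ℂ)⁻¹ * W k j)
        = ∑ j, ∑ k, (- MvPolynomial.eval (rc q) f * (τ k : ℂ)⁻¹) * (W k j * v j) := by
          refine Finset.sum_congr rfl fun j _ => ?_
          rw [Finset.mul_sum, Finset.mul_sum]
          exact Finset.sum_congr rfl fun k _ => by ring
      _ = 0 := by
          rw [Finset.sum_comm]
          simp only [← Finset.mul_sum, this, mul_zero, Finset.sum_const_zero]
  funext j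
  exact Fintype.linearIndependent_iff.mp hi v u j

lemma W_det {q : Fin 3 → ℝ} {τ W γ} (D : Data e f fe a i0 m q τ W γ)
    (hH : (lin m (rc e)).det ≠ 0) : W.det ≠ 0 := by
  intro h
  apply hH
  rw [D.hH, Matrix.det_mul, h, mul_zero]

lemma τ_ne {q : Fin 3 → ℝ} {τ W γ} (D : Data e f fe a i0 m q τ W γ)
    (hf : MvPolynomial.eval (rc q) f ≠ 0) (k : Fin d) : (τ k : ℂ) ≠ 0 := by
  intro h
  apply hf
  rw [D.fprod, Finset.prod_eq_zero (Finset.mem_univ k) (by rw [h, neg_zero]), mul_zero]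

lemma H_pos (S : Setup d e f g fe)
    (hdat : ∀ q, Good e q → ∃ τ W γ, Data e f fe a i0 m q τ W γ)
    (hH : (lin m (rc e)).det ≠ 0) : (lin m (rc e)).PosDef := by
  obtain ⟨q, hq, -⟩ := exists_good S
  obtain ⟨τ, W, γ, D⟩ := hdat q hq
  have hW := W_det D hH
  rw [D.hH]
  apply Matrix.PosDef.conjTranspose_mul_self
  rw [Matrix.mulVec_injective_iff_isUnit, Matrix.isUnit_iff_isUnit_det]
  exact isUnit_iff_ne_zero.mpr hW

/-- polynomial pencil -/
noncomputable def pen {d : ℕ} (N : Fin 3 → Matrix (Fin d) (Fin d) ℂ) :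
    Matrix (Fin d) (Fin d) (MvPolynomial (Fin 3) ℂ) := fun i j =>
  ∑ k, MvPolynomial.C (N k i j) * MvPolynomial.X k

lemma pen_eval (N : Fin 3 → Matrix (Fin d) (Fin d) ℂ) (P : Fin 3 → ℂ) (i j : Fin d) :
    MvPolynomial.eval P (pen N i j) = lin N P i j := by
  rw [lin_apply, pen]; simp

lemma pen_det (N : Fin 3 → Matrix (Fin d) (Fin d) ℂ) (P : Fin 3 → ℂ) :
    MvPolynomial.eval P (pen N).det = (lin N P).det := by
  rw [RingHom.map_det]
  congr 1
  ext i j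
  exact pen_eval N P i j

lemma lin_sandwich {A : Matrix (Fin d) (Fin d) ℂ} {N : Fin 3 → Matrix (Fin d) (Fin d) ℂ}
    (hN : ∀ k, N k = A * m k * A) (P : Fin 3 → ℂ) : lin N P = A * lin m P * A := by
  unfold lin
  rw [Finset.mul_sum, Finset.sum_mul]
  exact Finset.sum_congr rfl fun k _ => by rw [hN]; simp

open Matrix in
lemma sol_V {q : Fin 3 → ℝ} {τ W γ} (D : Data e f fe a i0 m q τ W γ)
    (hH : (lin m (rc e)).det ≠ 0) {N : Fin 3 → Matrix (Fin d) (Fin d) ℂ}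
    (hN : ∀ k, N k = (lin m (rc e))⁻¹ * m k * (lin m (rc e))⁻¹) :
    lin N (rc q) = - (W⁻¹ * Matrix.diagonal (fun k => (τ k : ℂ)) * (W⁻¹)ᴴ) := by
  have hW := W_det D hH
  have u1 : IsUnit W.det := isUnit_iff_ne_zero.mpr hW
  have u2 : IsUnit Wᴴ.det := by
    rw [Matrix.det_conjTranspose]
    exact isUnit_iff_ne_zero.mpr (star_ne_zero.mpr hW)
  have h1 : lin N (rc q) = (lin m (rc e))⁻¹ * lin m (rc q) * (lin m (rc e))⁻¹ := by
    exact lin_sandwich hN _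
  rw [h1, D.hH, D.hq, Matrix.mul_inv_rev, Matrix.conjTranspose_nonsing_inv]
  simp only [Matrix.mul_neg, Matrix.neg_mul, Matrix.mul_assoc]
  rw [Matrix.mul_nonsing_inv_cancel_left _ _ u1, Matrix.nonsing_inv_mul_cancel_left _ _ u2]

open Matrix in
lemma sol_eq {q : Fin 3 → ℝ} {τ W γ} (D : Data e f fe a i0 m q τ W γ)
    (hH : (lin m (rc e)).det ≠ 0) {N : Fin 3 → Matrix (Fin d) (Fin d) ℂ}
    (hN : ∀ k, N k = (lin m (rc e))⁻¹ * m k * (lin m (rc e))⁻¹)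
    (hf : MvPolynomial.eval (rc q) f ≠ 0) (j : Fin d) :
    ∑ i, MvPolynomial.eval (rc q) (a i) * lin N (rc q) i j =
      if j = i0 then MvPolynomial.eval (rc q) f else 0 := by
  have hW := W_det D hH
  have u1 : IsUnit W.det := isUnit_iff_ne_zero.mpr hW
  have hone : W *ᵥ Pi.single i0 1 = fun _ => 1 := by
    funext k
    simp [D.one]
  have hV1 : W⁻¹ *ᵥ (fun _ => (1 : ℂ)) = Pi.single i0 1 := by
    rw [← hone, Matrix.mulVec_mulVec, Matrix.nonsing_inv_mul _ u1, Matrix.one_mulVec]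
  have hV : (fun _ => (1 : ℂ)) ᵥ* (W⁻¹)ᴴ = Pi.single i0 1 := by
    have := congrArg star hV1
    rw [Matrix.star_mulVec] at this
    convert this using 1
    · congr 1
      funext k; simp
    · funext k
      by_cases h : k = i0
      · subst h; simp
      · simp [h]
  have ha : (fun i => MvPolynomial.eval (rc q) (a i)) =
      (- MvPolynomial.eval (rc q) f) • ((fun k => (τ k : ℂ)⁻¹) ᵥ* W) := by
    funext i
    rw [D.lag hf]
    rfl
  have : (fun i => MvPolynomial.eval (rc q) (a i)) ᵥ* lin N (rc q) =
      MvPolynomial.eval (rc q) f • Pi.single i0 1 := by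
    rw [ha, sol_V D hH hN, Matrix.vecMul_neg, Matrix.smul_vecMul, neg_smul, neg_neg,
      Matrix.vecMul_vecMul, ← Matrix.mul_assoc, ← Matrix.mul_assoc, Matrix.mul_nonsing_inv _ u1,
      Matrix.one_mul, ← Matrix.vecMul_vecMul, ← hV]
    congr 2
    funext k
    rw [Matrix.vecMul_diagonal, inv_mul_cancel₀ (τ_ne D hf k)]
  have h2 := congrFun this j
  have h3 : ((fun i => MvPolynomial.eval (rc q) (a i)) ᵥ* lin N (rc q)) j =
    ∑ i, MvPolynomial.eval (rc q) (a i) * lin N (rc q) i j := rfl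
  rw [← h3, h2]
  by_cases h : j = i0
  · subst h; simp
  · simp [h]

def Sol (a : Fin d → MvPolynomial (Fin 3) ℂ) (f : MvPolynomial (Fin 3) ℂ) (i0 : Fin d)
    (N : Fin 3 → Matrix (Fin d) (Fin d) ℂ) : Prop :=
  (∀ k, (N k).IsHermitian) ∧ ∀ j, ∑ i, a i * pen N i j = if j = i0 then f else 0

lemma main (S : Setup d e f g fe) (hahom : ∀ i, (a i).IsHomogeneous (d - 1)) (ha0 : a i0 = g)
    (hi : LinearIndependent ℂ a)
    (hv : ∀ i j, ∀ P : Fin 3 → ℂ, MvPolynomial.eval P f = 0 → MvPolynomial.eval P g = 0 →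
      MvPolynomial.eval P (MvPolynomial.map (starRingEnd ℂ) (a i) * a j) = 0) :
    ∃ N, Sol a f i0 N ∧ (∃ c : ℝ, 0 < c ∧ f = MvPolynomial.C (c : ℂ) * (pen N).det) ∧
      (lin N (rc e)).PosDef ∧ ∀ N', Sol a f i0 N' → N' = N := by
  obtain ⟨m, hm, hdat⟩ := core S hahom ha0 hv
  have hH := H_det S hi hdat
  have hpos := H_pos S hdat hH
  have uH : IsUnit (lin m (rc e)).det := isUnit_iff_ne_zero.mpr hH
  let N : Fin 3 → Matrix (Fin d) (Fin d) ℂ := fun k =>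
    (lin m (rc e))⁻¹ * m k * (lin m (rc e))⁻¹
  have hN : ∀ k, N k = (lin m (rc e))⁻¹ * m k * (lin m (rc e))⁻¹ := fun k => rfl
  have hNh : ∀ k, (N k).IsHermitian := by
    intro k
    have := Matrix.isHermitian_conjTranspose_mul_mul (lin m (rc e))⁻¹ (hm k)
    rwa [hpos.isHermitian.inv.eq] at this
  have hsol : Sol a f i0 N := by
    refine ⟨hNh, fun j => ?_⟩
    rw [← sub_eq_zero]
    apply poly_zero S
    intro q hq hf
    obtain ⟨τ, W, γ, D⟩ := hdat q hq
    have := sol_eq D hH hN hf j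
    rw [map_sub, map_sum, sub_eq_zero]
    simp only [map_mul, pen_eval]
    rw [this]
    split_ifs <;> simp
  refine ⟨N, hsol, ?_, ?_, ?_⟩
  · obtain ⟨q0, hq0, -⟩ := exists_good S
    obtain ⟨τ0, W0, γ0, D0⟩ := hdat q0 hq0
    have hdetH : (lin m (rc e)).det = (Complex.normSq W0.det : ℂ) := by
      rw [D0.hH, Matrix.det_mul, Matrix.det_conjTranspose, Complex.normSq_eq_conj_mul_self]
      rfl
    refine ⟨fe * Complex.normSq W0.det,
      mul_pos S.pos (Complex.normSq_pos.mpr (W_det D0 hH)), ?_⟩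
    rw [← sub_eq_zero]
    apply poly_zero S
    intro q hq hf
    obtain ⟨τ, W, γ, D⟩ := hdat q hq
    rw [map_sub, map_mul, pen_det, sub_eq_zero, MvPolynomial.eval_C, Complex.ofReal_mul,
      ← hdetH, D.hH, sol_V D hH hN, ← Matrix.neg_mul, ← Matrix.mul_neg, Matrix.diagonal_neg,
      Matrix.det_mul, Matrix.det_mul, Matrix.det_mul, Matrix.det_diagonal, D.fprod,
      Matrix.det_conjTranspose, Matrix.det_conjTranspose, Matrix.det_nonsing_inv,
      Ring.inverse_eq_inv', star_inv₀]
    have h1 := W_det D hH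
    have h2 : star W.det ≠ 0 := star_ne_zero.mpr h1
    field_simp
  · have : lin N (rc e) = (lin m (rc e))⁻¹ := by
      have h1 : lin N (rc e) = (lin m (rc e))⁻¹ * lin m (rc e) * (lin m (rc e))⁻¹ := by
        exact lin_sandwich hN _
      rw [h1, Matrix.nonsing_inv_mul _ uH, Matrix.one_mul]
    rw [this]
    exact hpos.inv
  · intro N' hN'
    let Δ : Fin 3 → Matrix (Fin d) (Fin d) ℂ := fun k => N' k - N k
    have hΔh : ∀ k, (Δ k).IsHermitian := fun k => (hN'.1 k).sub (hNh k)
    have hΔ : ∀ P j, ∑ i, MvPolynomial.eval P (a i) * lin Δ P i j = 0 := by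
      intro P j
      have h1 := congrArg (MvPolynomial.eval P) ((hN'.2 j).trans (hsol.2 j).symm)
      simp only [map_sum, map_mul, pen_eval] at h1
      have h2 : ∀ i, lin Δ P i j = lin N' P i j - lin N P i j := by
        intro i
        simp only [lin_apply, Δ, Matrix.sub_apply, sub_mul, Finset.sum_sub_distrib]
      simp only [h2, mul_sub, Finset.sum_sub_distrib]
      rw [h1, sub_self]
    have hz : ∀ q, Good e q → MvPolynomial.eval (rc q) f ≠ 0 → lin Δ (rc q) = 0 := by
      intro q hq hf
      obtain ⟨τ, W, γ, D⟩ := hdat q hq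
      have hW := W_det D hH
      have r1 : ∀ k j, ∑ i, W k i * ((τ k : ℂ) * lin Δ (rc e) i j + lin Δ (rc q) i j) = 0 := by
        intro k j
        have := hΔ (pt e (rc q) (τ k)) j
        rw [lin_pt] at this
        simp only [D.aW, mul_assoc, ← Finset.mul_sum] at this
        exact (mul_eq_zero.mp this).resolve_left (D.γne k)
      have hA := uniq_mat D.inj hW (lin_herm hΔh e) (lin_herm hΔh q) r1 (τ_ne D hf) (by
        intro j
        have := hΔ (rc q) j
        simp only [D.lag hf, mul_assoc, ← Finset.mul_sum] at this
        exact (mul_eq_zero.mp this).resolve_left (neg_ne_zero.mpr hf))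
      have r2 : W * lin Δ (rc q) = 0 := by
        ext k j
        have := r1 k j
        simpa [hA, Matrix.mul_apply] using this
      have := congrArg (fun Y => W⁻¹ * Y) r2
      simpa [Matrix.nonsing_inv_mul_cancel_left _ _ (isUnit_iff_ne_zero.mpr hW)] using this
    have hz2 : ∀ i j, (fun k => Δ k i j) = 0 := by
      intro i j
      apply lin_zero S
      intro q hq hf
      have := congrFun (congrFun (hz q hq hf) i) j
      rw [lin_apply] at this
      exact this
    funext k
    ext i j
    have := congrFun (hz2 i j) k
    exact sub_eq_zero.mp this

end

end HDR

/-- Theorem 1 of the paper. Let `f ∈ ℝ[x,y,z]` be homogeneous of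
degree `d`, hyperbolic with respect to `e` with `f(e) > 0`, with smooth complex projective
curve, let `g = D_e f` be the directional derivative, suppose `f` and `g` intersect
transversally, split the common zeros as `S ∪ conj S`, and let `a` be a basis of the
space of degree-`d-1` forms vanishing on `S` with `a₁ = g`. Then the linear system
`a ⬝ M = (f,0,…,0)`, `M ⬝ āᵀ = (f,0,…,0)ᵀ` has a unique Hermitian solution
`M = x M₁ + y M₂ + z M₃`, and this solution satisfies `f = c • det M` with `c > 0` and
`e₁M₁ + e₂M₂ + e₃M₃` positive definite. -/
theorem hermitian_determinantal_representation_algorithm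
    {d : ℕ} (hd : 0 < d)
    (f : MvPolynomial (Fin 3) ℝ) (e : Fin 3 → ℝ)
    (hfhom : f.IsHomogeneous d)
    (hhyp : IsHyperbolic f e) (hfe : 0 < MvPolynomial.eval e f)
    (hsmooth : ∀ p : Fin 3 → ℂ, p ≠ 0 →
      ¬ (MvPolynomial.eval p (complexify f) = 0 ∧
         ∀ i, MvPolynomial.eval p (MvPolynomial.pderiv i (complexify f)) = 0))
    (g : MvPolynomial (Fin 3) ℝ)
    (hg : g = e 0 • MvPolynomial.pderiv 0 f + e 1 • MvPolynomial.pderiv 1 f +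
      e 2 • MvPolynomial.pderiv 2 f)
    (htrans : ∀ p : Fin 3 → ℂ, p ≠ 0 →
      MvPolynomial.eval p (complexify f) = 0 →
      MvPolynomial.eval p (complexify g) = 0 →
      LinearIndependent ℂ
        ![fun i => MvPolynomial.eval p (MvPolynomial.pderiv i (complexify f)),
          fun i => MvPolynomial.eval p (MvPolynomial.pderiv i (complexify g))])
    (S : Set (Fin 3 → ℂ))
    (hS : ∀ s ∈ S, s ≠ 0 ∧ MvPolynomial.eval s (complexify f) = 0 ∧
      MvPolynomial.eval s (complexify g) = 0)
    (hSsplit : ∀ q : Fin 3 → ℂ, q ≠ 0 →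
      MvPolynomial.eval q (complexify f) = 0 →
      MvPolynomial.eval q (complexify g) = 0 →
      ∃! s, s ∈ S ∪ conjPt '' S ∧ ∃ lam : ℂ, lam ≠ 0 ∧ q = lam • s)
    (hSconj : ∀ s ∈ S, ∀ s' ∈ S, ∀ lam : ℂ, lam ≠ 0 → s ≠ lam • conjPt s')
    (a : Fin d → MvPolynomial (Fin 3) ℂ)
    (ha1 : a ⟨0, hd⟩ = complexify g)
    (hahom : ∀ i, (a i).IsHomogeneous (d - 1))
    (havan : ∀ i, ∀ s ∈ S, MvPolynomial.eval s (a i) = 0)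
    (haindep : LinearIndependent ℂ a)
    (haspan : ∀ h : MvPolynomial (Fin 3) ℂ, h.IsHomogeneous (d - 1) →
      (∀ s ∈ S, MvPolynomial.eval s h = 0) → h ∈ Submodule.span ℂ (Set.range a)) :
    (∃! T : Matrix (Fin d) (Fin d) ℂ × Matrix (Fin d) (Fin d) ℂ ×
        Matrix (Fin d) (Fin d) ℂ,
      T.1.IsHermitian ∧ T.2.1.IsHermitian ∧ T.2.2.IsHermitian ∧
      (∀ j, ∑ i, a i * pencil T.1 T.2.1 T.2.2 i j =
        if j = ⟨0, hd⟩ then complexify f else 0) ∧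
      (∀ i, ∑ j, pencil T.1 T.2.1 T.2.2 i j * MvPolynomial.map (starRingEnd ℂ) (a j) =
        if i = ⟨0, hd⟩ then complexify f else 0)) ∧
    ∀ T : Matrix (Fin d) (Fin d) ℂ × Matrix (Fin d) (Fin d) ℂ ×
        Matrix (Fin d) (Fin d) ℂ,
      T.1.IsHermitian → T.2.1.IsHermitian → T.2.2.IsHermitian →
      (∀ j, ∑ i, a i * pencil T.1 T.2.1 T.2.2 i j =
        if j = ⟨0, hd⟩ then complexify f else 0) →
      (∀ i, ∑ j, pencil T.1 T.2.1 T.2.2 i j * MvPolynomial.map (starRingEnd ℂ) (a j) =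
        if i = ⟨0, hd⟩ then complexify f else 0) →
      (∃ c : ℝ, 0 < c ∧
        complexify f = MvPolynomial.C (c : ℂ) * (pencil T.1 T.2.1 T.2.2).det) ∧
      ((e 0 : ℂ) • T.1 + (e 1 : ℂ) • T.2.1 + (e 2 : ℂ) • T.2.2).PosDef := by
  have heval : ∀ (r : MvPolynomial (Fin 3) ℝ) (q : Fin 3 → ℝ),
      MvPolynomial.eval (fun i => (q i : ℂ)) (complexify r) = (MvPolynomial.eval q r : ℝ) := by
    intro r q
    rw [complexify, MvPolynomial.eval_map, ← MvPolynomial.eval₂_id (g := q)]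
    change _ = Complex.ofRealHom _
    rw [MvPolynomial.hom_eval₂]
    rfl
  have hcc : ∀ r : MvPolynomial (Fin 3) ℝ,
      MvPolynomial.map (starRingEnd ℂ) (complexify r) = complexify r := by
    intro r
    rw [complexify, MvPolynomial.map_map]
    congr 1
    congr 1
    ext x
    simp
  have hconj : ∀ (r : MvPolynomial (Fin 3) ℂ) (P : Fin 3 → ℂ),
      MvPolynomial.eval (conjPt P) (MvPolynomial.map (starRingEnd ℂ) r) =
        star (MvPolynomial.eval P r) := by
    intro r P
    rw [MvPolynomial.eval_map, ← MvPolynomial.eval₂_id (g := P), ← starRingEnd_apply,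
      MvPolynomial.hom_eval₂]
    rfl
  have hsm : ∀ {n : ℕ} {r : MvPolynomial (Fin 3) ℂ}, r.IsHomogeneous n → ∀ (l : ℂ) (P : Fin 3 → ℂ),
      MvPolynomial.eval (l • P) r = l ^ n * MvPolynomial.eval P r :=
    fun hr l P => HDR.hom_smul hr l P
  have hgc : complexify g = ∑ i, MvPolynomial.C (e i : ℂ) *
      MvPolynomial.pderiv i (complexify f) := by
    rw [hg, Fin.sum_univ_three]
    simp only [complexify, map_add, MvPolynomial.smul_eq_C_mul, map_mul, MvPolynomial.map_C,
      MvPolynomial.pderiv_map]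
    rfl
  have hfch : (complexify f).IsHomogeneous d := hfhom.map _
  have hgch : (complexify g).IsHomogeneous (d - 1) := by
    rw [hgc]
    apply MvPolynomial.IsHomogeneous.sum
    intro i _
    have := (MvPolynomial.isHomogeneous_C (Fin 3) (e i : ℂ)).mul (hfch.pderiv (i := i))
    rwa [zero_add] at this
  have hSet : HDR.Setup d e (complexify f) (complexify g) (MvPolynomial.eval e f) :=
    { hd := hd
      fhom := hfch
      ghom := hgch
      lead := heval f e
      pos := hfe
      gdef := by
        intro P
        rw [hgc]
        simp
      hreal := fun q t h => hhyp.2 q t h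
      noreal := by
        intro q hq h1 h2
        have hq0 : (fun i => (q i : ℂ)) ≠ 0 := by
          intro h
          apply hq
          funext i
          have := congrFun h i
          simpa using this
        have hqc : conjPt (fun i => (q i : ℂ)) = fun i => (q i : ℂ) := by
          funext i
          simp [conjPt]
        have key : ∀ s ∈ S, ∀ lam : ℂ, lam ≠ 0 → (fun i => (q i : ℂ)) ≠ lam • s := by
          intro s hs lam hl h
          have h3 : (fun i => (q i : ℂ)) = star lam • conjPt s := by
            rw [← hqc, h]
            funext i
            simp [conjPt]
          apply hSconj s hs s hs (lam⁻¹ * star lam)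
            (mul_ne_zero (inv_ne_zero hl) (star_ne_zero.mpr hl))
          rw [mul_smul, ← h3, h, smul_smul, inv_mul_cancel₀ hl, one_smul]
        obtain ⟨s, ⟨hs, lam, hl, h⟩, -⟩ := hSsplit _ hq0 h1 h2
        rcases hs with hs | ⟨s', hs, rfl⟩
        · exact key s hs lam hl h
        · refine key s' hs (star lam) (star_ne_zero.mpr hl) ?_
          rw [← hqc, h]
          funext i
          simp [conjPt]
      gconj := hcc g
      trans := htrans }
  have hv : ∀ i j, ∀ P : Fin 3 → ℂ, MvPolynomial.eval P (complexify f) = 0 →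
      MvPolynomial.eval P (complexify g) = 0 →
      MvPolynomial.eval P (MvPolynomial.map (starRingEnd ℂ) (a i) * a j) = 0 := by
    intro i j P h1 h2
    rw [map_mul]
    by_cases hP : P = 0
    · subst hP
      have hge : MvPolynomial.eval (fun i => (e i : ℂ)) (complexify g) ≠ 0 := by
        have := hfch.sum_X_mul_pderiv
        have := congrArg (MvPolynomial.eval (fun i => (e i : ℂ))) this
        have h3 : MvPolynomial.eval (fun i => (e i : ℂ)) (complexify g) =
            d * (MvPolynomial.eval e f : ℝ) := by
          rw [hgc, ← heval]
          simpa using this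
        rw [h3]
        refine mul_ne_zero (by exact_mod_cast hd.ne') (by exact_mod_cast hfe.ne')
      rcases Nat.eq_zero_or_pos (d - 1) with h0 | h0
      · exfalso
        have h4 := hsm hgch 0 (fun i => (e i : ℂ))
        rw [zero_smul, h2, h0, pow_zero, one_mul] at h4
        exact hge h4.symm
      · have h4 := hsm (hahom j) 0 0
        rw [zero_smul, zero_pow h0.ne', zero_mul] at h4
        rw [h4, mul_zero]
    · obtain ⟨s, ⟨hs, lam, hl, h⟩, -⟩ := hSsplit P hP h1 h2
      rcases hs with hs | ⟨s', hs, rfl⟩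
      · rw [h, hsm (hahom j), havan j s hs, mul_zero, mul_zero]
      · rw [h, hsm ((hahom i).map _), hconj, havan i s' hs, star_zero, mul_zero, zero_mul]
  obtain ⟨N, hsol, ⟨c, hc, hdet⟩, hpos, huniq⟩ := HDR.main hSet hahom ha1 haindep hv
  have hpen : ∀ A B C : Matrix (Fin d) (Fin d) ℂ, pencil A B C = HDR.pen ![A, B, C] := by
    intro A B C
    funext i j
    unfold pencil HDR.pen
    rw [Fin.sum_univ_three, mul_comm (MvPolynomial.X 0), mul_comm (MvPolynomial.X 1),
      mul_comm (MvPolynomial.X 2)]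
    rfl
  have hSolT : ∀ T : Matrix (Fin d) (Fin d) ℂ × Matrix (Fin d) (Fin d) ℂ ×
        Matrix (Fin d) (Fin d) ℂ,
      T.1.IsHermitian → T.2.1.IsHermitian → T.2.2.IsHermitian →
      (∀ j, ∑ i, a i * pencil T.1 T.2.1 T.2.2 i j =
        if j = ⟨0, hd⟩ then complexify f else 0) → ![T.1, T.2.1, T.2.2] = N := by
    intro T h1 h2 h3 h4
    apply huniq
    refine ⟨?_, ?_⟩
    · intro k
      fin_cases k
      · exact h1
      · exact h2
      · exact h3
    · rw [← hpen]
      exact h4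
  have hN3 : ![N 0, N 1, N 2] = N := by
    funext k
    fin_cases k <;> rfl
  refine ⟨⟨(N 0, N 1, N 2), ⟨hsol.1 0, hsol.1 1, hsol.1 2, ?_, ?_⟩, ?_⟩, ?_⟩
  · intro j
    simp only [hpen, hN3]
    exact hsol.2 j
  · intro i
    simp only [hpen, hN3]
    have h1 := congrArg (MvPolynomial.map (starRingEnd ℂ)) (hsol.2 i)
    have h2 : ∀ k l, MvPolynomial.map (starRingEnd ℂ) (HDR.pen N k l) = HDR.pen N l k := by
      intro k l
      simp only [HDR.pen, map_sum, map_mul, MvPolynomial.map_C, MvPolynomial.map_X]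
      refine Finset.sum_congr rfl fun x _ => ?_
      rw [← (hsol.1 x).apply l k]
      rfl
    simp only [map_sum, map_mul, h2] at h1
    calc _ = ∑ j, MvPolynomial.map (starRingEnd ℂ) (a j) * HDR.pen N i j :=
          Finset.sum_congr rfl fun _ _ => mul_comm _ _
      _ = _ := h1
      _ = _ := by
        split_ifs
        · exact hcc f
        · simp
  · rintro T ⟨h1, h2, h3, h4, -⟩
    have h := hSolT T h1 h2 h3 h4
    have a0 := congrFun h 0
    have a1 := congrFun h 1
    have a2 := congrFun h 2
    exact Prod.ext a0 (Prod.ext a1 a2)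
  · intro T h1 h2 h3 h4 _
    have h := hSolT T h1 h2 h3 h4
    refine ⟨⟨c, hc, ?_⟩, ?_⟩
    · rw [hpen, h]
      exact hdet
    · have h5 : (e 0 : ℂ) • T.1 + (e 1 : ℂ) • T.2.1 + (e 2 : ℂ) • T.2.2 =
          HDR.lin N (HDR.rc e) := by
        rw [← h, HDR.lin, Fin.sum_univ_three]
        rfl
      rw [h5]
      exact hpos
end

section
/- Let f ∈ ℝ[x,y,z] be homogeneous of degree d, hyperbolic with respect to a point e ∈ ℝ³ with f(e) > 0, and suppose f and its gradient have no common zero in ℂ³ ∖ {0}. Let g ∈ ℝ[x,y,z] be homogeneous of degree d−1 with g(e) > 0 such that g interlaces f with respect to e, and suppose f and g intersect transversally, i.e., at every common zero p ∈ ℂ³ ∖ {0} of f and g the gradients ∇f(p) and ∇g(p) are linearly independent. Let S ⊆ ℂ³ ∖ {0} be a set of common zeros of f and g such that every common zero of f and g in ℂ³ ∖ {0} is a nonzero scalar multiple of exactly one element of S ∪ conj(S), and no element of S is a nonzero scalar multiple of the conjugate of an element of S. Let a = (a₁, …, a_d) be a basis of the ℂ-vector space of homogeneous polynomials of degree d−1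 in ℂ[x,y,z] vanishing at every point of S, with a₁ = g. Then there exists a unique triple (M₁, M₂, M₃) of Hermitian d×d complex matrices such that, setting M = xM₁ + yM₂ + zM₃, one has a·M = (f, 0, …, 0) and M·ā^T = (f, 0, …, 0)^T as identities of vectors of polynomials; moreover there exists c ∈ ℝ with c > 0 such that f = c·det(M), and e₁M₁ + e₂M₂ + e₃M₃ is positive definite. -/
open scoped ComplexOrder

/-- The univariate real polynomial `t ↦ f(t • e + p)`. -/
noncomputable def restrictLine (f : MvPolynomial (Fin 3) ℝ) (e p : Fin 3 → ℝ) :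
    Polynomial ℝ :=
  MvPolynomial.aeval (fun i => Polynomial.C (p i) + Polynomial.C (e i) * Polynomial.X) f

/-- `g` (homogeneous of degree `d - 1`) interlaces `f` (homogeneous of degree `d`) with
respect to `e`: for every `p ∈ ℝ³` the polynomials `t ↦ f(te + p)` and `t ↦ g(te + p)`
have only real roots `t₁ ≤ … ≤ t_d` resp. `s₁ ≤ … ≤ s_{d-1}` (listed with multiplicity in
increasing order) and these satisfy `tᵢ ≤ sᵢ ≤ tᵢ₊₁` for all `1 ≤ i ≤ d - 1`. -/
def Interlaces (d : ℕ) (f g : MvPolynomial (Fin 3) ℝ) (e : Fin 3 → ℝ) : Prop :=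
  ∀ p : Fin 3 → ℝ, ∃ (t : Fin d → ℝ) (s : Fin (d - 1) → ℝ),
    Monotone t ∧ Monotone s ∧
    restrictLine f e p =
      Polynomial.C (MvPolynomial.eval e f) *
        ∏ i, (Polynomial.X - Polynomial.C (t i)) ∧
    restrictLine g e p =
      Polynomial.C (MvPolynomial.eval e g) *
        ∏ i, (Polynomial.X - Polynomial.C (s i)) ∧
    ∀ (i : ℕ) (hi : i + 1 < d),
      t ⟨i, by omega⟩ ≤ s ⟨i, by omega⟩ ∧ s ⟨i, by omega⟩ ≤ t ⟨i + 1, hi⟩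

open MvPolynomial in
lemma hom_eval {m : ℕ} {h : MvPolynomial (Fin 3) ℂ} (hh : h.IsHomogeneous m) (c : ℂ)
    (x : Fin 3 → ℂ) : eval (fun i => c * x i) h = c ^ m * eval x h := by
  rw [eval_eq, eval_eq, Finset.mul_sum]
  refine Finset.sum_congr rfl fun s hs => ?_
  have h1 : ∑ i, s i = m := by
    have := hh.degree_eq_sum_deg_support hs
    rw [this]
    exact (Finset.sum_subset (Finset.subset_univ _) fun i _ hi => by
      simpa using hi).symm
  rw [← h1]
  simp only [mul_pow, Finset.prod_mul_distrib]
  have h2 : ∏ i ∈ s.support, c ^ s i = c ^ ∑ i, s i := by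
    rw [← Finset.prod_pow_eq_pow_sum]
    refine Finset.prod_subset (Finset.subset_univ _) fun i _ hi => ?_
    simp [Finsupp.notMem_support_iff.mp hi]
  rw [h2]; ring

noncomputable def lineC (e p : Fin 3 → ℝ) :
    MvPolynomial (Fin 3) ℂ →ₐ[ℂ] Polynomial ℂ :=
  MvPolynomial.aeval (fun i => Polynomial.C (p i : ℂ) + Polynomial.C (e i : ℂ) * Polynomial.X)

lemma lineC_eval (e p : Fin 3 → ℝ) (h : MvPolynomial (Fin 3) ℂ) (t : ℂ) :
    (lineC e p h).eval t = MvPolynomial.eval (fun i => t * (e i : ℂ) + (p i : ℂ)) h := by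
  have : ((Polynomial.aeval t).comp (lineC e p)) =
      MvPolynomial.aeval (fun i => t * (e i : ℂ) + (p i : ℂ)) := by
    apply MvPolynomial.algHom_ext
    intro i
    simp [lineC]; ring
  have := congrArg (fun F => F h) this
  simpa [MvPolynomial.aeval_eq_eval, Polynomial.aeval_def, Polynomial.eval₂_eq_eval_map] using this

lemma lineC_natDegree {m : ℕ} (e p : Fin 3 → ℝ) {h : MvPolynomial (Fin 3) ℂ}
    (hh : h.IsHomogeneous m) : (lineC e p h).natDegree ≤ m := by
  have := MvPolynomial.aeval_natDegree_le (m := m) (n := 1) h (hh.totalDegree_le)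
    (fun i => Polynomial.C (p i : ℂ) + Polynomial.C (e i : ℂ) * Polynomial.X) (fun i => by
      compute_degree)
  simpa [lineC] using this

/-- reversed line -/
lemma lineC_reflect {m : ℕ} (e p : Fin 3 → ℝ) {h : MvPolynomial (Fin 3) ℂ}
    (hh : h.IsHomogeneous m) : Polynomial.reflect m (lineC e p h) = lineC p e h := by
  apply Polynomial.eq_of_infinite_eval_eq
  refine Set.Infinite.mono (s := {0}ᶜ) ?_ (Set.Finite.infinite_compl (Set.finite_singleton _))
  intro s hs
  have hs : s ≠ 0 := hs
  let _ : Invertible (s⁻¹) := invertibleOfNonzero (inv_ne_zero hs)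
  have := Polynomial.eval₂_reflect_mul_pow (RingHom.id ℂ) (s⁻¹) m (lineC e p h)
    (lineC_natDegree e p hh)
  simp only [invOf_eq_inv, inv_inv] at this
  show Polynomial.eval s _ = Polynomial.eval s _
  rw [Polynomial.eval₂_id, Polynomial.eval₂_id, lineC_eval] at this
  rw [lineC_eval]
  have h3 : (fun i => s⁻¹ * (e i : ℂ) + (p i : ℂ)) = fun i => s⁻¹ * (s * (p i : ℂ) + (e i : ℂ)) := by
    funext i; field_simp; ring
  rw [h3, hom_eval hh, mul_comm] at this
  exact mul_left_cancel₀ (pow_ne_zero _ (inv_ne_zero hs)) this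

lemma lineC_coeff_top {m : ℕ} (e p : Fin 3 → ℝ) {h : MvPolynomial (Fin 3) ℂ}
    (hh : h.IsHomogeneous m) :
    (lineC e p h).coeff m = MvPolynomial.eval (fun i => (e i : ℂ)) h := by
  have := congrArg (fun q => Polynomial.coeff q 0) (lineC_reflect e p hh)
  simp only [Polynomial.coeff_reflect, Polynomial.revAt_zero] at this
  rw [this, Polynomial.coeff_zero_eq_eval_zero, lineC_eval]
  simp

lemma lineC_coeff_one (e p : Fin 3 → ℝ) (h : MvPolynomial (Fin 3) ℂ) :
    (lineC p e h).coeff 1 =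
      ∑ l, (p l : ℂ) * MvPolynomial.eval (fun i => (e i : ℂ)) (MvPolynomial.pderiv l h) := by
  have key : ∀ h : MvPolynomial (Fin 3) ℂ, (lineC p e h).coeff 0 =
      MvPolynomial.eval (fun i => (e i : ℂ)) h := by
    intro h
    rw [Polynomial.coeff_zero_eq_eval_zero, lineC_eval]; simp
  induction h using MvPolynomial.induction_on with
  | C a => simp [lineC]
  | add f g hf hg => simp [hf, hg, mul_add, Finset.sum_add_distrib]
  | mul_X f n hf =>
    rw [map_mul, Polynomial.mul_coeff_one, hf, key]
    simp only [Derivation.leibniz, MvPolynomial.pderiv_X, smul_eq_mul, map_add, map_mul,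
      MvPolynomial.eval_X, mul_add, Finset.sum_add_distrib]
    have h1 : (lineC p e (MvPolynomial.X n)).coeff 1 = p n := by simp [lineC, Polynomial.coeff_C]
    have h2 : (lineC p e (MvPolynomial.X n)).coeff 0 = e n := by simp [lineC]
    rw [h1, h2]
    simp [Pi.single_apply, apply_ite, Finset.sum_mul]
    congr 1
    · rw [mul_comm]
    · exact Finset.sum_congr rfl fun i _ => by ring

lemma lineC_coeff_sub {m : ℕ} (e p : Fin 3 → ℝ) {h : MvPolynomial (Fin 3) ℂ}
    (hh : h.IsHomogeneous m) :
    (Polynomial.X * lineC e p h).coeff m =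
      ∑ l, (p l : ℂ) * MvPolynomial.eval (fun i => (e i : ℂ)) (MvPolynomial.pderiv l h) := by
  rw [← lineC_coeff_one, ← lineC_reflect e p hh, Polynomial.coeff_reflect]
  cases m with
  | zero =>
    rw [Polynomial.revAt_eq_self_of_lt (by norm_num),
      Polynomial.coeff_eq_zero_of_natDegree_lt (n := 1)]
    · simp
    · exact lt_of_le_of_lt (lineC_natDegree e p hh) (by norm_num)
  | succ n =>
    rw [Polynomial.coeff_X_mul, Polynomial.revAt_le (by omega)]
    simp

noncomputable def linF (v : Fin 3 → ℝ) : MvPolynomial (Fin 3) ℂ :=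
  ∑ i, MvPolynomial.C (v i : ℂ) * MvPolynomial.X i

lemma linF_eval (v : Fin 3 → ℝ) (x : Fin 3 → ℂ) :
    MvPolynomial.eval x (linF v) = ∑ i, (v i : ℂ) * x i := by
  simp [linF]

lemma linF_hom (v : Fin 3 → ℝ) : (linF v).IsHomogeneous 1 :=
  MvPolynomial.IsHomogeneous.sum _ _ _ fun i _ => MvPolynomial.isHomogeneous_C_mul_X _ _

lemma linF_eval_real (v : Fin 3 → ℝ) (x : Fin 3 → ℝ) :
    MvPolynomial.eval (fun i => (x i : ℂ)) (linF v) = ((∑ i, v i * x i : ℝ) : ℂ) := by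
  simp [linF]

lemma zero_of_real {w : MvPolynomial (Fin 3) ℂ}
    (h : ∀ x : Fin 3 → ℝ, MvPolynomial.eval (fun i => (x i : ℂ)) w = 0) : w = 0 := by
  apply MvPolynomial.funext_set (fun _ => Set.range (fun r : ℝ => (r : ℂ)))
  · intro _
    exact Set.infinite_range_of_injective Complex.ofReal_injective
  · intro x hx
    choose y hy using fun i => hx i (Set.mem_univ _)
    have : x = fun i => (y i : ℂ) := by funext i; exact (hy i).symm
    rw [this, h]; simp

lemma zero_of_real_off {w : MvPolynomial (Fin 3) ℂ} {v : Fin 3 → ℝ} (hv : linF v ≠ 0)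
    (h : ∀ x : Fin 3 → ℝ, ∑ i, v i * x i ≠ 0 →
      MvPolynomial.eval (fun i => (x i : ℂ)) w = 0) : w = 0 := by
  have : linF v * w = 0 := by
    apply zero_of_real
    intro x
    rw [map_mul, linF_eval_real]
    by_cases hx : ∑ i, v i * x i = 0
    · rw [hx]; simp
    · rw [h x hx]; simp
  exact (mul_eq_zero.mp this).resolve_left hv

lemma exists_frame {e : Fin 3 → ℝ} (he : e ≠ 0) : ∃ p q T U v : Fin 3 → ℝ,
    (∀ m i, (if m = i then 1 else 0) = T i * e m + U i * p m + v i * q m) ∧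
    (∑ i, T i * e i = 1) ∧ (∑ i, T i * p i = 0) ∧ (∑ i, U i * e i = 0) ∧ (∑ i, U i * p i = 1) ∧
    (∑ i, v i * e i = 0) ∧ (∑ i, v i * p i = 0) ∧ (∑ i, v i * q i = 1) := by
  obtain ⟨i, hi⟩ : ∃ i, e i ≠ 0 := by
    by_contra hc; push Not at hc; exact he (funext hc)
  fin_cases i
  · have hi : e 0 ≠ 0 := hi
    refine ⟨![0,1,0], ![0,0,1], ![1/e 0,0,0], ![-(e 1/e 0),1,0], ![-(e 2/e 0),0,1], ?_⟩
    refine ⟨fun m j => ?_, ?_⟩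
    · fin_cases m <;> fin_cases j <;> simp [hi] <;> field_simp <;> norm_num
    · simp [Fin.sum_univ_three, hi]
  · have hi : e 1 ≠ 0 := hi
    refine ⟨![1,0,0], ![0,0,1], ![0,1/e 1,0], ![1,-(e 0/e 1),0], ![0,-(e 2/e 1),1], ?_⟩
    refine ⟨fun m j => ?_, ?_⟩
    · fin_cases m <;> fin_cases j <;> simp [hi] <;> field_simp <;> norm_num
    · simp [Fin.sum_univ_three, hi]
  · have hi : e 2 ≠ 0 := hi
    refine ⟨![1,0,0], ![0,1,0], ![0,0,1/e 2], ![1,0,-(e 0/e 2)], ![0,1,-(e 1/e 2)], ?_⟩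
    refine ⟨fun m j => ?_, ?_⟩
    · fin_cases m <;> fin_cases j <;> simp [hi] <;> field_simp <;> norm_num
    · simp [Fin.sum_univ_three, hi]

open MvPolynomial in
lemma finrank_hom (k : ℕ) :
    Module.finrank ℂ (homogeneousSubmodule (Fin 3) ℂ k) = (k + 2).choose k := by
  have h1 : homogeneousSubmodule (Fin 3) ℂ k = Submodule.span ℂ
      (Set.range (fun s : (Finset.univ : Finset (Fin 3)).finsuppAntidiag k =>
        (monomial (s : Fin 3 →₀ ℕ) (1 : ℂ)))) := by
    rw [homogeneousSubmodule_eq_finsupp_supported, AddMonoidAlgebra.supported_eq_span_single]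
    congr 1
    ext x
    simp only [Set.mem_image, Set.mem_range, Subtype.exists, Finset.mem_finsuppAntidiag,
      Finsupp.degree_eq_sum]
    constructor
    · rintro ⟨s, hs, rfl⟩
      exact ⟨s, ⟨hs, by simp⟩, rfl⟩
    · rintro ⟨s, hs, rfl⟩
      exact ⟨s, hs.1, rfl⟩
  rw [h1, finrank_span_eq_card]
  · rw [Fintype.card_coe, Finset.card_finsuppAntidiag_nat_eq_choose]
    congr 1
    simp; omega
  · have := (basisMonomials (Fin 3) ℂ).linearIndependent
    have h2 := this.comp (fun s : (Finset.univ : Finset (Fin 3)).finsuppAntidiag k =>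
      (s : Fin 3 →₀ ℕ)) Subtype.val_injective
    have h3 : (⇑(basisMonomials (Fin 3) ℂ) ∘
        fun s : (Finset.univ : Finset (Fin 3)).finsuppAntidiag k => (s : Fin 3 →₀ ℕ)) =
        fun s : (Finset.univ : Finset (Fin 3)).finsuppAntidiag k =>
          monomial (s : Fin 3 →₀ ℕ) (1 : ℂ) := by
      funext s; simp
    rw [h3] at h2
    exact h2

lemma finrank_hom' (k : ℕ) :
    2 * Module.finrank ℂ (MvPolynomial.homogeneousSubmodule (Fin 3) ℂ k) = (k + 1) * (k + 2) := by
  rw [finrank_hom]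
  have : (k+2).choose k = (k+2).choose 2 := by
    rw [← Nat.choose_symm (show 2 ≤ k + 2 by omega)]; simp
  rw [this, Nat.choose_two_right]
  rw [Nat.mul_div_cancel' (Nat.even_mul_pred_self (k+2)).two_dvd]
  simp; ring


lemma cplx_eval (f : MvPolynomial (Fin 3) ℝ) (x : Fin 3 → ℝ) :
    MvPolynomial.eval (fun i => (x i : ℂ)) (complexify f) = ((MvPolynomial.eval x f : ℝ) : ℂ) := by
  induction f using MvPolynomial.induction_on with
  | C a => simp [complexify]
  | add f g hf hg => simp [complexify] at *; simp [hf, hg]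
  | mul_X f n hf => simp [complexify] at *; simp [hf]

lemma cplx_eval_line (f : MvPolynomial (Fin 3) ℝ) (e p : Fin 3 → ℝ) (t : ℝ) :
    MvPolynomial.eval (fun i => (t : ℂ) * (e i : ℂ) + (p i : ℂ)) (complexify f) =
      ((Polynomial.eval t (restrictLine f e p) : ℝ) : ℂ) := by
  have h1 : (fun i => (t : ℂ) * (e i : ℂ) + (p i : ℂ)) = fun i => ((t * e i + p i : ℝ) : ℂ) := by
    funext i; push_cast; rfl
  rw [h1, cplx_eval]
  congr 1
  have : ((Polynomial.aeval t).comp (MvPolynomial.aeval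
      (fun i => Polynomial.C (p i) + Polynomial.C (e i) * Polynomial.X))) =
      (MvPolynomial.aeval (fun i => t * e i + p i) : MvPolynomial (Fin 3) ℝ →ₐ[ℝ] ℝ) := by
    apply MvPolynomial.algHom_ext
    intro i
    simp; ring
  have := congrArg (fun F => F f) this
  simpa [restrictLine, MvPolynomial.aeval_eq_eval, Polynomial.aeval_def,
    Polynomial.eval₂_eq_eval_map] using this.symm

lemma no_real {F G : MvPolynomial (Fin 3) ℂ} (S : Set (Fin 3 → ℂ))
    (hSsplit : ∀ q : Fin 3 → ℂ, q ≠ 0 →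
      MvPolynomial.eval q F = 0 → MvPolynomial.eval q G = 0 →
      ∃! s, s ∈ S ∪ conjPt '' S ∧ ∃ lam : ℂ, lam ≠ 0 ∧ q = lam • s)
    (hSconj : ∀ s ∈ S, ∀ s' ∈ S, ∀ lam : ℂ, lam ≠ 0 → s ≠ lam • conjPt s')
    (x : Fin 3 → ℝ) (hx : x ≠ 0) (hF : MvPolynomial.eval (fun i => (x i : ℂ)) F = 0) :
    MvPolynomial.eval (fun i => (x i : ℂ)) G ≠ 0 := by
  intro hG
  obtain ⟨s, ⟨hs, lam, hlam, hq⟩, -⟩ := hSsplit _ (by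
    intro h; apply hx; funext i
    have := congrFun h i
    simpa using this) hF hG
  have hl : (starRingEnd ℂ) lam ≠ 0 := by simpa using hlam
  have hreal : ∀ i, (starRingEnd ℂ) (lam * s i) = lam * s i := by
    intro i
    have := congrFun hq i
    simp only [Pi.smul_apply, smul_eq_mul] at this
    rw [← this]; simp
  rcases hs with hs | ⟨s', hs', rfl⟩
  · apply hSconj s hs s hs ((starRingEnd ℂ) lam / lam) (div_ne_zero hl hlam)
    funext i
    have := hreal i
    simp only [map_mul] at this
    simp only [Pi.smul_apply, smul_eq_mul, conjPt]
    field_simp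
    rw [mul_comm, ← this, mul_comm]
  · apply hSconj s' hs' s' hs' (lam / (starRingEnd ℂ) lam) (div_ne_zero hlam hl)
    funext i
    have := hreal i
    simp only [map_mul, conjPt, Complex.conj_conj] at this
    simp only [Pi.smul_apply, smul_eq_mul, conjPt]
    field_simp
    rw [mul_comm, this, mul_comm]

lemma line_data {d : ℕ} (hd : 0 < d) (f g : MvPolynomial (Fin 3) ℝ) (e : Fin 3 → ℝ)
    (hge : 0 < MvPolynomial.eval e g)
    (hint : Interlaces d f g e)
    (hnr : ∀ x : Fin 3 → ℝ, x ≠ 0 →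
      MvPolynomial.eval (fun i => (x i : ℂ)) (complexify f) = 0 →
      MvPolynomial.eval (fun i => (x i : ℂ)) (complexify g) ≠ 0)
    (p : Fin 3 → ℝ) (hp : ∀ t : ℝ, (fun i => t * e i + p i) ≠ 0) :
    ∃ t ω : Fin d → ℝ, Function.Injective t ∧ (∀ r, 0 < ω r) ∧
      (∀ r, MvPolynomial.eval (fun i => (t r : ℂ) * (e i : ℂ) + (p i : ℂ)) (complexify f) = 0) ∧
      (∀ r, MvPolynomial.eval (fun i => (t r : ℂ) * (e i : ℂ) + (p i : ℂ)) (complexify g) ≠ 0) ∧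
      ∀ q : Polynomial ℂ, q.degree < d → q.coeff (d - 1) =
        ∑ r, (ω r : ℂ) * (MvPolynomial.eval
          (fun i => (t r : ℂ) * (e i : ℂ) + (p i : ℂ)) (complexify g) * q.eval (t r : ℂ)) := by
  obtain ⟨n, rfl⟩ : ∃ n, d = n + 1 := ⟨d - 1, by omega⟩
  obtain ⟨t, s, ht, hs, hf, hg, hil⟩ : ∃ (t : Fin (n + 1) → ℝ) (s : Fin n → ℝ),
      Monotone t ∧ Monotone s ∧
      restrictLine f e p = Polynomial.C (MvPolynomial.eval e f) *
        ∏ i, (Polynomial.X - Polynomial.C (t i)) ∧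
      restrictLine g e p = Polynomial.C (MvPolynomial.eval e g) *
        ∏ i, (Polynomial.X - Polynomial.C (s i)) ∧
      ∀ (i : ℕ) (hi : i + 1 < n + 1),
        t ⟨i, by omega⟩ ≤ s ⟨i, by omega⟩ ∧ s ⟨i, by omega⟩ ≤ t ⟨i + 1, hi⟩ := hint p
  have hil1 : ∀ i : Fin n, t i.castSucc ≤ s i := fun i => (hil i (by omega)).1
  have hil2 : ∀ i : Fin n, s i ≤ t i.succ := fun i => (hil i (by omega)).2
  have hcr : ∀ τ : ℝ, (restrictLine f e p).eval τ = 0 → (restrictLine g e p).eval τ ≠ 0 := by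
    intro τ h1 h2
    have e1 := cplx_eval_line f e p τ
    have e2 := cplx_eval_line g e p τ
    have h3 : (fun i => (τ : ℂ) * (e i : ℂ) + (p i : ℂ)) = fun i => ((τ * e i + p i : ℝ) : ℂ) := by
      funext i; push_cast; rfl
    rw [h3, h1] at e1
    rw [h3, h2] at e2
    exact hnr _ (hp τ) (by simpa using e1) (by simpa using e2)
  have hft : ∀ r, (restrictLine f e p).eval (t r) = 0 := by
    intro r
    rw [hf, Polynomial.eval_mul, Polynomial.eval_prod,
      Finset.prod_eq_zero (Finset.mem_univ r) (by simp), mul_zero]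
  have hgs : ∀ r, (restrictLine g e p).eval (s r) = 0 := by
    intro r
    rw [hg, Polynomial.eval_mul, Polynomial.eval_prod,
      Finset.prod_eq_zero (Finset.mem_univ r) (by simp), mul_zero]
  have hne : ∀ r i, t r ≠ s i := by
    intro r i h
    apply hcr (t r) (hft r)
    rw [h]; exact hgs i
  have hst : StrictMono t := by
    rw [Fin.strictMono_iff_lt_succ]
    intro i
    exact lt_of_lt_of_le (lt_of_le_of_ne (hil1 i) (hne _ _)) (hil2 i)
  have hpos : ∀ r, 0 < (restrictLine g e p).eval (t r) *
      ∏ j ∈ Finset.univ.erase r, (t r - t j) := by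
    intro r
    have h1 : ∏ j ∈ Finset.univ.erase r, (t r - t j) = ∏ i : Fin n, (t r - t (r.succAbove i)) := by
      have : (Finset.univ.erase r) = Finset.univ.image r.succAbove := by
        rw [Fin.image_succAbove_univ]; ext; simp
      rw [this, Finset.prod_image]
      intro a _ b _ h
      exact Fin.succAbove_right_injective h
    rw [h1, hg, Polynomial.eval_mul, Polynomial.eval_prod, mul_assoc, ← Finset.prod_mul_distrib]
    simp only [Polynomial.eval_C]
    refine mul_pos hge (Finset.prod_pos fun i _ => ?_)
    simp only [Polynomial.eval_sub, Polynomial.eval_X, Polynomial.eval_C]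
    by_cases h : i.castSucc < r
    · rw [Fin.succAbove_of_castSucc_lt _ _ h]
      have a1 := hst h
      have a2 : s i ≤ t r := (hil2 i).trans (ht (Fin.castSucc_lt_iff_succ_le.mp h))
      have a3 := lt_of_le_of_ne a2 (hne r i).symm
      exact mul_pos (by linarith) (by linarith)
    · push Not at h
      rw [Fin.succAbove_of_le_castSucc _ _ h]
      have a1 : t r < t i.succ := hst (lt_of_le_of_lt h i.castSucc_lt_succ)
      have a2 : t r ≤ s i := (ht h).trans (hil1 i)
      have a3 := lt_of_le_of_ne a2 (hne r i)
      exact mul_pos_of_neg_of_neg (by linarith) (by linarith)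
  refine ⟨t, fun r => ((restrictLine g e p).eval (t r) *
      ∏ j ∈ Finset.univ.erase r, (t r - t j))⁻¹, hst.injective, fun r => inv_pos.mpr (hpos r),
      fun r => by rw [cplx_eval_line, hft]; simp,
      fun r => by rw [cplx_eval_line]; exact_mod_cast hcr _ (hft r), ?_⟩
  intro q hq
  have hinj : Set.InjOn (fun r => (t r : ℂ)) (Finset.univ : Finset (Fin (n+1))) :=
    fun a _ b _ h => hst.injective (Complex.ofReal_injective h)
  have := Lagrange.coeff_eq_sum hinj (P := q) (by simpa using hq)
  simp only [Finset.card_univ, Fintype.card_fin] at this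
  rw [this]
  refine Finset.sum_congr rfl fun r _ => ?_
  rw [cplx_eval_line]
  have hG : ((Polynomial.eval (t r) (restrictLine g e p) : ℝ) : ℂ) ≠ 0 := by
    exact_mod_cast hcr _ (hft r)
  have hP : ∏ j ∈ Finset.univ.erase r, ((t r : ℂ) - t j) ≠ 0 := by
    refine Finset.prod_ne_zero_iff.mpr fun j hj => sub_ne_zero.mpr fun h => ?_
    exact (Finset.ne_of_mem_erase hj) (hst.injective (Complex.ofReal_injective h)).symm
  push_cast
  field_simp


def LP (d : ℕ) (F G : MvPolynomial (Fin 3) ℂ) (e : Fin 3 → ℝ) : Prop :=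
  ∀ p : Fin 3 → ℝ, (∀ t : ℝ, (fun i => t * e i + p i) ≠ 0) →
    ∃ t ω : Fin d → ℝ, Function.Injective t ∧ (∀ r, 0 < ω r) ∧
      (∀ r, MvPolynomial.eval (fun i => (t r : ℂ) * (e i : ℂ) + (p i : ℂ)) F = 0) ∧
      (∀ r, MvPolynomial.eval (fun i => (t r : ℂ) * (e i : ℂ) + (p i : ℂ)) G ≠ 0) ∧
      ∀ q : Polynomial ℂ, q.degree < d → q.coeff (d - 1) =
        ∑ r, (ω r : ℂ) * (MvPolynomial.eval
          (fun i => (t r : ℂ) * (e i : ℂ) + (p i : ℂ)) G * q.eval (t r : ℂ))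

lemma good_of_v {e v p : Fin 3 → ℝ} (hv : ∑ i, v i * e i = 0) (hp : ∑ i, v i * p i ≠ 0) (t : ℝ) :
    (fun i => t * e i + p i) ≠ 0 := by
  intro h
  apply hp
  have : ∑ i, v i * (t * e i + p i) = 0 :=
    Finset.sum_eq_zero fun i _ => by rw [congrFun h i]; simp
  have h2 : ∑ i, v i * (t * e i + p i) = t * (∑ i, v i * e i) + ∑ i, v i * p i := by
    rw [Finset.mul_sum, ← Finset.sum_add_distrib]
    exact Finset.sum_congr rfl fun i _ => by ring
  rw [h2, hv] at this
  simpa using this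

lemma poly_zero_of_roots {d : ℕ} {q : Polynomial ℂ} (hq : q.degree < d) {t : Fin d → ℝ}
    (ht : Function.Injective t) (h0 : ∀ r, q.eval (t r : ℂ) = 0) : q = 0 := by
  refine Polynomial.eq_zero_of_degree_lt_of_eval_index_eq_zero (s := Finset.univ)
    (v := fun r => (t r : ℂ)) ?_ ?_ ?_
  · exact fun a _ b _ h => ht (Complex.ofReal_injective h)
  · simpa using hq
  · intro r _; exact h0 r

lemma lineC_degree_lt {m d : ℕ} (hmd : m < d) (e p : Fin 3 → ℝ) {h : MvPolynomial (Fin 3) ℂ}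
    (hh : h.IsHomogeneous m) : (lineC e p h).degree < d :=
  lt_of_le_of_lt Polynomial.degree_le_natDegree
    (by exact_mod_cast lt_of_le_of_lt (lineC_natDegree e p hh) hmd)

lemma eval_of_lineC_zero {e p : Fin 3 → ℝ} {h : MvPolynomial (Fin 3) ℂ} (hl : lineC e p h = 0) :
    MvPolynomial.eval (fun i => (p i : ℂ)) h = 0 := by
  have := lineC_eval e p h 0
  rw [hl] at this
  simpa using this.symm

lemma coprime_zero {d : ℕ} (hd : 0 < d) {F G b : MvPolynomial (Fin 3) ℂ} {e v : Fin 3 → ℝ}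
    (hLP : LP d F G e) (hve : ∑ i, v i * e i = 0) (hv : linF v ≠ 0)
    (hb : b.IsHomogeneous (d - 1)) (hdvd : F ∣ G * b) : b = 0 := by
  apply zero_of_real_off hv
  intro p hp
  obtain ⟨t, ω, ht, -, hF, hG, -⟩ := hLP p (good_of_v hve hp)
  apply eval_of_lineC_zero (e := e)
  apply poly_zero_of_roots (lineC_degree_lt (by omega) e p hb) ht
  intro r
  obtain ⟨c, hc⟩ := hdvd
  have := congrArg (MvPolynomial.eval (fun i => (t r : ℂ) * (e i : ℂ) + (p i : ℂ))) hc
  rw [map_mul, map_mul, hF, zero_mul] at this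
  rw [lineC_eval]
  exact (mul_eq_zero.mp this).resolve_left (hG r)

lemma lineC_linF (e p T : Fin 3 → ℝ) : lineC e p (linF T) =
    Polynomial.C ((∑ i, T i * p i : ℝ) : ℂ) +
      Polynomial.C ((∑ i, T i * e i : ℝ) : ℂ) * Polynomial.X := by
  simp [lineC, linF, Fin.sum_univ_three]
  ring

noncomputable def liftP (T U : Fin 3 → ℝ) (k : ℕ) (q : Polynomial ℂ) : MvPolynomial (Fin 3) ℂ :=
  ∑ i ∈ Finset.range (k + 1), MvPolynomial.C (q.coeff i) * (linF T ^ i * linF U ^ (k - i))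

lemma liftP_hom (T U : Fin 3 → ℝ) (k : ℕ) (q : Polynomial ℂ) : (liftP T U k q).IsHomogeneous k := by
  refine MvPolynomial.IsHomogeneous.sum _ _ _ fun i hi => ?_
  have hi : i ≤ k := by simpa [Nat.lt_succ_iff] using hi
  have := ((linF_hom T).pow i).mul ((linF_hom U).pow (k - i))
  have h2 := this.C_mul (q.coeff i)
  convert h2 using 1
  omega

lemma liftP_line {e p T U : Fin 3 → ℝ} (hTe : ∑ i, T i * e i = 1) (hTp : ∑ i, T i * p i = 0)
    (hUe : ∑ i, U i * e i = 0) (hUp : ∑ i, U i * p i = 1) (k : ℕ) (q : Polynomial ℂ)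
    (hq : q.natDegree ≤ k) : lineC e p (liftP T U k q) = q := by
  have h1 : lineC e p (linF T) = Polynomial.X := by rw [lineC_linF, hTe, hTp]; simp
  have h2 : lineC e p (linF U) = 1 := by rw [lineC_linF, hUe, hUp]; simp
  conv_rhs => rw [q.as_sum_range' (k + 1) (by omega)]
  rw [liftP, map_sum]
  refine Finset.sum_congr rfl fun i _ => ?_
  rw [map_mul, map_mul, map_pow, map_pow, h1, h2, one_pow, mul_one]
  have : lineC e p (MvPolynomial.C (q.coeff i)) = Polynomial.C (q.coeff i) := by simp [lineC]
  rw [this, Polynomial.C_mul_X_pow_eq_monomial]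

lemma hom_quot {v : Fin 3 → ℝ} {y y' : MvPolynomial (Fin 3) ℂ} {k : ℕ}
    (hy : y.IsHomogeneous (k + 1)) (h : y = linF v * y') :
    ∃ y'', y''.IsHomogeneous k ∧ y = linF v * y'' := by
  refine ⟨MvPolynomial.homogeneousComponent k y',
    MvPolynomial.homogeneousComponent_isHomogeneous k y', ?_⟩
  have h1 : MvPolynomial.homogeneousComponent (k + 1) y = y :=
    MvPolynomial.homogeneousComponent_eq_self hy
  rw [← h1]
  conv_lhs => rw [h, ← MvPolynomial.sum_homogeneousComponent y', Finset.mul_sum, map_sum]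
  have h2 : ∀ i, MvPolynomial.homogeneousComponent (k + 1)
      (linF v * MvPolynomial.homogeneousComponent i y') =
      if i = k then linF v * MvPolynomial.homogeneousComponent k y' else 0 := by
    intro i
    have := (linF_hom v).mul (MvPolynomial.homogeneousComponent_isHomogeneous i y')
    rw [MvPolynomial.homogeneousComponent_of_mem this]
    by_cases hik : i = k
    · subst hik; simp [add_comm]
    · rw [if_neg (by omega), if_neg hik]
  simp only [h2, Finset.sum_ite_eq', Finset.mem_range]
  split_ifs with h3
  · rfl
  · rw [MvPolynomial.homogeneousComponent_eq_zero _ _ (by omega), mul_zero]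

lemma dvd_of_line_zero {e p q T U v : Fin 3 → ℝ}
    (hfr : ∀ m i, (if m = i then (1 : ℝ) else 0) = T i * e m + U i * p m + v i * q m)
    (hUp : ∑ i, U i * p i = 1) {m : ℕ} {y : MvPolynomial (Fin 3) ℂ} (hy : y.IsHomogeneous m)
    (h0 : lineC e p y = 0) : linF v ∣ y := by
  set φ : MvPolynomial (Fin 3) ℂ →ₐ[ℂ] MvPolynomial (Fin 3) ℂ :=
    MvPolynomial.aeval (fun i => MvPolynomial.C (e i : ℂ) * linF T + MvPolynomial.C (p i : ℂ) * linF U)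
    with hφ
  have hX : ∀ m, (MvPolynomial.X m : MvPolynomial (Fin 3) ℂ) = φ (MvPolynomial.X m) +
      linF v * MvPolynomial.C (q m : ℂ) := by
    intro m
    apply MvPolynomial.funext
    intro x
    simp only [hφ, MvPolynomial.aeval_X, map_add, map_mul, MvPolynomial.eval_C, linF_eval,
      MvPolynomial.eval_X]
    have : x m = ∑ i, ((if m = i then (1 : ℝ) else 0 : ℝ) : ℂ) * x i := by
      rw [Finset.sum_eq_single m]
      · rw [if_pos rfl]; push_cast; ring
      · intro b _ hb; rw [if_neg (Ne.symm hb)]; push_cast; ring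
      · intro h; exact absurd (Finset.mem_univ m) h
    rw [this]
    simp only [hfr, Fin.sum_univ_three]
    push_cast
    ring
  have h1 : linF v ∣ y - φ y := by
    rw [← Ideal.mem_span_singleton, ← Ideal.Quotient.mk_eq_mk_iff_sub_mem]
    have : (Ideal.Quotient.mkₐ ℂ (Ideal.span {linF v})) =
        (Ideal.Quotient.mkₐ ℂ (Ideal.span {linF v})).comp φ := by
      apply MvPolynomial.algHom_ext
      intro i
      simp only [AlgHom.comp_apply, Ideal.Quotient.mkₐ_eq_mk]
      rw [Ideal.Quotient.mk_eq_mk_iff_sub_mem, Ideal.mem_span_singleton]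
      exact ⟨MvPolynomial.C (q i : ℂ), by linear_combination hX i⟩
    exact congrArg (fun F => F y) this
  have h2 : φ y = 0 := by
    have hU : linF U ≠ 0 := by
      intro h
      have := linF_eval_real U p
      rw [h, hUp] at this
      simp at this
    apply (mul_eq_zero.mp (?_ : linF U * φ y = 0)).resolve_left hU
    apply MvPolynomial.funext
    intro x
    rw [map_mul, map_zero]
    by_cases hx : MvPolynomial.eval x (linF U) = 0
    · rw [hx, zero_mul]
    · have h3 : MvPolynomial.eval x (φ y) = MvPolynomial.eval (fun i => (e i : ℂ) *
          MvPolynomial.eval x (linF T) + (p i : ℂ) * MvPolynomial.eval x (linF U)) y := by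
        have : ((MvPolynomial.aeval x : MvPolynomial (Fin 3) ℂ →ₐ[ℂ] ℂ).comp φ) =
          MvPolynomial.aeval (fun i => (e i : ℂ) *
          MvPolynomial.eval x (linF T) + (p i : ℂ) * MvPolynomial.eval x (linF U)) := by
          apply MvPolynomial.algHom_ext
          intro i
          simp [hφ, MvPolynomial.aeval_eq_eval]
        have := congrArg (fun F => F y) this
        simpa [MvPolynomial.aeval_eq_eval] using this
      rw [h3]
      have h4 : (fun i => (e i : ℂ) *
          MvPolynomial.eval x (linF T) + (p i : ℂ) * MvPolynomial.eval x (linF U)) =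
          fun i => MvPolynomial.eval x (linF U) * ((MvPolynomial.eval x (linF T) /
            MvPolynomial.eval x (linF U)) * (e i : ℂ) + (p i : ℂ)) := by
        funext i; field_simp
      rw [h4, hom_eval hy, ← lineC_eval, h0]
      simp
  rw [h2, sub_zero] at h1
  exact h1

lemma reduce_deg {d : ℕ} (hd : 2 ≤ d) {F G : MvPolynomial (Fin 3) ℂ} {e p q T U v : Fin 3 → ℝ}
    (hF : F.IsHomogeneous d) (hG : G.IsHomogeneous (d - 1))
    (hFe : MvPolynomial.eval (fun i => (e i : ℂ)) F ≠ 0)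
    (hfr : ∀ m i, (if m = i then (1 : ℝ) else 0) = T i * e m + U i * p m + v i * q m)
    (hTe : ∑ i, T i * e i = 1) (hTp : ∑ i, T i * p i = 0)
    (hUe : ∑ i, U i * e i = 0) (hUp : ∑ i, U i * p i = 1)
    (hcop : IsCoprime (lineC e p F) (lineC e p G)) {k : ℕ} (hk : 2 * d - 2 ≤ k + 1)
    {y : MvPolynomial (Fin 3) ℂ} (hy : y.IsHomogeneous (k + 1)) :
    ∃ α β y', y'.IsHomogeneous k ∧ y = α * F + β * G + linF v * y' := by
  obtain ⟨A, B, hAB⟩ := hcop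
  have hfd : (lineC e p F).natDegree = d := by
    apply le_antisymm (lineC_natDegree e p hF)
    apply Polynomial.le_natDegree_of_ne_zero
    rw [lineC_coeff_top e p hF]; exact hFe
  have hf0 : lineC e p F ≠ 0 := by
    intro h; rw [h] at hfd; simp at hfd; omega
  set yh := lineC e p y
  set β := (yh * B) % (lineC e p F) with hβ
  have hβd : β.natDegree ≤ d - 1 := by
    have := Polynomial.natDegree_mod_lt (yh * B) (q := lineC e p F) (by omega)
    rw [← hβ] at this
    omega
  obtain ⟨α, hα⟩ : ∃ α, yh - β * lineC e p G = lineC e p F * α := by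
    have h1 := EuclideanDomain.div_add_mod (yh * B) (lineC e p F)
    refine ⟨yh * A + (yh * B) / (lineC e p F) * lineC e p G, ?_⟩
    have : β = yh * B - lineC e p F * ((yh * B) / lineC e p F) := by
      rw [hβ]; linear_combination h1
    rw [this]
    linear_combination (-yh) * hAB
  have hαd : α.natDegree ≤ k + 1 - d := by
    by_cases hα0 : α = 0
    · simp [hα0]
    have h1 : (yh - β * lineC e p G).natDegree ≤ k + 1 := by
      apply (Polynomial.natDegree_sub_le _ _).trans
      apply max_le (lineC_natDegree e p hy)
      apply Polynomial.natDegree_mul_le.trans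
      have := lineC_natDegree e p hG
      omega
    rw [hα, Polynomial.natDegree_mul hf0 hα0, hfd] at h1
    omega
  have hh : (y - liftP T U (k + 1 - d) α * F - liftP T U (k + 1 - (d - 1)) β * G).IsHomogeneous
      (k + 1) := by
    refine (hy.sub ?_).sub ?_
    · have := (liftP_hom T U (k + 1 - d) α).mul hF
      have e1 : (k + 1 - d) + d = k + 1 := by omega
      rw [e1] at this; exact this
    · have := (liftP_hom T U (k + 1 - (d - 1)) β).mul hG
      have e1 : (k + 1 - (d - 1)) + (d - 1) = k + 1 := by omega
      rw [e1] at this; exact this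
  have hl : lineC e p (y - liftP T U (k + 1 - d) α * F - liftP T U (k + 1 - (d - 1)) β * G) = 0 := by
    rw [map_sub, map_sub, map_mul, map_mul, liftP_line hTe hTp hUe hUp _ _ hαd,
      liftP_line hTe hTp hUe hUp _ _ (by omega)]
    linear_combination hα
  obtain ⟨y', hy'⟩ := dvd_of_line_zero hfr hUp hh hl
  obtain ⟨y'', h1, h2⟩ := hom_quot hh hy'
  exact ⟨liftP T U (k + 1 - d) α, liftP T U (k + 1 - (d - 1)) β, y'', h1, by linear_combination h2⟩


lemma line_coprime {F G : MvPolynomial (Fin 3) ℂ} {e p : Fin 3 → ℝ}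
    (hreal : ∀ p : Fin 3 → ℝ, ∀ t : ℂ,
      MvPolynomial.eval (fun i => t * (e i : ℂ) + (p i : ℂ)) F = 0 → t.im = 0)
    (hnr : ∀ x : Fin 3 → ℝ, x ≠ 0 → MvPolynomial.eval (fun i => (x i : ℂ)) F = 0 →
      MvPolynomial.eval (fun i => (x i : ℂ)) G ≠ 0)
    (hp : ∀ t : ℝ, (fun i => t * e i + p i) ≠ 0) (t : ℂ)
    (h1 : MvPolynomial.eval (fun i => t * (e i : ℂ) + (p i : ℂ)) F = 0)
    (h2 : MvPolynomial.eval (fun i => t * (e i : ℂ) + (p i : ℂ)) G = 0) : False := by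
  have ht := hreal p t h1
  have ht' : t = (t.re : ℂ) := by apply Complex.ext <;> simp [ht]
  have h3 : (fun i => t * (e i : ℂ) + (p i : ℂ)) = fun i => ((t.re * e i + p i : ℝ) : ℂ) := by
    funext i
    conv_lhs => rw [ht']
    push_cast; rfl
  rw [h3] at h1 h2
  exact hnr _ (hp t.re) h1 h2

lemma line_coprime' {F G : MvPolynomial (Fin 3) ℂ} {e p : Fin 3 → ℝ}
    (hreal : ∀ p : Fin 3 → ℝ, ∀ t : ℂ,
      MvPolynomial.eval (fun i => t * (e i : ℂ) + (p i : ℂ)) F = 0 → t.im = 0)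
    (hnr : ∀ x : Fin 3 → ℝ, x ≠ 0 → MvPolynomial.eval (fun i => (x i : ℂ)) F = 0 →
      MvPolynomial.eval (fun i => (x i : ℂ)) G ≠ 0)
    (hp : ∀ t : ℝ, (fun i => t * e i + p i) ≠ 0) : IsCoprime (lineC e p F) (lineC e p G) := by
  refine (Polynomial.isCoprime_iff_aeval_ne_zero_of_isAlgClosed ℂ ℂ _ _).mpr ?_
  intro t
  by_contra! h
  rw [Polynomial.coe_aeval_eq_eval, lineC_eval, lineC_eval] at h
  exact line_coprime hreal hnr hp t h.1 h.2

lemma v_ne_zero {d : ℕ} {F G : MvPolynomial (Fin 3) ℂ} {e p q T U v : Fin 3 → ℝ}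
    (hF : F.IsHomogeneous d) (hG : G.IsHomogeneous (d - 1))
    (hFe : MvPolynomial.eval (fun i => (e i : ℂ)) F ≠ 0)
    (hreal : ∀ p : Fin 3 → ℝ, ∀ t : ℂ,
      MvPolynomial.eval (fun i => t * (e i : ℂ) + (p i : ℂ)) F = 0 → t.im = 0)
    (hnr : ∀ x : Fin 3 → ℝ, x ≠ 0 → MvPolynomial.eval (fun i => (x i : ℂ)) F = 0 →
      MvPolynomial.eval (fun i => (x i : ℂ)) G ≠ 0)
    (hfr : ∀ m i, (if m = i then (1 : ℝ) else 0) = T i * e m + U i * p m + v i * q m)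
    (hp : ∀ t : ℝ, (fun i => t * e i + p i) ≠ 0)
    {z : Fin 3 → ℂ} (hz : z ≠ 0) (hzF : MvPolynomial.eval z F = 0)
    (hzG : MvPolynomial.eval z G = 0) : MvPolynomial.eval z (linF v) ≠ 0 := by
  intro hv
  set τ := MvPolynomial.eval z (linF T) with hτ
  set σ := MvPolynomial.eval z (linF U) with hσ
  have hzz : z = fun i => τ * (e i : ℂ) + σ * (p i : ℂ) := by
    funext m
    have : z m = ∑ i, ((if m = i then (1 : ℝ) else 0 : ℝ) : ℂ) * z i := by
      rw [Finset.sum_eq_single m]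
      · rw [if_pos rfl]; push_cast; ring
      · intro b _ hb; rw [if_neg (Ne.symm hb)]; push_cast; ring
      · intro h; exact absurd (Finset.mem_univ m) h
    rw [this, hτ, hσ]
    simp only [linF_eval] at hv ⊢
    simp only [hfr, Fin.sum_univ_three] at hv ⊢
    push_cast
    linear_combination (q m : ℂ) * hv
  by_cases h0 : σ = 0
  · have h1 : z = fun i => τ * (e i : ℂ) := by rw [hzz, h0]; simp
    rw [h1, hom_eval hF] at hzF
    have h2 : τ = 0 := eq_zero_of_pow_eq_zero ((mul_eq_zero.mp hzF).resolve_right hFe)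
    apply hz; rw [h1, h2]; funext i; simp
  · have h1 : z = fun i => σ * ((τ / σ) * (e i : ℂ) + (p i : ℂ)) := by
      rw [hzz]; funext i; field_simp
    rw [h1, hom_eval hF] at hzF
    rw [h1, hom_eval hG] at hzG
    exact line_coprime hreal hnr hp (τ / σ)
      ((mul_eq_zero.mp hzF).resolve_left (pow_ne_zero _ h0))
      ((mul_eq_zero.mp hzG).resolve_left (pow_ne_zero _ h0))

lemma sep_lin {z w : Fin 3 → ℂ} (hw : w ≠ 0) (h : ∀ c : ℂ, z ≠ c • w) :
    ∃ l : MvPolynomial (Fin 3) ℂ, l.IsHomogeneous 1 ∧ MvPolynomial.eval z l ≠ 0 ∧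
      MvPolynomial.eval w l = 0 := by
  obtain ⟨j, hj⟩ := Function.ne_iff.mp hw
  have : ∃ i, z i * w j - z j * w i ≠ 0 := by
    by_contra! hc
    apply h (z j / w j)
    funext i
    have hj' : w j ≠ 0 := hj
    simp only [Pi.smul_apply, smul_eq_mul]
    field_simp
    linear_combination hc i
  obtain ⟨i, hi⟩ := this
  refine ⟨MvPolynomial.C (w j) * MvPolynomial.X i - MvPolynomial.C (w i) * MvPolynomial.X j,
    ((MvPolynomial.isHomogeneous_X _ _).C_mul _).sub ((MvPolynomial.isHomogeneous_X _ _).C_mul _),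
    ?_, ?_⟩
  · simp only [map_sub, map_mul, MvPolynomial.eval_C, MvPolynomial.eval_X]
    intro h; apply hi; linear_combination h
  · simp only [map_sub, map_mul, MvPolynomial.eval_C, MvPolynomial.eval_X]
    ring

lemma sep_prod (Z : Finset (Fin 3 → ℂ)) (z : Fin 3 → ℂ)
    (hZ : ∀ w ∈ Z, w ≠ 0 ∧ ∀ c : ℂ, z ≠ c • w) :
    ∃ h : MvPolynomial (Fin 3) ℂ, h.IsHomogeneous Z.card ∧ MvPolynomial.eval z h ≠ 0 ∧
      ∀ w ∈ Z, MvPolynomial.eval w h = 0 := by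
  classical
  have : ∀ w : Z, ∃ l : MvPolynomial (Fin 3) ℂ, l.IsHomogeneous 1 ∧ MvPolynomial.eval z l ≠ 0 ∧
      MvPolynomial.eval (w : Fin 3 → ℂ) l = 0 := fun w => sep_lin (hZ w w.2).1 (hZ w w.2).2
  choose l h1 h2 h3 using this
  refine ⟨∏ w, l w, ?_, ?_, ?_⟩
  · have := MvPolynomial.IsHomogeneous.prod Finset.univ l (fun _ => 1) (fun w _ => h1 w)
    simpa using this
  · rw [map_prod]; exact Finset.prod_ne_zero_iff.mpr fun w _ => h2 w
  · intro w hw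
    rw [map_prod]
    exact Finset.prod_eq_zero (Finset.mem_univ (⟨w, hw⟩ : Z)) (h3 ⟨w, hw⟩)

lemma descend {d : ℕ} {F G : MvPolynomial (Fin 3) ℂ} {v : Fin 3 → ℝ}
    (hred : ∀ k, 2 * d - 2 ≤ k + 1 → ∀ y : MvPolynomial (Fin 3) ℂ, y.IsHomogeneous (k + 1) →
      ∃ α β y', y'.IsHomogeneous k ∧ y = α * F + β * G + linF v * y')
    (Z : Finset (Fin 3 → ℂ)) (hZF : ∀ w ∈ Z, MvPolynomial.eval w F = 0)
    (hZG : ∀ w ∈ Z, MvPolynomial.eval w G = 0)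
    (hZv : ∀ w ∈ Z, MvPolynomial.eval w (linF v) ≠ 0) (z : Fin 3 → ℂ) (hz : z ∈ Z) (j : ℕ)
    (h : MvPolynomial (Fin 3) ℂ) (hh : h.IsHomogeneous (2 * d - 2 + j))
    (h1 : MvPolynomial.eval z h ≠ 0) (h2 : ∀ w ∈ Z, w ≠ z → MvPolynomial.eval w h = 0) :
    ∃ h : MvPolynomial (Fin 3) ℂ, h.IsHomogeneous (2 * d - 2) ∧ MvPolynomial.eval z h ≠ 0 ∧
      ∀ w ∈ Z, w ≠ z → MvPolynomial.eval w h = 0 := by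
  induction j generalizing h with
  | zero => exact ⟨h, hh, h1, h2⟩
  | succ j ih =>
    obtain ⟨α, β, y, hy, he⟩ := hred (2 * d - 2 + j) (by omega) h hh
    have key : ∀ w ∈ Z, MvPolynomial.eval w h =
        MvPolynomial.eval w (linF v) * MvPolynomial.eval w y := by
      intro w hw
      rw [he]; simp [hZF w hw, hZG w hw]
    apply ih y hy
    · intro h0; apply h1; rw [key z hz, h0, mul_zero]
    · intro w hw hwz
      have := h2 w hw hwz
      rw [key w hw] at this
      exact (mul_eq_zero.mp this).resolve_left (hZv w hw)


lemma fin_hom (k : ℕ) : Module.Finite ℂ (MvPolynomial.homogeneousSubmodule (Fin 3) ℂ k) :=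
  Module.finite_of_finrank_pos (by
    have := finrank_hom' k
    have h2 : 0 < (k + 1) * (k + 2) := by positivity
    omega)

noncomputable def evZ (k : ℕ) (Z : Finset (Fin 3 → ℂ)) :
    MvPolynomial.homogeneousSubmodule (Fin 3) ℂ k →ₗ[ℂ] (Z → ℂ) :=
  LinearMap.pi fun z => (MvPolynomial.aeval (z : Fin 3 → ℂ)).toLinearMap ∘ₗ
    (MvPolynomial.homogeneousSubmodule (Fin 3) ℂ k).subtype

lemma evZ_apply (k : ℕ) (Z : Finset (Fin 3 → ℂ))
    (h : MvPolynomial.homogeneousSubmodule (Fin 3) ℂ k) (z : Z) :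
    evZ k Z h z = MvPolynomial.eval (z : Fin 3 → ℂ) (h : MvPolynomial (Fin 3) ℂ) := by
  simp [evZ, MvPolynomial.aeval_eq_eval]

lemma evZ_surj (k : ℕ) (Z : Finset (Fin 3 → ℂ))
    (hsep : ∀ z ∈ Z, ∃ h : MvPolynomial (Fin 3) ℂ, h.IsHomogeneous k ∧
      MvPolynomial.eval z h ≠ 0 ∧ ∀ w ∈ Z, w ≠ z → MvPolynomial.eval w h = 0) :
    LinearMap.range (evZ k Z) = ⊤ := by
  classical
  rw [eq_top_iff, ← (Pi.basisFun ℂ Z).span_eq, Submodule.span_le]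
  rintro _ ⟨z, rfl⟩
  obtain ⟨h, h1, h2, h3⟩ := hsep z z.2
  refine ⟨(MvPolynomial.eval (z : Fin 3 → ℂ) h)⁻¹ • ⟨h, h1⟩, ?_⟩
  funext w
  rw [map_smul, Pi.smul_apply, evZ_apply, Pi.basisFun_apply]
  by_cases hw : w = z
  · subst hw; simp [h2]
  · rw [h3 w w.2 (fun h => hw (Subtype.ext h))]
    simp [hw]

lemma noether {n : ℕ} {F G : MvPolynomial (Fin 3) ℂ}
    (hF : F.IsHomogeneous (n + 2)) (hG : G.IsHomogeneous (n + 1)) (hF0 : F ≠ 0)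
    (hinj : ∀ b : MvPolynomial (Fin 3) ℂ, b.IsHomogeneous (n + 1) → F ∣ G * b → b = 0)
    (Z : Finset (Fin 3 → ℂ)) (hcard : Z.card = (n + 2) * (n + 1))
    (hZF : ∀ w ∈ Z, MvPolynomial.eval w F = 0)
    (hZG : ∀ w ∈ Z, MvPolynomial.eval w G = 0)
    (hsep : ∀ z ∈ Z, ∃ h : MvPolynomial (Fin 3) ℂ, h.IsHomogeneous (2 * n + 2) ∧
      MvPolynomial.eval z h ≠ 0 ∧ ∀ w ∈ Z, w ≠ z → MvPolynomial.eval w h = 0)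
    (h : MvPolynomial (Fin 3) ℂ) (hh : h.IsHomogeneous (2 * n + 2))
    (hv : ∀ w ∈ Z, MvPolynomial.eval w h = 0) :
    ∃ β : MvPolynomial (Fin 3) ℂ, β.IsHomogeneous (n + 1) ∧ F ∣ h - G * β := by
  classical
  have := fin_hom
  let R := MvPolynomial.homogeneousSubmodule (Fin 3) ℂ
  let μ : (R n × R (n + 1)) →ₗ[ℂ] R (2 * n + 2) := LinearMap.codRestrict (R (2 * n + 2))
    (LinearMap.coprod ((LinearMap.mulLeft ℂ F) ∘ₗ (R n).subtype)
      ((LinearMap.mulLeft ℂ G) ∘ₗ (R (n + 1)).subtype)) (by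
      rintro ⟨⟨α, hα⟩, ⟨β, hβ⟩⟩
      have h1 : (F * α).IsHomogeneous (2 * n + 2) := by
        have := hF.mul (show α.IsHomogeneous n from hα)
        rwa [show n + 2 + n = 2 * n + 2 by ring] at this
      have h2 : (G * β).IsHomogeneous (2 * n + 2) := by
        have := hG.mul (show β.IsHomogeneous (n + 1) from hβ)
        rwa [show n + 1 + (n + 1) = 2 * n + 2 by ring] at this
      exact h1.add h2)
  have hμ : ∀ α β, (μ (α, β) : MvPolynomial (Fin 3) ℂ) = F * α + G * β := fun α β => rfl
  have hμinj : Function.Injective μ := by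
    rw [injective_iff_map_eq_zero]
    rintro ⟨α, β⟩ h0
    have h1 : F * (α : MvPolynomial (Fin 3) ℂ) + G * (β : MvPolynomial (Fin 3) ℂ) = 0 := by
      rw [← hμ, h0]; rfl
    have h2 : (β : MvPolynomial (Fin 3) ℂ) = 0 :=
      hinj _ β.2 ⟨-(α : MvPolynomial (Fin 3) ℂ), by linear_combination h1⟩
    rw [h2, mul_zero, add_zero] at h1
    have h3 := (mul_eq_zero.mp h1).resolve_left hF0
    exact Prod.ext (Subtype.ext h3) (Subtype.ext h2)
  have hle : LinearMap.range μ ≤ LinearMap.ker (evZ (2 * n + 2) Z) := by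
    rintro _ ⟨⟨α, β⟩, rfl⟩
    rw [LinearMap.mem_ker]
    funext w
    rw [evZ_apply, hμ]
    simp [hZF w w.2, hZG w w.2]
  have hr1 := LinearMap.finrank_range_of_inj hμinj
  rw [Module.finrank_prod] at hr1
  have hr2 := LinearMap.finrank_range_add_finrank_ker (evZ (2 * n + 2) Z)
  rw [evZ_surj _ Z hsep, finrank_top, Module.finrank_fintype_fun_eq_card, Fintype.card_coe,
    hcard] at hr2
  have e1 := finrank_hom' n
  have e2 := finrank_hom' (n + 1)
  have e3 := finrank_hom' (2 * n + 2)
  have heq : LinearMap.range μ = LinearMap.ker (evZ (2 * n + 2) Z) := by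
    apply Submodule.eq_of_le_of_finrank_le hle
    rw [hr1]
    change _ ≤ Module.finrank ℂ (MvPolynomial.homogeneousSubmodule (Fin 3) ℂ n) +
      Module.finrank ℂ (MvPolynomial.homogeneousSubmodule (Fin 3) ℂ (n + 1))
    nlinarith
  have hmem : (⟨h, hh⟩ : R (2 * n + 2)) ∈ LinearMap.ker (evZ (2 * n + 2) Z) := by
    rw [LinearMap.mem_ker]
    funext w
    rw [evZ_apply]
    exact hv w w.2
  rw [← heq] at hmem
  obtain ⟨⟨α, β⟩, hab⟩ := hmem
  have := congrArg Subtype.val hab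
  rw [hμ] at this
  refine ⟨β, β.2, α, ?_⟩
  change F * (α : MvPolynomial (Fin 3) ℂ) + G * β = h at this
  linear_combination -this

lemma S_big {d : ℕ} (hd : 0 < d) (S : Finset (Fin 3 → ℂ)) (a : Fin d → MvPolynomial (Fin 3) ℂ)
    (haspan : ∀ h : MvPolynomial (Fin 3) ℂ, h.IsHomogeneous (d - 1) →
      (∀ s ∈ S, MvPolynomial.eval s h = 0) → h ∈ Submodule.span ℂ (Set.range a)) :
    d * (d - 1) ≤ 2 * S.card := by
  have := fin_hom
  have h1 := LinearMap.finrank_range_add_finrank_ker (evZ (d - 1) S)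
  have h2 : Module.finrank ℂ (LinearMap.range (evZ (d - 1) S)) ≤ S.card := by
    have := Submodule.finrank_le (LinearMap.range (evZ (d - 1) S))
    simpa using this
  have h3 : Module.finrank ℂ (LinearMap.ker (evZ (d - 1) S)) ≤ d := by
    have hf : Module.Finite ℂ (Submodule.span ℂ (Set.range a)) :=
      Module.Finite.span_of_finite ℂ (Set.finite_range a)
    have h4 : Module.finrank ℂ (Submodule.span ℂ (Set.range a)) ≤ d := by
      have := finrank_range_le_card (R := ℂ) a
      rw [Fintype.card_fin] at this
      exact this
    refine le_trans ?_ h4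
    have hmap : ∀ x : LinearMap.ker (evZ (d - 1) S),
        (x.1 : MvPolynomial (Fin 3) ℂ) ∈ Submodule.span ℂ (Set.range a) := by
      intro x
      apply haspan _ x.1.2
      intro s hs
      have := x.2
      rw [LinearMap.mem_ker] at this
      have := congrFun this ⟨s, hs⟩
      rwa [evZ_apply] at this
    let ψ : LinearMap.ker (evZ (d - 1) S) →ₗ[ℂ] Submodule.span ℂ (Set.range a) :=
      LinearMap.codRestrict _ ((Submodule.subtype _) ∘ₗ (Submodule.subtype _)) hmap
    apply LinearMap.finrank_le_finrank_of_injective (f := ψ)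
    intro x y hxy
    have h5 : (ψ x : MvPolynomial (Fin 3) ℂ) = ψ y := by rw [hxy]
    exact Subtype.ext (Subtype.ext h5)
  have e1 := finrank_hom' (d - 1)
  obtain ⟨n, rfl⟩ : ∃ n, d = n + 1 := ⟨d - 1, by omega⟩
  simp only [Nat.add_sub_cancel] at *
  nlinarith


lemma conj_eval (h : MvPolynomial (Fin 3) ℂ) (p : Fin 3 → ℂ) :
    MvPolynomial.eval (conjPt p) (MvPolynomial.map (starRingEnd ℂ) h) =
      (starRingEnd ℂ) (MvPolynomial.eval p h) := by
  induction h using MvPolynomial.induction_on with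
  | C a => simp
  | add f g hf hg => rw [map_add, map_add, map_add, map_add, hf, hg]
  | mul_X f n hf => rw [map_mul, map_mul, map_mul, map_mul, hf]; simp [conjPt]

lemma conjPt_conjPt (p : Fin 3 → ℂ) : conjPt (conjPt p) = p := by
  funext i; simp [conjPt]

lemma conj_cplx (f : MvPolynomial (Fin 3) ℝ) :
    MvPolynomial.map (starRingEnd ℂ) (complexify f) = complexify f := by
  rw [complexify, MvPolynomial.map_map]
  have : (starRingEnd ℂ).comp (algebraMap ℝ ℂ) = algebraMap ℝ ℂ := by
    apply RingHom.ext
    intro x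
    simp
  rw [this]

lemma conj_conj (h : MvPolynomial (Fin 3) ℂ) :
    MvPolynomial.map (starRingEnd ℂ) (MvPolynomial.map (starRingEnd ℂ) h) = h := by
  rw [MvPolynomial.map_map]
  have : (starRingEnd ℂ).comp (starRingEnd ℂ) = RingHom.id ℂ := by ext x; simp
  rw [this, MvPolynomial.map_id]

lemma exists_S0 {d : ℕ} (hd : 0 < d) (S : Set (Fin 3 → ℂ)) (a : Fin d → MvPolynomial (Fin 3) ℂ)
    (haspan : ∀ h : MvPolynomial (Fin 3) ℂ, h.IsHomogeneous (d - 1) →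
      (∀ s ∈ S, MvPolynomial.eval s h = 0) → h ∈ Submodule.span ℂ (Set.range a)) :
    ∃ S0 : Finset (Fin 3 → ℂ), (↑S0 ⊆ S) ∧ 2 * S0.card = d * (d - 1) := by
  have hev : 2 * (d * (d - 1) / 2) = d * (d - 1) :=
    Nat.mul_div_cancel' (Nat.even_mul_pred_self d).two_dvd
  by_cases hS : S.Finite
  · have h1 := S_big hd hS.toFinset a (fun h h1 h2 => haspan h h1 (fun s hs => h2 s (by simpa using hs)))
    obtain ⟨S0, h2, h3⟩ := Finset.exists_subset_card_eq
      (show d * (d - 1) / 2 ≤ hS.toFinset.card by omega)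
    refine ⟨S0, ?_, by omega⟩
    intro s hs
    simpa using h2 hs
  · obtain ⟨S0, h2, h3⟩ := Set.Infinite.exists_subset_card_eq hS (d * (d - 1) / 2)
    exact ⟨S0, h2, by omega⟩

lemma exists_Z {d : ℕ} (hd : 0 < d) {F G : MvPolynomial (Fin 3) ℂ}
    (hFc : MvPolynomial.map (starRingEnd ℂ) F = F) (hGc : MvPolynomial.map (starRingEnd ℂ) G = G)
    (S : Set (Fin 3 → ℂ))
    (hS : ∀ s ∈ S, s ≠ 0 ∧ MvPolynomial.eval s F = 0 ∧ MvPolynomial.eval s G = 0)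
    (hSsplit : ∀ q : Fin 3 → ℂ, q ≠ 0 →
      MvPolynomial.eval q F = 0 → MvPolynomial.eval q G = 0 →
      ∃! s, s ∈ S ∪ conjPt '' S ∧ ∃ lam : ℂ, lam ≠ 0 ∧ q = lam • s)
    (hSconj : ∀ s ∈ S, ∀ s' ∈ S, ∀ lam : ℂ, lam ≠ 0 → s ≠ lam • conjPt s')
    (a : Fin d → MvPolynomial (Fin 3) ℂ)
    (haspan : ∀ h : MvPolynomial (Fin 3) ℂ, h.IsHomogeneous (d - 1) →
      (∀ s ∈ S, MvPolynomial.eval s h = 0) → h ∈ Submodule.span ℂ (Set.range a)) :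
    ∃ Z : Finset (Fin 3 → ℂ), Z.card = d * (d - 1) ∧ (∀ z ∈ Z, z ∈ S ∨ conjPt z ∈ S) ∧
      (∀ z ∈ Z, z ≠ 0 ∧ MvPolynomial.eval z F = 0 ∧ MvPolynomial.eval z G = 0) ∧
      ∀ z ∈ Z, ∀ w ∈ Z, w ≠ z → ∀ c : ℂ, z ≠ c • w := by
  classical
  obtain ⟨S0, h1, h2⟩ := exists_S0 hd S a haspan
  have hinj : Function.Injective conjPt := fun x y h => by
    rw [← conjPt_conjPt x, h, conjPt_conjPt]
  have hmem : ∀ z ∈ S0 ∪ S0.image conjPt, z ∈ S ∪ conjPt '' S := by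
    intro z hz
    rw [Finset.mem_union, Finset.mem_image] at hz
    rcases hz with hz | ⟨y, hy, rfl⟩
    · exact Or.inl (h1 hz)
    · exact Or.inr ⟨y, h1 hy, rfl⟩
  have hzero : ∀ z ∈ S ∪ conjPt '' S, z ≠ 0 ∧ MvPolynomial.eval z F = 0 ∧
      MvPolynomial.eval z G = 0 := by
    rintro z (hz | ⟨y, hy, rfl⟩)
    · exact hS z hz
    · obtain ⟨k1, k2, k3⟩ := hS y hy
      refine ⟨?_, ?_, ?_⟩
      · intro h
        apply k1
        rw [← conjPt_conjPt y, h]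
        funext i; simp [conjPt]
      · rw [← hFc, conj_eval, k2, map_zero]
      · rw [← hGc, conj_eval, k3, map_zero]
  refine ⟨S0 ∪ S0.image conjPt, ?_, ?_, ?_, ?_⟩
  · rw [Finset.card_union_of_disjoint, Finset.card_image_of_injective _ hinj]
    · omega
    · rw [Finset.disjoint_left]
      intro x hx hx'
      obtain ⟨y, hy, hyx⟩ := Finset.mem_image.mp hx'
      exact hSconj x (h1 hx) y (h1 hy) 1 one_ne_zero (by rw [one_smul, hyx])
  · intro z hz
    rcases hmem z hz with h | ⟨y, hy, rfl⟩
    · exact Or.inl h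
    · right; rwa [conjPt_conjPt]
  · exact fun z hz => hzero z (hmem z hz)
  · intro z hz w hw hwz c hc
    obtain ⟨k1, k2, k3⟩ := hzero z (hmem z hz)
    obtain ⟨s, -, hs⟩ := hSsplit z k1 k2 k3
    have hc0 : c ≠ 0 := by rintro rfl; apply k1; rw [hc, zero_smul]
    have e1 := hs z ⟨hmem z hz, 1, one_ne_zero, (one_smul _ _).symm⟩
    have e2 := hs w ⟨hmem w hw, c, hc0, hc⟩
    exact hwz (e2.trans e1.symm)

lemma divide {d : ℕ} (hd : 0 < d) {F G : MvPolynomial (Fin 3) ℂ} {e p q T U v : Fin 3 → ℝ}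
    (hF : F.IsHomogeneous d) (hG : G.IsHomogeneous (d - 1))
    (hFe : MvPolynomial.eval (fun i => (e i : ℂ)) F ≠ 0)
    (hGe : MvPolynomial.eval (fun i => (e i : ℂ)) G ≠ 0)
    (hreal : ∀ p : Fin 3 → ℝ, ∀ t : ℂ,
      MvPolynomial.eval (fun i => t * (e i : ℂ) + (p i : ℂ)) F = 0 → t.im = 0)
    (hnr : ∀ x : Fin 3 → ℝ, x ≠ 0 → MvPolynomial.eval (fun i => (x i : ℂ)) F = 0 →
      MvPolynomial.eval (fun i => (x i : ℂ)) G ≠ 0)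
    (hLP : LP d F G e)
    (hfr : ∀ m i, (if m = i then (1 : ℝ) else 0) = T i * e m + U i * p m + v i * q m)
    (hTe : ∑ i, T i * e i = 1) (hTp : ∑ i, T i * p i = 0)
    (hUe : ∑ i, U i * e i = 0) (hUp : ∑ i, U i * p i = 1)
    (hve : ∑ i, v i * e i = 0) (hv : linF v ≠ 0)
    (hFc : MvPolynomial.map (starRingEnd ℂ) F = F) (hGc : MvPolynomial.map (starRingEnd ℂ) G = G)
    (S : Set (Fin 3 → ℂ))
    (hS : ∀ s ∈ S, s ≠ 0 ∧ MvPolynomial.eval s F = 0 ∧ MvPolynomial.eval s G = 0)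
    (hSsplit : ∀ q : Fin 3 → ℂ, q ≠ 0 →
      MvPolynomial.eval q F = 0 → MvPolynomial.eval q G = 0 →
      ∃! s, s ∈ S ∪ conjPt '' S ∧ ∃ lam : ℂ, lam ≠ 0 ∧ q = lam • s)
    (hSconj : ∀ s ∈ S, ∀ s' ∈ S, ∀ lam : ℂ, lam ≠ 0 → s ≠ lam • conjPt s')
    (a : Fin d → MvPolynomial (Fin 3) ℂ)
    (hahom : ∀ i, (a i).IsHomogeneous (d - 1))
    (havan : ∀ i, ∀ s ∈ S, MvPolynomial.eval s (a i) = 0)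
    (haspan : ∀ h : MvPolynomial (Fin 3) ℂ, h.IsHomogeneous (d - 1) →
      (∀ s ∈ S, MvPolynomial.eval s h = 0) → h ∈ Submodule.span ℂ (Set.range a))
    (k i : Fin d) :
    ∃ b : MvPolynomial (Fin 3) ℂ, b.IsHomogeneous (d - 1) ∧
      F ∣ a i * MvPolynomial.map (starRingEnd ℂ) (a k) - G * b := by
  classical
  have hh := (hahom i).mul ((hahom k).map (starRingEnd ℂ))
  rcases Nat.lt_or_ge d 2 with h2 | h2
  · obtain rfl : d = 1 := by omega
    simp only [Nat.sub_self, add_zero] at hG hh ⊢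
    obtain ⟨c, rfl⟩ : ∃ c, G = MvPolynomial.C c :=
      ⟨_, MvPolynomial.totalDegree_eq_zero_iff_eq_C.mp (by simpa using hG.totalDegree_le)⟩
    rw [MvPolynomial.eval_C] at hGe
    refine ⟨MvPolynomial.C c⁻¹ * (a i * MvPolynomial.map (starRingEnd ℂ) (a k)), hh.C_mul _, ?_⟩
    rw [← mul_assoc, ← MvPolynomial.C_mul, mul_inv_cancel₀ hGe]
    simp
  · obtain ⟨Z, hcard, hZS, hZ, hZp⟩ := exists_Z hd hFc hGc S hS hSsplit hSconj a haspan
    have hp : ∀ t : ℝ, (fun i => t * e i + p i) ≠ 0 :=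
      good_of_v hUe (by rw [hUp]; exact one_ne_zero)
    have hcop := line_coprime' hreal hnr hp
    have hZv : ∀ w ∈ Z, MvPolynomial.eval w (linF v) ≠ 0 := fun w hw =>
      v_ne_zero hF hG hFe hreal hnr hfr hp (hZ w hw).1 (hZ w hw).2.1 (hZ w hw).2.2
    have hsep : ∀ z ∈ Z, ∃ h : MvPolynomial (Fin 3) ℂ, h.IsHomogeneous (2 * d - 2) ∧
        MvPolynomial.eval z h ≠ 0 ∧ ∀ w ∈ Z, w ≠ z → MvPolynomial.eval w h = 0 := by
      intro z hz
      obtain ⟨h, k1, k2, k3⟩ := sep_prod (Z.erase z) z (fun w hw =>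
        ⟨(hZ w (Finset.mem_of_mem_erase hw)).1,
          hZp z hz w (Finset.mem_of_mem_erase hw) (Finset.ne_of_mem_erase hw)⟩)
      have k4 := ((linF_hom v).pow (2 * d - 2)).mul k1
      rw [one_mul] at k4
      refine descend (fun k hk y hy =>
        reduce_deg h2 hF hG hFe hfr hTe hTp hUe hUp hcop hk hy) Z (fun w hw => (hZ w hw).2.1)
        (fun w hw => (hZ w hw).2.2) hZv z hz _ _ k4 ?_ ?_
      · rw [map_mul, map_pow]
        exact mul_ne_zero (pow_ne_zero _ (hZv z hz)) k2
      · intro w hw hwz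
        rw [map_mul, k3 w (Finset.mem_erase.mpr ⟨hwz, hw⟩), mul_zero]
    obtain ⟨n, rfl⟩ : ∃ n, d = n + 2 := ⟨d - 2, by omega⟩
    have e1 : n + 2 - 1 = n + 1 := by omega
    have e2 : 2 * (n + 2) - 2 = 2 * n + 2 := by omega
    have e3 : n + 1 + (n + 1) = 2 * n + 2 := by ring
    have hF0 : F ≠ 0 := by rintro rfl; simp at hFe
    rw [e1] at hh hG hcard ⊢
    rw [e2] at hsep
    rw [e3] at hh
    refine noether hF hG hF0 (fun b hb hdv => ?_) Z hcard (fun w hw => (hZ w hw).2.1)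
        (fun w hw => (hZ w hw).2.2) hsep _ hh ?_
    · exact coprime_zero hd hLP hve hv (by rw [e1]; exact hb) hdv
    · intro w hw
      rw [map_mul]
      rcases hZS w hw with h | h
      · rw [havan i w h, zero_mul]
      · rw [← conjPt_conjPt w, conj_eval, havan k _ h, map_zero, mul_zero]

open scoped ComplexOrder

lemma conj_eval_line (h : MvPolynomial (Fin 3) ℂ) (e p : Fin 3 → ℝ) (t : ℝ) :
    MvPolynomial.eval (fun i => (t : ℂ) * (e i : ℂ) + (p i : ℂ)) (MvPolynomial.map (starRingEnd ℂ) h) =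
      star (MvPolynomial.eval (fun i => (t : ℂ) * (e i : ℂ) + (p i : ℂ)) h) := by
  have := conj_eval h (fun i => (t : ℂ) * (e i : ℂ) + (p i : ℂ))
  have h2 : conjPt (fun i => (t : ℂ) * (e i : ℂ) + (p i : ℂ)) =
      fun i => (t : ℂ) * (e i : ℂ) + (p i : ℂ) := by
    funext i; simp [conjPt]
  rw [h2] at this
  exact this

lemma conj_eval_real (h : MvPolynomial (Fin 3) ℂ) (e : Fin 3 → ℝ) :
    MvPolynomial.eval (fun i => (e i : ℂ)) (MvPolynomial.map (starRingEnd ℂ) h) =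
      star (MvPolynomial.eval (fun i => (e i : ℂ)) h) := by
  have := conj_eval_line h e 0 1
  simpa using this

section
variable {d : ℕ} (hd : 0 < d) {F G : MvPolynomial (Fin 3) ℂ} {e v : Fin 3 → ℝ}
    {a : Fin d → MvPolynomial (Fin 3) ℂ} {b : Fin d → Fin d → MvPolynomial (Fin 3) ℂ}

lemma b_conj (hd : 0 < d) (hLP : LP d F G e) (hve : ∑ i, v i * e i = 0) (hv : linF v ≠ 0)
    (hFc : MvPolynomial.map (starRingEnd ℂ) F = F) (hGc : MvPolynomial.map (starRingEnd ℂ) G = G)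
    (hbh : ∀ k i, (b k i).IsHomogeneous (d - 1))
    (hb : ∀ k i, F ∣ a i * MvPolynomial.map (starRingEnd ℂ) (a k) - G * b k i) (k i : Fin d) :
    MvPolynomial.map (starRingEnd ℂ) (b k i) = b i k := by
  have h1 := map_dvd (MvPolynomial.map (starRingEnd ℂ)) (hb k i)
  rw [map_sub, map_mul, map_mul, hFc, hGc, conj_conj] at h1
  have h2 : F ∣ G * (MvPolynomial.map (starRingEnd ℂ) (b k i) - b i k) := by
    have := dvd_sub (hb i k) h1
    convert this using 1
    ring
  exact sub_eq_zero.mp (coprime_zero hd hLP hve hv (((hbh k i).map _).sub (hbh i k)) h2)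

lemma b_zero (hd : 0 < d) (hLP : LP d F G e) (hve : ∑ i, v i * e i = 0) (hv : linF v ≠ 0)
    (hGc : MvPolynomial.map (starRingEnd ℂ) G = G)
    (hahom : ∀ i, (a i).IsHomogeneous (d - 1))
    (ha1 : a ⟨0, hd⟩ = G)
    (hbh : ∀ k i, (b k i).IsHomogeneous (d - 1))
    (hb : ∀ k i, F ∣ a i * MvPolynomial.map (starRingEnd ℂ) (a k) - G * b k i) (i : Fin d) :
    b ⟨0, hd⟩ i = a i := by
  have h1 := hb ⟨0, hd⟩ i
  rw [ha1, hGc] at h1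
  have h2 : F ∣ G * (a i - b ⟨0, hd⟩ i) := by
    convert h1 using 1
    ring
  exact (sub_eq_zero.mp (coprime_zero hd hLP hve hv ((hahom i).sub (hbh _ i)) h2)).symm

/-- values of the `a i` at the points of a line -/
noncomputable def Xm (a : Fin d → MvPolynomial (Fin 3) ℂ) (e p : Fin 3 → ℝ) (t : Fin d → ℝ) :
    Matrix (Fin d) (Fin d) ℂ := fun r i =>
  MvPolynomial.eval (fun j => (t r : ℂ) * (e j : ℂ) + (p j : ℂ)) (a i)

noncomputable def Am (b : Fin d → Fin d → MvPolynomial (Fin 3) ℂ) (e : Fin 3 → ℝ) :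
    Matrix (Fin d) (Fin d) ℂ := fun k i => MvPolynomial.eval (fun j => (e j : ℂ)) (b k i)

lemma Gb_eval (hb : ∀ k i, F ∣ a i * MvPolynomial.map (starRingEnd ℂ) (a k) - G * b k i)
    (k i : Fin d) (e p : Fin 3 → ℝ) (t : ℝ)
    (hF : MvPolynomial.eval (fun j => (t : ℂ) * (e j : ℂ) + (p j : ℂ)) F = 0) :
    MvPolynomial.eval (fun j => (t : ℂ) * (e j : ℂ) + (p j : ℂ)) G *
      MvPolynomial.eval (fun j => (t : ℂ) * (e j : ℂ) + (p j : ℂ)) (b k i) =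
    star (MvPolynomial.eval (fun j => (t : ℂ) * (e j : ℂ) + (p j : ℂ)) (a k)) *
      MvPolynomial.eval (fun j => (t : ℂ) * (e j : ℂ) + (p j : ℂ)) (a i) := by
  obtain ⟨c, hc⟩ := hb k i
  have := congrArg (MvPolynomial.eval (fun j => (t : ℂ) * (e j : ℂ) + (p j : ℂ))) hc
  rw [map_mul, hF, zero_mul, map_sub, map_mul, map_mul, conj_eval_line] at this
  linear_combination -this

lemma A_eq (hd : 0 < d) (hbh : ∀ k i, (b k i).IsHomogeneous (d - 1))
    (hb : ∀ k i, F ∣ a i * MvPolynomial.map (starRingEnd ℂ) (a k) - G * b k i)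
    {p : Fin 3 → ℝ} {t ω : Fin d → ℝ}
    (hF : ∀ r, MvPolynomial.eval (fun i => (t r : ℂ) * (e i : ℂ) + (p i : ℂ)) F = 0)
    (hc : ∀ q : Polynomial ℂ, q.degree < d → q.coeff (d - 1) =
        ∑ r, (ω r : ℂ) * (MvPolynomial.eval
          (fun i => (t r : ℂ) * (e i : ℂ) + (p i : ℂ)) G * q.eval (t r : ℂ))) :
    Am b e = (Xm a e p t).conjTranspose * Matrix.diagonal (fun r => (ω r : ℂ)) * Xm a e p t := by
  ext k i
  have h1 := hc _ (lineC_degree_lt (show d - 1 < d by omega) e p (hbh k i))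
  rw [lineC_coeff_top e p (hbh k i)] at h1
  rw [Am, h1, Matrix.mul_apply]
  refine Finset.sum_congr rfl fun r _ => ?_
  rw [lineC_eval, Gb_eval hb k i e p (t r) (hF r), Matrix.mul_diagonal, Matrix.conjTranspose_apply]
  simp only [Xm]
  ring

lemma A_posDef (hd : 0 < d) (hLP : LP d F G e) (hve : ∑ i, v i * e i = 0) (hv : linF v ≠ 0)
    (hFc : MvPolynomial.map (starRingEnd ℂ) F = F) (hGc : MvPolynomial.map (starRingEnd ℂ) G = G)
    (hahom : ∀ i, (a i).IsHomogeneous (d - 1)) (haindep : LinearIndependent ℂ a)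
    (hbh : ∀ k i, (b k i).IsHomogeneous (d - 1))
    (hb : ∀ k i, F ∣ a i * MvPolynomial.map (starRingEnd ℂ) (a k) - G * b k i) :
    (Am b e).PosDef := by
  rw [Matrix.posDef_iff_dotProduct_mulVec]
  constructor
  · ext i k
    rw [Matrix.conjTranspose_apply, Am, ← conj_eval_real, b_conj hd hLP hve hv hFc hGc hbh hb]; rfl
  · intro x hx
    set h := ∑ i, x i • a i with hh
    have hne : h ≠ 0 := by
      intro h0
      apply hx
      funext i
      exact Fintype.linearIndependent_iff.mp haindep x h0 i
    have hhom : h.IsHomogeneous (d - 1) :=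
      MvPolynomial.IsHomogeneous.sum _ _ _ fun i _ => by
        rw [MvPolynomial.smul_eq_C_mul]; exact (hahom i).C_mul _
    obtain ⟨p, hp, hhp⟩ : ∃ p : Fin 3 → ℝ, ∑ i, v i * p i ≠ 0 ∧
        MvPolynomial.eval (fun i => (p i : ℂ)) h ≠ 0 := by
      by_contra! hcon
      exact hne (zero_of_real_off hv hcon)
    obtain ⟨t, ω, ht, hω, hF, -, hc⟩ := hLP p (good_of_v hve hp)
    have hX : ∀ r, (Xm a e p t).mulVec x r =
        MvPolynomial.eval (fun j => (t r : ℂ) * (e j : ℂ) + (p j : ℂ)) h := by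
      intro r
      rw [hh, map_sum, Matrix.mulVec, dotProduct]
      refine Finset.sum_congr rfl fun i _ => ?_
      rw [MvPolynomial.smul_eval, Xm]; ring
    have hsum : star x ⬝ᵥ (Am b e).mulVec x =
        ∑ r, (ω r : ℂ) * (star ((Xm a e p t).mulVec x r) * (Xm a e p t).mulVec x r) := by
      rw [A_eq hd hbh hb hF hc, ← Matrix.mulVec_mulVec, ← Matrix.mulVec_mulVec,
        Matrix.dotProduct_mulVec, Matrix.vecMul_conjTranspose, star_star, dotProduct]
      refine Finset.sum_congr rfl fun r _ => ?_
      rw [Matrix.mulVec_diagonal, Pi.star_apply]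
      ring
    have hnn : ∀ r, 0 ≤ (ω r : ℂ) * (star ((Xm a e p t).mulVec x r) * (Xm a e p t).mulVec x r) :=
      fun r => mul_nonneg (by exact_mod_cast (hω r).le) (star_mul_self_nonneg _)
    rw [hsum]
    apply lt_of_le_of_ne (Finset.sum_nonneg fun r _ => hnn r)
    intro h0
    have h1 := (Finset.sum_eq_zero_iff_of_nonneg (fun r _ => hnn r)).mp h0.symm
    apply hhp
    apply eval_of_lineC_zero (e := e)
    apply poly_zero_of_roots (lineC_degree_lt (by omega) e p hhom) ht
    intro r
    rw [lineC_eval, ← hX]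
    have h2 := (mul_eq_zero.mp (h1 r (Finset.mem_univ r))).resolve_left
      (by exact_mod_cast (hω r).ne')
    rcases mul_eq_zero.mp h2 with h3 | h3
    · simpa using h3
    · exact h3

lemma X_det (hA : (Am b e).PosDef) {p : Fin 3 → ℝ} {t ω : Fin d → ℝ}
    (h : Am b e = (Xm a e p t).conjTranspose * Matrix.diagonal (fun r => (ω r : ℂ)) * Xm a e p t) :
    (Xm a e p t).det ≠ 0 := by
  intro h0
  have h1 := (Matrix.isUnit_iff_isUnit_det _).mp hA.isUnit
  rw [h, Matrix.det_mul, h0, mul_zero] at h1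
  simp at h1

end

open scoped ComplexOrder

section
variable {d : ℕ} {F G : MvPolynomial (Fin 3) ℂ} {e v : Fin 3 → ℝ}
    {a : Fin d → MvPolynomial (Fin 3) ℂ} {b : Fin d → Fin d → MvPolynomial (Fin 3) ℂ}

lemma pencil_eval (M : Fin 3 → Matrix (Fin d) (Fin d) ℂ) (x : Fin 3 → ℂ) (i j : Fin d) :
    MvPolynomial.eval x (pencil (M 0) (M 1) (M 2) i j) = (∑ l, x l • M l) i j := by
  simp [pencil, Fin.sum_univ_three, Matrix.add_apply]

lemma pencil_pderiv (M : Fin 3 → Matrix (Fin d) (Fin d) ℂ) (l : Fin 3) (i j : Fin d) :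
    MvPolynomial.pderiv l (pencil (M 0) (M 1) (M 2) i j) = MvPolynomial.C (M l i j) := by
  fin_cases l <;> simp [pencil, MvPolynomial.pderiv_X]

lemma pencil_hom (M : Fin 3 → Matrix (Fin d) (Fin d) ℂ) (i j : Fin d) :
    (pencil (M 0) (M 1) (M 2) i j).IsHomogeneous 1 := by
  have h : ∀ l : Fin 3, ∀ c : ℂ,
      (MvPolynomial.X l * MvPolynomial.C c : MvPolynomial (Fin 3) ℂ).IsHomogeneous 1 := by
    intro l c
    rw [mul_comm]
    exact (MvPolynomial.isHomogeneous_X _ _).C_mul _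
  exact ((h 0 _).add (h 1 _)).add (h 2 _)

noncomputable def Bm (b : Fin d → Fin d → MvPolynomial (Fin 3) ℂ) (e : Fin 3 → ℝ) (l : Fin 3) :
    Matrix (Fin d) (Fin d) ℂ := fun k i =>
  MvPolynomial.eval (fun j => (e j : ℂ)) (MvPolynomial.pderiv l (b k i))

lemma euler {m : ℕ} {h : MvPolynomial (Fin 3) ℂ} (hh : h.IsHomogeneous m) (x : Fin 3 → ℂ) :
    ∑ l, x l * MvPolynomial.eval x (MvPolynomial.pderiv l h) = m * MvPolynomial.eval x h := by
  have := congrArg (MvPolynomial.eval x) hh.sum_X_mul_pderiv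
  simpa using this

lemma construct (hd : 0 < d) (hF : F.IsHomogeneous d) (hLP : LP d F G e)
    (hve : ∑ i, v i * e i = 0) (hv : linF v ≠ 0)
    (hb0 : ∀ i, b ⟨0, hd⟩ i = a i)
    (hbh : ∀ k i, (b k i).IsHomogeneous (d - 1))
    (hb : ∀ k i, F ∣ a i * MvPolynomial.map (starRingEnd ℂ) (a k) - G * b k i)
    (hA : (Am b e).PosDef) (M : Fin 3 → Matrix (Fin d) (Fin d) ℂ)
    (hM1 : Am b e * (∑ l, (e l : ℂ) • M l) = MvPolynomial.eval (fun j => (e j : ℂ)) F • 1)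
    (hM2 : ∀ l, Bm b e l * (∑ l, (e l : ℂ) • M l) + Am b e * M l =
      MvPolynomial.eval (fun j => (e j : ℂ)) (MvPolynomial.pderiv l F) • 1) (j : Fin d) :
    ∑ i, a i * pencil (M 0) (M 1) (M 2) i j = if j = ⟨0, hd⟩ then F else 0 := by
  set P := pencil (M 0) (M 1) (M 2) with hP
  let E : Fin d → MvPolynomial (Fin 3) ℂ := fun k =>
    ∑ i, b k i * P i j - MvPolynomial.C ((1 : Matrix (Fin d) (Fin d) ℂ) k j) * F
  have hE : ∀ k, E k = ∑ i, b k i * P i j -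
    MvPolynomial.C ((1 : Matrix (Fin d) (Fin d) ℂ) k j) * F := fun k => rfl
  have hEh : ∀ k, (E k).IsHomogeneous d := by
    intro k
    refine (MvPolynomial.IsHomogeneous.sum _ _ _ fun i _ => ?_).sub (hF.C_mul _)
    have := (hbh k i).mul (pencil_hom M i j)
    rwa [Nat.sub_add_cancel hd] at this
  have hEd : ∀ p k, (lineC e p (E k)).coeff d = 0 := by
    intro p k
    rw [lineC_coeff_top e p (hEh k), hE, map_sub, map_sum, map_mul, MvPolynomial.eval_C]
    have h1 := congrFun (congrFun hM1 k) j
    rw [Matrix.mul_apply, Matrix.smul_apply, smul_eq_mul] at h1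
    simp only [map_mul, hP, pencil_eval]
    rw [mul_comm, ← h1]
    exact sub_self _
  have hEd1 : ∀ p k, (lineC e p (E k)).coeff (d - 1) = 0 := by
    intro p k
    have h0 : (lineC e p (E k)).coeff (d - 1) = (Polynomial.X * lineC e p (E k)).coeff d := by
      obtain ⟨n, rfl⟩ : ∃ n, d = n + 1 := ⟨d - 1, by omega⟩
      rw [Polynomial.coeff_X_mul]; rfl
    rw [h0, lineC_coeff_sub e p (hEh k)]
    refine Finset.sum_eq_zero fun l _ => ?_
    have h1 := congrFun (congrFun (hM2 l) k) j
    rw [Matrix.add_apply, Matrix.mul_apply, Matrix.mul_apply, Matrix.smul_apply, smul_eq_mul] at h1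
    rw [mul_eq_zero]; right
    rw [hE, map_sub, map_sum, MvPolynomial.pderiv_C_mul, map_sub, map_sum, map_mul,
      MvPolynomial.eval_C]
    rw [mul_comm, ← h1, ← Finset.sum_add_distrib, sub_eq_zero]
    refine Finset.sum_congr rfl fun i _ => ?_
    rw [MvPolynomial.pderiv_mul, map_add, map_mul, map_mul, hP, pencil_eval, pencil_pderiv,
      MvPolynomial.eval_C]
    rfl
  have hEdeg : ∀ p k, (lineC e p (E k)).degree < d := by
    intro p k
    rw [Polynomial.degree_lt_iff_coeff_zero]
    intro m hm
    rcases Nat.eq_or_lt_of_le hm with h | h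
    · rw [← h]; exact hEd p k
    · exact Polynomial.coeff_eq_zero_of_natDegree_lt (lt_of_le_of_lt (lineC_natDegree e p (hEh k)) h)
  have hE0 : E ⟨0, hd⟩ = 0 := by
    apply zero_of_real_off hv
    intro p hp
    obtain ⟨t, ω, ht, hω, hF, hG, hc⟩ := hLP p (good_of_v hve hp)
    apply eval_of_lineC_zero (e := e)
    apply poly_zero_of_roots (hEdeg p _) ht
    have hAX := A_eq hd hbh hb hF hc
    have hX := X_det hA hAX
    set y : Fin d → ℂ := fun r => (ω r : ℂ) * (lineC e p (E ⟨0, hd⟩)).eval (t r : ℂ) with hy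
    have hXy : (Xm a e p t).conjTranspose.mulVec y = 0 := by
      funext k
      have h1 := hc _ (hEdeg p k)
      rw [hEd1] at h1
      rw [Pi.zero_apply, h1, Matrix.mulVec, dotProduct]
      refine Finset.sum_congr rfl fun r _ => ?_
      rw [hy, Matrix.conjTranspose_apply]
      simp only [lineC_eval]
      have hk : MvPolynomial.eval (fun i => (t r : ℂ) * (e i : ℂ) + (p i : ℂ)) G *
          MvPolynomial.eval (fun i => (t r : ℂ) * (e i : ℂ) + (p i : ℂ)) (E k) =
          star (Xm a e p t r k) *
          MvPolynomial.eval (fun i => (t r : ℂ) * (e i : ℂ) + (p i : ℂ)) (E ⟨0, hd⟩) := by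
        have h3 : ∀ k, MvPolynomial.eval (fun i => (t r : ℂ) * (e i : ℂ) + (p i : ℂ)) (E k) =
          ∑ i, MvPolynomial.eval (fun i => (t r : ℂ) * (e i : ℂ) + (p i : ℂ)) (b k i) *
            MvPolynomial.eval (fun i => (t r : ℂ) * (e i : ℂ) + (p i : ℂ)) (P i j) := by
          intro k
          rw [hE, map_sub, map_mul _ (MvPolynomial.C _) F, hF r, mul_zero, sub_zero, map_sum]
          exact Finset.sum_congr rfl fun i _ => map_mul _ _ _
        rw [h3, h3, Finset.mul_sum, Finset.mul_sum]
        refine Finset.sum_congr rfl fun i _ => ?_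
        rw [← mul_assoc, ← mul_assoc, Gb_eval hb k i e p (t r) (hF r), hb0]
        rfl
      linear_combination (-(ω r : ℂ)) * hk
    have hy0 := Matrix.eq_zero_of_mulVec_eq_zero (by
      rw [Matrix.det_conjTranspose]; simpa using hX) hXy
    intro r
    have := congrFun hy0 r
    exact (mul_eq_zero.mp this).resolve_left (by exact_mod_cast (hω r).ne')
  rw [hE, sub_eq_zero] at hE0
  simp only [hb0] at hE0
  rw [hE0, Matrix.one_apply]
  by_cases hj : j = ⟨0, hd⟩
  · simp [hj]
  · rw [if_neg hj, if_neg (Ne.symm hj)]; simp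

lemma exists_M (hd : 0 < d) (hF : F.IsHomogeneous d)
    (hFc : MvPolynomial.map (starRingEnd ℂ) F = F)
    (hbc : ∀ k i, MvPolynomial.map (starRingEnd ℂ) (b k i) = b i k)
    (hbh : ∀ k i, (b k i).IsHomogeneous (d - 1))
    (hA : (Am b e).PosDef) :
    ∃ M : Fin 3 → Matrix (Fin d) (Fin d) ℂ, (∀ l, (M l).IsHermitian) ∧
      (∑ l, (e l : ℂ) • M l = MvPolynomial.eval (fun j => (e j : ℂ)) F • (Am b e)⁻¹) ∧
      (Am b e * (∑ l, (e l : ℂ) • M l) = MvPolynomial.eval (fun j => (e j : ℂ)) F • 1) ∧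
      (∀ l, Bm b e l * (∑ l, (e l : ℂ) • M l) + Am b e * M l =
      MvPolynomial.eval (fun j => (e j : ℂ)) (MvPolynomial.pderiv l F) • 1) := by
  have hu := (Matrix.isUnit_iff_isUnit_det _).mp hA.isUnit
  set A := Am b e with hAdef
  set c := MvPolynomial.eval (fun j => (e j : ℂ)) F with hc
  have hpd : ∀ l (h : MvPolynomial (Fin 3) ℂ),
      star (MvPolynomial.eval (fun j => (e j : ℂ)) (MvPolynomial.pderiv l h)) =
      MvPolynomial.eval (fun j => (e j : ℂ)) (MvPolynomial.pderiv l (MvPolynomial.map (starRingEnd ℂ) h)) := by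
    intro l h
    rw [← conj_eval_real, MvPolynomial.pderiv_map]
  have hBh : ∀ l, (Bm b e l).IsHermitian := by
    intro l
    ext i k
    rw [Matrix.conjTranspose_apply, Bm, hpd, hbc]; rfl
  have hcs : star c = c := by rw [hc, ← conj_eval_real, hFc]
  have hsum : ∑ l, (e l : ℂ) • ((MvPolynomial.eval (fun j => (e j : ℂ)) (MvPolynomial.pderiv l F)) • A⁻¹ -
    c • (A⁻¹ * Bm b e l * A⁻¹)) = c • A⁻¹ := by
    have h1 : ∑ l, (e l : ℂ) • Bm b e l = ((d - 1 : ℕ) : ℂ) • A := by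
      ext k i
      rw [Matrix.sum_apply]
      exact euler (hbh k i) _
    have h2 := euler hF (fun j => (e j : ℂ))
    have h3 : ∑ l, (e l : ℂ) • ((MvPolynomial.eval (fun j => (e j : ℂ)) (MvPolynomial.pderiv l F)) • A⁻¹ -
        c • (A⁻¹ * Bm b e l * A⁻¹)) =
        (∑ l, (e l : ℂ) * MvPolynomial.eval (fun j => (e j : ℂ)) (MvPolynomial.pderiv l F)) • A⁻¹ -
        c • (A⁻¹ * (∑ l, (e l : ℂ) • Bm b e l) * A⁻¹) := by
      simp only [Fin.sum_univ_three, mul_add, add_mul, Matrix.mul_smul, Matrix.smul_mul]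
      module
    rw [h3, h1, h2, Matrix.mul_smul, Matrix.nonsing_inv_mul _ hu, Matrix.smul_mul, Matrix.one_mul,
      ← hc, Nat.cast_sub hd]
    push_cast
    module
  refine ⟨fun l => (MvPolynomial.eval (fun j => (e j : ℂ)) (MvPolynomial.pderiv l F)) • A⁻¹ -
    c • (A⁻¹ * Bm b e l * A⁻¹), ?_, hsum, ?_, ?_⟩
  · intro l
    have hAi : (A⁻¹).IsHermitian := hA.inv.isHermitian
    rw [Matrix.IsHermitian, Matrix.conjTranspose_sub, Matrix.conjTranspose_smul,
      Matrix.conjTranspose_smul, hcs, hpd, hFc, Matrix.conjTranspose_mul, Matrix.conjTranspose_mul,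
      hAi, (hBh l)]
    simp only [Matrix.mul_assoc]
  · rw [hsum, Matrix.mul_smul, Matrix.mul_nonsing_inv _ hu]
  · intro l
    rw [hsum, Matrix.mul_sub, Matrix.mul_smul, Matrix.mul_smul, Matrix.mul_smul, ← Matrix.mul_assoc A,
      ← Matrix.mul_assoc A, Matrix.mul_nonsing_inv _ hu, Matrix.one_mul]
    module

end

open scoped ComplexOrder

section
variable {d : ℕ} {F G : MvPolynomial (Fin 3) ℂ} {e v : Fin 3 → ℝ}
    {a : Fin d → MvPolynomial (Fin 3) ℂ} {b : Fin d → Fin d → MvPolynomial (Fin 3) ℂ}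

lemma det_hom (M : Fin 3 → Matrix (Fin d) (Fin d) ℂ) :
    (pencil (M 0) (M 1) (M 2)).det.IsHomogeneous d := by
  rw [Matrix.det_apply']
  refine MvPolynomial.IsHomogeneous.sum _ _ _ fun σ _ => ?_
  have h1 := MvPolynomial.IsHomogeneous.prod Finset.univ
    (fun i => pencil (M 0) (M 1) (M 2) (σ i) i) (fun _ => 1) (fun i _ => pencil_hom M (σ i) i)
  rw [Finset.sum_const, Finset.card_univ, Fintype.card_fin, smul_eq_mul, mul_one] at h1
  have h2 := h1.C_mul (((Equiv.Perm.sign σ : ℤ) : ℂ))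
  rwa [map_intCast] at h2

lemma det_eval (M : Fin 3 → Matrix (Fin d) (Fin d) ℂ) (x : Fin 3 → ℂ) :
    MvPolynomial.eval x (pencil (M 0) (M 1) (M 2)).det = (∑ l, x l • M l).det := by
  rw [RingHom.map_det]
  congr 1
  ext i j
  exact pencil_eval M x i j

lemma det_part (hd : 0 < d) (hF : F.IsHomogeneous d) (hLP : LP d F G e)
    (hve : ∑ i, v i * e i = 0) (hv : linF v ≠ 0) (ha1 : a ⟨0, hd⟩ = G)
    (M : Fin 3 → Matrix (Fin d) (Fin d) ℂ)
    (haM : ∀ j, ∑ i, a i * pencil (M 0) (M 1) (M 2) i j = if j = ⟨0, hd⟩ then F else 0) :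
    MvPolynomial.C (∑ l, (e l : ℂ) • M l).det * F =
      MvPolynomial.C (MvPolynomial.eval (fun j => (e j : ℂ)) F) *
        (pencil (M 0) (M 1) (M 2)).det := by
  rw [← sub_eq_zero]
  set y := MvPolynomial.C (∑ l, (e l : ℂ) • M l).det * F -
    MvPolynomial.C (MvPolynomial.eval (fun j => (e j : ℂ)) F) *
        (pencil (M 0) (M 1) (M 2)).det with hy
  have hyh : y.IsHomogeneous d := (hF.C_mul _).sub ((det_hom M).C_mul _)
  apply zero_of_real_off hv
  intro p hp
  obtain ⟨t, ω, ht, hω, hFr, hG, hc⟩ := hLP p (good_of_v hve hp)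
  apply eval_of_lineC_zero (e := e)
  have hdeg : (lineC e p y).degree < d := by
    rw [Polynomial.degree_lt_iff_coeff_zero]
    intro m hm
    rcases Nat.eq_or_lt_of_le hm with h | h
    · rw [← h, lineC_coeff_top e p hyh, hy, map_sub, map_mul, map_mul, MvPolynomial.eval_C,
        MvPolynomial.eval_C, det_eval]
      ring
    · exact Polynomial.coeff_eq_zero_of_natDegree_lt (lt_of_le_of_lt (lineC_natDegree e p hyh) h)
  apply poly_zero_of_roots hdeg ht
  intro r
  rw [lineC_eval, hy, map_sub, map_mul, map_mul, hFr r, mul_zero, zero_sub, neg_eq_zero,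
    mul_eq_zero]
  right
  rw [det_eval]
  apply Matrix.exists_vecMul_eq_zero_iff.mp
  refine ⟨Xm a e p t r, ?_, ?_⟩
  · intro h
    have := congrFun h ⟨0, hd⟩
    rw [Xm, ha1] at this
    exact hG r this
  · funext j
    have := congrArg (MvPolynomial.eval (fun j => (t r : ℂ) * (e j : ℂ) + (p j : ℂ))) (haM j)
    rw [map_sum] at this
    simp only [map_mul, pencil_eval] at this
    rw [Pi.zero_apply, Matrix.vecMul, dotProduct]
    refine this.trans ?_
    split_ifs
    · exact hFr r
    · exact map_zero _

lemma line_rel (hd : 0 < d) {t : Fin d → ℝ} {p : Fin 3 → ℝ}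
    (hFr : ∀ r, MvPolynomial.eval (fun i => (t r : ℂ) * (e i : ℂ) + (p i : ℂ)) F = 0)
    (M : Fin 3 → Matrix (Fin d) (Fin d) ℂ)
    (haM : ∀ j, ∑ i, a i * pencil (M 0) (M 1) (M 2) i j = if j = ⟨0, hd⟩ then F else 0) :
    Xm a e p t * (∑ l, (p l : ℂ) • M l) =
      - (Matrix.diagonal (fun r => (t r : ℂ)) * (Xm a e p t * ∑ l, (e l : ℂ) • M l)) := by
  rw [eq_neg_iff_add_eq_zero]
  ext r j
  have := congrArg (MvPolynomial.eval (fun j => (t r : ℂ) * (e j : ℂ) + (p j : ℂ))) (haM j)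
  have h0 : MvPolynomial.eval (fun j => (t r : ℂ) * (e j : ℂ) + (p j : ℂ))
      (if j = ⟨0, hd⟩ then F else 0) = 0 := by
    split_ifs
    · exact hFr r
    · exact map_zero _
  rw [h0, map_sum] at this
  simp only [map_mul, pencil_eval] at this
  rw [Matrix.zero_apply, ← this, Matrix.add_apply, Matrix.diagonal_mul, Matrix.mul_apply,
    Matrix.mul_apply, Finset.mul_sum, ← Finset.sum_add_distrib]
  refine Finset.sum_congr rfl fun i _ => ?_
  simp only [Xm, Matrix.sum_apply, Matrix.smul_apply, smul_eq_mul, Fin.sum_univ_three]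
  ring

lemma uniq (hd : 0 < d) (hLP : LP d F G e)
    (hve : ∑ i, v i * e i = 0) (hv : linF v ≠ 0)
    (haindep : LinearIndependent ℂ a)
    (hbh : ∀ k i, (b k i).IsHomogeneous (d - 1))
    (hb : ∀ k i, F ∣ a i * MvPolynomial.map (starRingEnd ℂ) (a k) - G * b k i)
    (hA : (Am b e).PosDef)
    (M T : Fin 3 → Matrix (Fin d) (Fin d) ℂ)
    (hMe : IsUnit (∑ l, (e l : ℂ) • M l).det)
    (haM : ∀ j, ∑ i, a i * pencil (M 0) (M 1) (M 2) i j = if j = ⟨0, hd⟩ then F else 0)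
    (hMa : ∀ i, ∑ j, pencil (M 0) (M 1) (M 2) i j * MvPolynomial.map (starRingEnd ℂ) (a j) =
        if i = ⟨0, hd⟩ then F else 0)
    (haT : ∀ j, ∑ i, a i * pencil (T 0) (T 1) (T 2) i j = if j = ⟨0, hd⟩ then F else 0)
    (hTa : ∀ i, ∑ j, pencil (T 0) (T 1) (T 2) i j * MvPolynomial.map (starRingEnd ℂ) (a j) =
        if i = ⟨0, hd⟩ then F else 0) : T = M := by
  set Me := ∑ l, (e l : ℂ) • M l with hMedef
  set K := Me⁻¹ * (∑ l, (e l : ℂ) • T l) with hK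
  have hMK : Me * K = ∑ l, (e l : ℂ) • T l := by
    rw [hK, ← Matrix.mul_assoc, Matrix.mul_nonsing_inv _ hMe, Matrix.one_mul]
  -- T(p) = M(p) K
  have hTM : pencil (T 0) (T 1) (T 2) = pencil (M 0) (M 1) (M 2) * K.map MvPolynomial.C := by
    ext1 i j
    rw [← sub_eq_zero]
    apply zero_of_real_off hv
    intro p hp
    obtain ⟨t, ω, ht, hω, hFr, hG, hc⟩ := hLP p (good_of_v hve hp)
    have hX := X_det hA (A_eq hd hbh hb hFr hc)
    have r1 := line_rel hd hFr M haM
    have r2 := line_rel hd hFr T haT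
    have h1 : Xm a e p t * (∑ l, (p l : ℂ) • T l) =
        Xm a e p t * ((∑ l, (p l : ℂ) • M l) * K) := by
      rw [r2, ← Matrix.mul_assoc (Xm a e p t), r1, ← hMK, hMedef]
      simp only [Matrix.neg_mul, Matrix.mul_assoc]
    have h2 : (∑ l, (p l : ℂ) • T l) = (∑ l, (p l : ℂ) • M l) * K := by
      have hu : IsUnit (Xm a e p t).det := isUnit_iff_ne_zero.mpr hX
      have := congrArg (fun Y => (Xm a e p t)⁻¹ * Y) h1
      simpa only [Matrix.nonsing_inv_mul_cancel_left _ _ hu] using this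
    rw [map_sub, pencil_eval, h2, Matrix.mul_apply, Matrix.mul_apply, map_sum, sub_eq_zero]
    refine Finset.sum_congr rfl fun k _ => ?_
    rw [map_mul, pencil_eval, Matrix.map_apply, MvPolynomial.eval_C]
  have hdet : (pencil (M 0) (M 1) (M 2)).det ≠ 0 := by
    intro h
    have := det_eval M (fun l => (e l : ℂ))
    rw [h, map_zero] at this
    rw [← hMedef] at this
    rw [← this] at hMe
    simp at hMe
  set abar : Fin d → MvPolynomial (Fin 3) ℂ := fun j => MvPolynomial.map (starRingEnd ℂ) (a j)
    with habar
  have hK1 : (K.map MvPolynomial.C).mulVec abar - abar = 0 := by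
    apply Matrix.eq_zero_of_mulVec_eq_zero hdet
    rw [Matrix.mulVec_sub, Matrix.mulVec_mulVec, ← hTM, sub_eq_zero]
    funext i
    exact (hTa i).trans (hMa i).symm
  have hK2 : K = 1 := by
    rw [← sub_eq_zero]
    ext i j
    have h1 := congrFun hK1 i
    have h2 : ∑ j, (star ((K - 1) i j)) • a j = 0 := by
      have h3 := congrArg (MvPolynomial.map (starRingEnd ℂ)) h1
      simp only [Pi.sub_apply, Matrix.mulVec, dotProduct, Matrix.map_apply, map_sub, map_sum,
        map_mul, MvPolynomial.map_C, habar, conj_conj, Pi.zero_apply, map_zero] at h3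
      rw [← h3]
      simp only [Matrix.sub_apply, star_sub, sub_smul, Finset.sum_sub_distrib,
        MvPolynomial.smul_eq_C_mul]
      congr 1
      rw [Finset.sum_eq_single i]
      · simp
      · intro j _ hj; simp [Ne.symm hj]
      · intro h; exact absurd (Finset.mem_univ _) h
    have h4 := Fintype.linearIndependent_iff.mp haindep _ h2 j
    exact star_eq_zero.mp h4
  funext l
  ext i j
  have h1 : pencil (T 0) (T 1) (T 2) i j = pencil (M 0) (M 1) (M 2) i j := by
    rw [hTM, hK2, Matrix.map_one _ (map_zero _) (map_one _), Matrix.mul_one]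
  have h2 := congrArg (MvPolynomial.pderiv l) h1
  rw [pencil_pderiv, pencil_pderiv] at h2
  exact MvPolynomial.C_injective _ _ h2

lemma conj_eqs (hd : 0 < d) (hFc : MvPolynomial.map (starRingEnd ℂ) F = F)
    (M : Fin 3 → Matrix (Fin d) (Fin d) ℂ) (hMh : ∀ l, (M l).IsHermitian)
    (haM : ∀ j, ∑ i, a i * pencil (M 0) (M 1) (M 2) i j = if j = ⟨0, hd⟩ then F else 0) (i : Fin d) :
    ∑ j, pencil (M 0) (M 1) (M 2) i j * MvPolynomial.map (starRingEnd ℂ) (a j) =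
        if i = ⟨0, hd⟩ then F else 0 := by
  have h1 := congrArg (MvPolynomial.map (starRingEnd ℂ)) (haM i)
  have h2 : MvPolynomial.map (starRingEnd ℂ) (if i = ⟨0, hd⟩ then F else 0) =
      if i = ⟨0, hd⟩ then F else 0 := by
    split_ifs
    · exact hFc
    · exact map_zero _
  rw [h2, map_sum] at h1
  rw [← h1]
  refine Finset.sum_congr rfl fun j _ => ?_
  rw [map_mul, mul_comm]
  congr 1
  have h3 : ∀ l, (starRingEnd ℂ) (M l j i) = M l i j := fun l => (hMh l).apply i j
  simp [pencil, h3]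

end

open scoped ComplexOrder

/-- The algorithm of the paper with the directional derivative replaced
by an arbitrary interlacing polynomial `g` of degree `d - 1` with `g(e) > 0`:
the linear system `a ⬝ M = (f,0,…,0)`, `M ⬝ āᵀ = (f,0,…,0)ᵀ` has a unique Hermitian
solution `M = x M₁ + y M₂ + z M₃`, and this solution satisfies `f = c • det M` with
`c > 0` and `e₁M₁ + e₂M₂ + e₃M₃` positive definite. -/
theorem hermitian_determinantal_representation_interlacer
    {d : ℕ} (hd : 0 < d)
    (f : MvPolynomial (Fin 3) ℝ) (e : Fin 3 → ℝ)
    (hfhom : f.IsHomogeneous d)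
    (hhyp : IsHyperbolic f e) (hfe : 0 < MvPolynomial.eval e f)
    (hsmooth : ∀ p : Fin 3 → ℂ, p ≠ 0 →
      ¬ (MvPolynomial.eval p (complexify f) = 0 ∧
         ∀ i, MvPolynomial.eval p (MvPolynomial.pderiv i (complexify f)) = 0))
    (g : MvPolynomial (Fin 3) ℝ)
    (hghom : g.IsHomogeneous (d - 1)) (hge : 0 < MvPolynomial.eval e g)
    (hint : Interlaces d f g e)
    (htrans : ∀ p : Fin 3 → ℂ, p ≠ 0 →
      MvPolynomial.eval p (complexify f) = 0 →
      MvPolynomial.eval p (complexify g) = 0 →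
      LinearIndependent ℂ
        ![fun i => MvPolynomial.eval p (MvPolynomial.pderiv i (complexify f)),
          fun i => MvPolynomial.eval p (MvPolynomial.pderiv i (complexify g))])
    (S : Set (Fin 3 → ℂ))
    (hS : ∀ s ∈ S, s ≠ 0 ∧ MvPolynomial.eval s (complexify f) = 0 ∧
      MvPolynomial.eval s (complexify g) = 0)
    (hSsplit : ∀ q : Fin 3 → ℂ, q ≠ 0 →
      MvPolynomial.eval q (complexify f) = 0 →
      MvPolynomial.eval q (complexify g) = 0 →
      ∃! s, s ∈ S ∪ conjPt '' S ∧ ∃ lam : ℂ, lam ≠ 0 ∧ q = lam • s)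
    (hSconj : ∀ s ∈ S, ∀ s' ∈ S, ∀ lam : ℂ, lam ≠ 0 → s ≠ lam • conjPt s')
    (a : Fin d → MvPolynomial (Fin 3) ℂ)
    (ha1 : a ⟨0, hd⟩ = complexify g)
    (hahom : ∀ i, (a i).IsHomogeneous (d - 1))
    (havan : ∀ i, ∀ s ∈ S, MvPolynomial.eval s (a i) = 0)
    (haindep : LinearIndependent ℂ a)
    (haspan : ∀ h : MvPolynomial (Fin 3) ℂ, h.IsHomogeneous (d - 1) →
      (∀ s ∈ S, MvPolynomial.eval s h = 0) → h ∈ Submodule.span ℂ (Set.range a)) :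
    (∃! T : Matrix (Fin d) (Fin d) ℂ × Matrix (Fin d) (Fin d) ℂ ×
        Matrix (Fin d) (Fin d) ℂ,
      T.1.IsHermitian ∧ T.2.1.IsHermitian ∧ T.2.2.IsHermitian ∧
      (∀ j, ∑ i, a i * pencil T.1 T.2.1 T.2.2 i j =
        if j = ⟨0, hd⟩ then complexify f else 0) ∧
      (∀ i, ∑ j, pencil T.1 T.2.1 T.2.2 i j * MvPolynomial.map (starRingEnd ℂ) (a j) =
        if i = ⟨0, hd⟩ then complexify f else 0)) ∧
    ∀ T : Matrix (Fin d) (Fin d) ℂ × Matrix (Fin d) (Fin d) ℂ ×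
        Matrix (Fin d) (Fin d) ℂ,
      T.1.IsHermitian → T.2.1.IsHermitian → T.2.2.IsHermitian →
      (∀ j, ∑ i, a i * pencil T.1 T.2.1 T.2.2 i j =
        if j = ⟨0, hd⟩ then complexify f else 0) →
      (∀ i, ∑ j, pencil T.1 T.2.1 T.2.2 i j * MvPolynomial.map (starRingEnd ℂ) (a j) =
        if i = ⟨0, hd⟩ then complexify f else 0) →
      (∃ c : ℝ, 0 < c ∧
        complexify f = MvPolynomial.C (c : ℂ) * (pencil T.1 T.2.1 T.2.2).det) ∧
      ((e 0 : ℂ) • T.1 + (e 1 : ℂ) • T.2.1 + (e 2 : ℂ) • T.2.2).PosDef := by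
  classical
  set F := complexify f with hFdef
  set G := complexify g with hGdef
  have hF : F.IsHomogeneous d := hfhom.map _
  have hG : G.IsHomogeneous (d - 1) := hghom.map _
  have hFc : MvPolynomial.map (starRingEnd ℂ) F = F := conj_cplx f
  have hGc : MvPolynomial.map (starRingEnd ℂ) G = G := conj_cplx g
  have hFev : MvPolynomial.eval (fun i => (e i : ℂ)) F = ((MvPolynomial.eval e f : ℝ) : ℂ) :=
    cplx_eval f e
  have hFe : MvPolynomial.eval (fun i => (e i : ℂ)) F ≠ 0 := by
    rw [hFev]; exact_mod_cast hfe.ne'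
  have hGe : MvPolynomial.eval (fun i => (e i : ℂ)) G ≠ 0 := by
    rw [hGdef, cplx_eval]; exact_mod_cast hge.ne'
  have hnr : ∀ x : Fin 3 → ℝ, x ≠ 0 → MvPolynomial.eval (fun i => (x i : ℂ)) F = 0 →
      MvPolynomial.eval (fun i => (x i : ℂ)) G ≠ 0 := no_real S hSsplit hSconj
  have hLP : LP d F G e := fun p hp => line_data hd f g e hge hint hnr p hp
  have he : e ≠ 0 := by
    rintro rfl
    apply hFe
    have := hom_eval hF 0 (fun _ => 0)
    rw [zero_pow hd.ne', zero_mul] at this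
    simpa using this
  obtain ⟨p, q, T, U, v, hfr, hTe, hTp, hUe, hUp, hve, hvp, hvq⟩ := exists_frame he
  have hv : linF v ≠ 0 := by
    intro h
    have := linF_eval_real v q
    rw [h, hvq] at this
    simp at this
  have hdiv := divide hd hF hG hFe hGe hhyp.2 hnr hLP hfr hTe hTp hUe hUp hve hv hFc hGc S hS
    hSsplit hSconj a hahom havan haspan
  choose b hbh hb using hdiv
  have hbc := b_conj hd hLP hve hv hFc hGc hbh hb
  have hb0 := b_zero hd hLP hve hv hGc hahom ha1 hbh hb
  have hA := A_posDef hd hLP hve hv hFc hGc hahom haindep hbh hb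
  obtain ⟨M, hMh, hMe, hM1, hM2⟩ := exists_M hd hF hFc hbc hbh hA
  have haM := construct hd hF hLP hve hv hb0 hbh hb hA M hM1 hM2
  have hMa := conj_eqs hd hFc M hMh haM
  have hMpd : (∑ l, (e l : ℂ) • M l).PosDef := by
    rw [hMe, hFev]
    exact hA.inv.smul (by exact_mod_cast hfe)
  have hMu := (Matrix.isUnit_iff_isUnit_det _).mp hMpd.isUnit
  have key : ∀ T : Matrix (Fin d) (Fin d) ℂ × Matrix (Fin d) (Fin d) ℂ ×
        Matrix (Fin d) (Fin d) ℂ,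
      (∀ j, ∑ i, a i * pencil T.1 T.2.1 T.2.2 i j = if j = ⟨0, hd⟩ then F else 0) →
      (∀ i, ∑ j, pencil T.1 T.2.1 T.2.2 i j * MvPolynomial.map (starRingEnd ℂ) (a j) =
        if i = ⟨0, hd⟩ then F else 0) → T = (M 0, M 1, M 2) := by
    intro T h1 h2
    have := uniq hd hLP hve hv haindep hbh hb hA M ![T.1, T.2.1, T.2.2] hMu haM hMa h1 h2
    rw [← this]
    rfl
  refine ⟨⟨(M 0, M 1, M 2), ⟨hMh 0, hMh 1, hMh 2, haM, hMa⟩, ?_⟩, ?_⟩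
  · rintro T ⟨-, -, -, h1, h2⟩
    exact key T h1 h2
  · intro T _ _ _ h1 h2
    obtain rfl := key T h1 h2
    constructor
    · have hdet := det_part hd hF hLP hve hv ha1 M haM
      have hpos := hMpd.det_pos
      obtain ⟨hre, him⟩ := Complex.pos_iff.mp hpos
      set D := (∑ l, (e l : ℂ) • M l).det with hD
      have hDre : D = (D.re : ℂ) := by apply Complex.ext <;> simp [← him]
      refine ⟨MvPolynomial.eval e f / D.re, div_pos hfe hre, ?_⟩
      have hD0 : D ≠ 0 := hpos.ne'
      have h3 : F = MvPolynomial.C D⁻¹ * (MvPolynomial.C D * F) := by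
        rw [← mul_assoc, ← MvPolynomial.C_mul, inv_mul_cancel₀ hD0]; simp
      rw [h3, hdet, ← mul_assoc, ← MvPolynomial.C_mul, hFev]
      congr 2
      push_cast
      rw [← hDre, div_eq_inv_mul]
    · have := hMpd
      rw [Fin.sum_univ_three] at this
      exact this
end
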